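/- Let b ≥ 2 be an integer. Suppose integers n_1 ≥ n_2 ≥ n_3 ≥ 0, ℓ_3 ≥ ℓ_2 ≥ ℓ_1 ≥ 1 and d_1, d_2, d_3 ∈ {0, 1, …, b − 1} with d_1 ≥ 1 satisfy F_{n_1} + F_{n_2} + F_{n_3} = d_1·((b^{ℓ_1} − 1)/(b − 1))·b^{ℓ_2 + ℓ_3} + d_2·((b^{ℓ_2} − 1)/(b − 1))·b^{ℓ_3} + d_3·((b^{ℓ_3} − 1)/(b − 1)). Then n_1 < 3.09 × 10^{82} · (log b)^{11}. -/

import Mathlib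

/-!
Every truncation of `F_{n1} + F_{n2} + F_{n3}` has the shape `φ^{n1} σ / √5` with `σ ∈ ℤ[φ]`, and every
truncation of the concatenation has the shape `D b^m / (b - 1)` (`FibApprox`, `DigitApprox`). Comparing
one of each, the linear form `log γ + n1 log φ - m log b` with `γ = (b - 1) σ / (√5 D)` is small as long
as both following gaps are large. The height of `γ` is governed by the gaps already bounded, so a lower
bound for the form bounds one more gap, on the Fibonacci or on the digit side (`gap_step`). Each step
costs a factor `2.2·10^11 log b (log n1)^2`; after five steps one of the two sides is exhausted
(`gap_chain`), which bounds `n1` by a constant times `(log b)^6 (log n1)^10`, and `final_numeric` turns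
this into the claim.

The lower bound `log_form_lower` is proved from scratch. At the points
`(u, v, y) = (n t + r, m t + s, φ^{-r} b^s γ^t)` the number `y` is nearly `exp (v log b - u log φ)` when the
form is tiny. Dirichlet's box principle, applied to the coefficients of the functions
`C(u, i) C(v, j) y^l` as polynomials in two normalized coordinates, gives a nonzero integral combination
which is very small at all points of a box (`aux_poly`); Liouville's inequality in `ℤ[φ]` makes it vanish
there. The zero estimate (`TransData.zero_estimate`) says that a polynomial of this bidegree with so many
zeros is zero: translates of it cut out successively a surface, a curve and a finite set, whose degrees
are bounded by Hilbert functions. Its hypotheses fail only if the box has few values in some direction,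
and then two numbers built from `φ, b, γ` are almost dependent with small coefficients; the same method
with one variable fewer (`two_dim`) excludes that.
-/

open Real

/-- A solution of equation (1) in base `b`: integers `n1 ≥ n2 ≥ n3 ≥ 0`,
`l1, l2, l3 ≥ 1`, digits `d1, d2, d3 ∈ {0, …, b-1}` with `d1 ≥ 1`, such that
`F_{n1} + F_{n2} + F_{n3}` equals the concatenation in base `b` of the digit `d1`
repeated `l1` times, `d2` repeated `l2` times, and `d3` repeated `l3` times. -/
def SatisfiesEq1 (b n1 n2 n3 l1 l2 l3 d1 d2 d3 : ℕ) : Prop :=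
  n3 ≤ n2 ∧ n2 ≤ n1 ∧
  1 ≤ l1 ∧ 1 ≤ l2 ∧ 1 ≤ l3 ∧
  d1 < b ∧ d2 < b ∧ d3 < b ∧ 1 ≤ d1 ∧
  Nat.fib n1 + Nat.fib n2 + Nat.fib n3 =
    d1 * ((b ^ l1 - 1) / (b - 1)) * b ^ (l2 + l3) +
    d2 * ((b ^ l2 - 1) / (b - 1)) * b ^ l3 +
    d3 * ((b ^ l3 - 1) / (b - 1))

/-! ### Zero estimate in one variable -/

open Polynomial in
/-- A generalized Vandermonde determinant: its leading term is the product of the leading coefficients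
of the `P k` times the Vandermonde determinant of the `w k`. -/
theorem Z2_det {E : Type*} [Field E] (K c : ℕ) (P : Fin c → E[X]) (hP : ∀ k, (P k).natDegree ≤ K)
    (hP0 : ∀ k, P k ≠ 0) (a : E) (w : Fin c → E) (hw : Function.Injective w) :
    (Matrix.of fun i k : Fin c => C (w k ^ (i : ℕ)) * (P k).comp (X + C ((i : ℕ) * a))).det ≠ 0 ∧
    (Matrix.of fun i k : Fin c => C (w k ^ (i : ℕ)) * (P k).comp (X + C ((i : ℕ) * a))).det.natDegree
      ≤ c * K := by
  have hmon : ∀ i : ℕ, (X + C ((i : ℕ) * a) : E[X]).natDegree = 1 := fun i => natDegree_X_add_C _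
  have hdeg : ∀ i k : Fin c, (C (w k ^ (i : ℕ)) * (P k).comp (X + C ((i : ℕ) * a))).natDegree
      ≤ (P k).natDegree := by
    intro i k
    refine (natDegree_C_mul_le _ _).trans ?_
    rw [natDegree_comp, hmon, mul_one]
  constructor
  · intro h0
    set M := (Matrix.of fun i k : Fin c => C (w k ^ (i : ℕ)) * (P k).comp (X + C ((i : ℕ) * a)))
      with hM
    have h1 := Matrix.det_mul_row (fun k : Fin c => (X : E[X]) ^ (K - (P k).natDegree)) M
    rw [h0, mul_zero] at h1
    have h2 : ∀ i k : Fin c, (X ^ (K - (P k).natDegree) * M i k).natDegree ≤ K := by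
      intro i k
      refine natDegree_mul_le.trans ?_
      rw [natDegree_X_pow]
      have := hdeg i k
      have := hP k
      simp only [hM, Matrix.of_apply]
      omega
    have h3 : ∀ i k : Fin c, (X ^ (K - (P k).natDegree) * M i k).coeff K
        = (P k).leadingCoeff * w k ^ (i : ℕ) := by
      intro i k
      have e : K = (P k).natDegree + (K - (P k).natDegree) := by have := hP k; omega
      conv_lhs => rw [mul_comm]; arg 2; rw [e]
      rw [coeff_mul_X_pow]
      simp only [hM, Matrix.of_apply]
      rw [coeff_C_mul]
      have : ((P k).comp (X + C ((i : ℕ) * a))).leadingCoeff = (P k).leadingCoeff := by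
        rw [leadingCoeff_comp (by rw [hmon]; norm_num), leadingCoeff_X_add_C]; simp
      rw [← this, leadingCoeff, natDegree_comp, hmon, mul_one, mul_comm]
    have h4 := congrArg (fun p : E[X] => p.coeff (c * K)) h1
    simp only [coeff_zero] at h4
    rw [Matrix.det_apply, finsetSum_coeff] at h4
    have h5 : (Matrix.of fun i k : Fin c => (P k).leadingCoeff * w k ^ (i : ℕ)).det = 0 := by
      rw [Matrix.det_apply, ← h4]
      refine Finset.sum_congr rfl fun σ _ => ?_
      rw [coeff_smul]
      congr 1
      have := coeff_prod_of_natDegree_le Finset.univ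
        (fun i => X ^ (K - (P i).natDegree) * M (σ i) i) K (fun i _ => h2 (σ i) i)
      simp only [Finset.card_univ, Fintype.card_fin] at this
      simp only [Matrix.of_apply]
      rw [this]
      exact Finset.prod_congr rfl fun i _ => (h3 (σ i) i).symm
    have h6 := Matrix.det_mul_row (fun k : Fin c => (P k).leadingCoeff)
      (Matrix.vandermonde w).transpose
    simp only [Matrix.transpose_apply, Matrix.vandermonde_apply] at h6
    rw [h5, Matrix.det_transpose] at h6
    rcases mul_eq_zero.mp h6.symm with h | h
    · rw [Finset.prod_eq_zero_iff] at h
      obtain ⟨k, -, hk⟩ := h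
      exact hP0 k (leadingCoeff_eq_zero.mp hk)
    · exact (Matrix.det_vandermonde_ne_zero_iff.mpr hw) h
  · rw [Matrix.det_apply]
    refine natDegree_sum_le_of_forall_le _ _ fun σ _ => ?_
    refine (natDegree_smul_le _ _).trans ?_
    refine (natDegree_prod_le _ _).trans ?_
    refine (Finset.sum_le_card_nsmul _ _ K fun i _ => ?_).trans (by simp)
    exact (hdeg _ _).trans (hP i)

open Polynomial in
/-- A polynomial `∑ P_l(x) y^l` vanishing at more than `K (L + 1)` starting points and at their `L`
translates under `(x, y) ↦ (x + a, ω y)` is zero: otherwise `Z2_det` is a nonzero polynomial in `x`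
with too many roots. -/
theorem Z2 {E : Type*} [Field E] (K L : ℕ) (P : ℕ → E[X]) (hP : ∀ k, (P k).natDegree ≤ K)
    (a ω : E) (hω : Function.Injective (fun k : ℕ => ω ^ k)) (s : Finset E) (y : E → E)
    (hy : ∀ x ∈ s, y x ≠ 0) (hs : K * (L + 1) < s.card)
    (h : ∀ x ∈ s, ∀ i ≤ L, ∑ l ∈ Finset.range (L + 1),
      (P l).eval (x + i * a) * (y x * ω ^ i) ^ l = 0) :
    ∀ l ≤ L, P l = 0 := by
  classical
  by_contra hcon
  push Not at hcon
  obtain ⟨l0, hl0, hPl0⟩ := hcon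
  set S := (Finset.range (L + 1)).filter (fun l => P l ≠ 0) with hS
  have hl0S : l0 ∈ S := by simp [hS, hPl0]; omega
  set c := S.card with hc
  have hcL : c ≤ L + 1 := by
    have := Finset.card_filter_le (Finset.range (L + 1)) (fun l => P l ≠ 0)
    simpa using this
  let e : Fin c ≃o S := S.orderIsoOfFin rfl
  have hne : ∀ k : Fin c, P (e k) ≠ 0 := fun k => (Finset.mem_filter.mp (e k).2).2
  obtain ⟨hd, hdeg⟩ := Z2_det K c (fun k => P (e k)) (fun k => hP _) hne a (fun k => ω ^ (e k : ℕ))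
    (by intro i j hij
        have := hω hij
        exact e.injective (Subtype.ext this))
  set M := (Matrix.of fun i k : Fin c => C ((ω ^ (e k : ℕ)) ^ (i : ℕ)) *
    (P (e k)).comp (X + C ((i : ℕ) * a))) with hM
  have hroot : ∀ x ∈ s, M.det.eval x = 0 := by
    intro x hx
    have : M.det.eval x = (M.map (eval x)).det := by
      have := RingHom.map_det (evalRingHom x) M
      simpa using this
    rw [this]
    have hv : (M.map (eval x)).mulVec (fun k => y x ^ (e k : ℕ)) = 0 := by
      ext i
      have hi := h x hx i (by have := i.2; omega)
      simp only [Matrix.mulVec, dotProduct, Pi.zero_apply, Matrix.map_apply, hM, Matrix.of_apply,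
        eval_mul, eval_C, eval_comp, eval_add, eval_X]
      rw [← hi, ← Finset.sum_filter_ne_zero]
      have hsub : ∑ l ∈ Finset.range (L + 1), eval (x + i * a) (P l) * (y x * ω ^ (i : ℕ)) ^ l
          = ∑ l ∈ S, eval (x + i * a) (P l) * (y x * ω ^ (i : ℕ)) ^ l := by
        symm
        apply Finset.sum_subset (Finset.filter_subset _ _)
        intro l hl hl'
        have : P l = 0 := by
          by_contra hh
          exact hl' (Finset.mem_filter.mpr ⟨hl, hh⟩)
        simp [this]
      rw [Finset.sum_filter_ne_zero, hsub, ← Finset.sum_coe_sort S, ← e.toEquiv.sum_comp]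
      refine Finset.sum_congr rfl fun k _ => ?_
      simp only [RelIso.coe_fn_toEquiv]
      rw [mul_pow, ← pow_mul, ← pow_mul, mul_comm (i : ℕ)]
      ring
    by_contra hdet
    have := Matrix.eq_zero_of_mulVec_eq_zero hdet hv
    have h0 := congrFun this (e.symm ⟨l0, hl0S⟩)
    simp only [Pi.zero_apply] at h0
    exact pow_ne_zero _ (hy x hx) h0
  have h1 : s ⊆ M.det.roots.toFinset := by
    intro x hx
    rw [Multiset.mem_toFinset, mem_roots hd]
    exact hroot x hx
  have h2 := Finset.card_le_card h1
  have h3 := Multiset.toFinset_card_le M.det.roots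
  have h4 := card_roots' M.det
  have : c * K ≤ K * (L + 1) := by rw [mul_comm]; exact Nat.mul_le_mul_left _ hcL
  omega

/-! ### Hilbert functions of a filtered algebra -/

/-- An exhaustive multiplicative filtration of a `ℂ`-algebra by finite-dimensional subspaces. -/
structure Filt (A : Type*) [CommRing A] [Algebra ℂ A] where
  F : ℕ → Submodule ℂ A
  fin : ∀ D, Module.Finite ℂ (F D)
  mul : ∀ {m n a b}, a ∈ F m → b ∈ F n → a * b ∈ F (m + n)
  mono : Monotone F
  exh : ∀ a, ∃ D, a ∈ F D

namespace Filt

variable {A : Type*} [CommRing A] [Algebra ℂ A] (T : Filt A)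

/-- The image of the `D`-th filtration step in `A ⧸ I`. -/
def V (I : Ideal A) (D : ℕ) : Submodule ℂ (A ⧸ I) :=
  (T.F D).map (Ideal.Quotient.mkₐ ℂ I).toLinearMap

/-- The Hilbert function of `A ⧸ I` with respect to the filtration. -/
noncomputable def H (I : Ideal A) (D : ℕ) : ℕ := Module.finrank ℂ (T.V I D)

instance (I : Ideal A) (D : ℕ) : Module.Finite ℂ (T.V I D) := by
  have := T.fin D
  exact Module.Finite.map _ _

theorem V_map {I J : Ideal A} (h : I ≤ J) (D : ℕ) :
    (T.V I D).map (Ideal.Quotient.factorₐ ℂ h).toLinearMap = T.V J D := by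
  unfold V
  rw [← Submodule.map_comp]
  congr 1

theorem H_anti {I J : Ideal A} (h : I ≤ J) (D : ℕ) : T.H J D ≤ T.H I D := by
  unfold H
  rw [← T.V_map h D]
  exact Submodule.finrank_map_le _ _

theorem H_bot_le (I : Ideal A) (D : ℕ) : T.H I D ≤ Module.finrank ℂ (T.F D) := by
  have := T.fin D
  exact Submodule.finrank_map_le _ _

/-- Cutting by a regular element of degree one: the multiples of `p` and a complement of them give
disjoint contributions. -/
theorem H_chain (I : Ideal A) (p : A) (hp : p ∈ T.F 1) (hreg : ∀ h, p * h ∈ I → h ∈ I) (D : ℕ) :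
    T.H I D + T.H (I ⊔ Ideal.span {p}) (D + 1) ≤ T.H I (D + 1) := by
  set J := I ⊔ Ideal.span {p} with hJ
  have hIJ : I ≤ J := le_sup_left
  let f : T.V I (D + 1) →ₗ[ℂ] (A ⧸ J) :=
    (Ideal.Quotient.factorₐ ℂ hIJ).toLinearMap.domRestrict (T.V I (D + 1))
  have h1 := LinearMap.finrank_range_add_finrank_ker f
  have h2 : LinearMap.range f = T.V J (D + 1) := by
    rw [← T.V_map hIJ (D + 1)]
    exact LinearMap.range_domRestrict _ _
  rw [h2] at h1
  have hmem : ∀ v : T.V I D, (Ideal.Quotient.mk I p) * (v : A ⧸ I) ∈ T.V I (D + 1) := by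
    rintro ⟨v, h, hh, rfl⟩
    refine ⟨p * h, ?_, by simp⟩
    rw [add_comm]
    exact T.mul hp hh
  let g : T.V I D →ₗ[ℂ] LinearMap.ker f :=
    { toFun := fun v => ⟨⟨(Ideal.Quotient.mk I p) * (v : A ⧸ I), hmem v⟩, by
        obtain ⟨v, h, hh, rfl⟩ := v
        rw [LinearMap.mem_ker]
        simp only [f, LinearMap.domRestrict_apply]
        simp only [AlgHom.toLinearMap_apply, Ideal.Quotient.mkₐ_eq_mk, ← map_mul]
        have : (Ideal.Quotient.factorₐ ℂ hIJ) (Ideal.Quotient.mk I (p * h))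
          = Ideal.Quotient.mk J (p * h) := rfl
        rw [this, Ideal.Quotient.eq_zero_iff_mem]
        exact Ideal.mul_mem_right _ _ (le_sup_right (a := I) (Ideal.mem_span_singleton_self p))⟩
      map_add' := by
        intro x y; ext; simp [mul_add]
      map_smul' := by
        intro c x; ext; simp }
  have hg : Function.Injective g := by
    rw [injective_iff_map_eq_zero]
    rintro ⟨v, h, hh, rfl⟩ hv
    have hv' := congrArg (fun z : LinearMap.ker f => ((z : T.V I (D+1)) : A ⧸ I)) hv
    simp only [g, AlgHom.toLinearMap_apply, Ideal.Quotient.mkₐ_eq_mk, ← map_mul,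
      LinearMap.coe_mk, AddHom.coe_mk, ZeroMemClass.coe_zero] at hv'
    rw [Ideal.Quotient.eq_zero_iff_mem] at hv'
    ext
    simp only [AlgHom.toLinearMap_apply, Ideal.Quotient.mkₐ_eq_mk, ZeroMemClass.coe_zero]
    exact Ideal.Quotient.eq_zero_iff_mem.mpr (hreg h hv')
  have h3 := LinearMap.finrank_le_finrank_of_injective hg
  unfold H
  omega

/-- The Hilbert functions of pairwise incomparable primes above `I` add up, with a bounded shift, to
at most that of `I`. -/
theorem H_primes {ι : Type*} [Fintype ι] (I : Ideal A) (𝔭 : ι → Ideal A)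
    (hprime : ∀ i, (𝔭 i).IsPrime) (hI : ∀ i, I ≤ 𝔭 i) (hinc : ∀ i j, i ≠ j → ¬ 𝔭 j ≤ 𝔭 i) :
    ∃ c, ∀ D, ∑ i, T.H (𝔭 i) D ≤ T.H I (D + c) := by
  classical
  have hf : ∀ i, ∃ f : A, f ∉ 𝔭 i ∧ ∀ j, j ≠ i → f ∈ 𝔭 j := by
    intro i
    have : ∀ j, ∃ g : A, j ≠ i → g ∈ 𝔭 j ∧ g ∉ 𝔭 i := by
      intro j
      by_cases h : j = i
      · exact ⟨0, fun h' => absurd h h'⟩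
      · obtain ⟨g, hg⟩ := Set.not_subset.mp (hinc i j (Ne.symm h))
        exact ⟨g, fun _ => hg⟩
    choose g hg using this
    refine ⟨∏ j ∈ Finset.univ.erase i, g j, ?_, ?_⟩
    · intro hm
      obtain ⟨j, hj, hj'⟩ := ((hprime i).prod_mem_iff).mp hm
      exact (hg j (Finset.ne_of_mem_erase hj)).2 hj'
    · intro j hj
      rw [← Finset.mul_prod_erase (Finset.univ.erase i) g (a := j) (by simp [hj])]
      exact Ideal.mul_mem_right _ _ (hg j hj).1
  choose f hf1 hf2 using hf
  choose d hd using fun i => T.exh (f i)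
  obtain ⟨c, hc⟩ : ∃ c, ∀ i, d i ≤ c := ⟨Finset.univ.sup d, fun i => Finset.le_sup (Finset.mem_univ i)⟩
  have hfc : ∀ i, f i ∈ T.F c := fun i => T.mono (hc i) (hd i)
  refine ⟨c, fun D => ?_⟩
  let Φ : (A ⧸ I) →ₗ[ℂ] (∀ i, A ⧸ 𝔭 i) :=
    LinearMap.pi fun i => (Ideal.Quotient.factorₐ ℂ (hI i)).toLinearMap
  have h1 : Module.finrank ℂ ((T.V I (D + c)).map Φ) ≤ T.H I (D + c) :=
    Submodule.finrank_map_le _ _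
  refine le_trans ?_ h1
  have hmem : ∀ v : (∀ i, T.V (𝔭 i) D),
      (fun i => Ideal.Quotient.mk (𝔭 i) (f i) * (v i : A ⧸ 𝔭 i)) ∈ (T.V I (D + c)).map Φ := by
    intro v
    have hv : ∀ i, ∃ h ∈ T.F D, Ideal.Quotient.mk (𝔭 i) h = (v i : A ⧸ 𝔭 i) := fun i => (v i).2
    choose h hh hhv using hv
    refine ⟨Ideal.Quotient.mk I (∑ i, f i * h i), ⟨∑ i, f i * h i, ?_, rfl⟩, ?_⟩
    · refine Submodule.sum_mem _ fun i _ => ?_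
      rw [add_comm]
      exact T.mul (hfc i) (hh i)
    · ext j
      have : Φ (Ideal.Quotient.mk I (∑ i, f i * h i)) j
        = Ideal.Quotient.mk (𝔭 j) (∑ i, f i * h i) := rfl
      rw [this, map_sum, Finset.sum_eq_single j]
      · rw [map_mul, hhv]
      · intro i _ hij
        rw [Ideal.Quotient.eq_zero_iff_mem]
        exact Ideal.mul_mem_right _ _ (hf2 i j (Ne.symm hij))
      · simp
  let Ψ : (∀ i, T.V (𝔭 i) D) →ₗ[ℂ] (T.V I (D + c)).map Φ :=
    { toFun := fun v => ⟨_, hmem v⟩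
      map_add' := by intro x y; ext i; simp [mul_add]
      map_smul' := by intro a x; ext i; simp }
  have hΨ : Function.Injective Ψ := by
    rw [injective_iff_map_eq_zero]
    intro v hv
    have hv' := congrArg (fun z : (T.V I (D + c)).map Φ => (z : ∀ i, A ⧸ 𝔭 i)) hv
    ext i
    have := congrFun hv' i
    simp only [Ψ, LinearMap.coe_mk, AddHom.coe_mk, ZeroMemClass.coe_zero, Pi.zero_apply] at this
    have hp := hprime i
    rcases mul_eq_zero.mp this with h | h
    · exact absurd (Ideal.Quotient.eq_zero_iff_mem.mp h) (hf1 i)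
    · simpa using h
  have h2 := LinearMap.finrank_le_finrank_of_injective hΨ
  rw [Module.finrank_pi_fintype] at h2
  exact h2

theorem H_transc (I : Ideal A) (x : A) (hx : ∀ q : Polynomial ℂ, Polynomial.aeval x q ∈ I → q = 0)
    (D N : ℕ) (hN : ∀ i ≤ N, x ^ i ∈ T.F D) : N + 1 ≤ T.H I D := by
  have hmem : ∀ q : Polynomial.degreeLT ℂ (N + 1),
      Ideal.Quotient.mk I (Polynomial.aeval x (q : Polynomial ℂ)) ∈ T.V I D := by
    rintro ⟨q, hq⟩
    refine ⟨_, ?_, rfl⟩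
    rw [Polynomial.mem_degreeLT] at hq
    simp only [Polynomial.aeval_eq_sum_range]
    refine Submodule.sum_mem _ fun i hi => Submodule.smul_mem _ _ (hN i ?_)
    rw [Finset.mem_range] at hi
    by_cases h0 : q = 0
    · subst h0; simp at hi; omega
    · have := (Polynomial.natDegree_lt_iff_degree_lt h0).mpr hq
      omega
  let g : Polynomial.degreeLT ℂ (N + 1) →ₗ[ℂ] T.V I D :=
    { toFun := fun q => ⟨_, hmem q⟩
      map_add' := by intro a b; ext; simp
      map_smul' := by
        intro c a; ext
        simp only [Submodule.coe_smul, map_smul, RingHom.id_apply]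
        rfl }
  have hg : Function.Injective g := by
    rw [injective_iff_map_eq_zero]
    rintro ⟨q, hq⟩ h
    have := congrArg (fun z : T.V I D => (z : A ⧸ I)) h
    simp only [g, LinearMap.coe_mk, AddHom.coe_mk, ZeroMemClass.coe_zero] at this
    ext1
    exact hx q (Ideal.Quotient.eq_zero_iff_mem.mp this)
  have h2 := LinearMap.finrank_le_finrank_of_injective hg
  rw [(Polynomial.degreeLTEquiv ℂ (N + 1)).finrank_eq, Module.finrank_fin_fun] at h2
  exact h2

theorem H_pos (I : Ideal A) (hI : I ≠ ⊤) : ∃ D0, ∀ D ≥ D0, 1 ≤ T.H I D := by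
  obtain ⟨D0, h0⟩ := T.exh 1
  refine ⟨D0, fun D hD => ?_⟩
  have h1 : (1 : A ⧸ I) ∈ T.V I D := ⟨1, T.mono hD h0, by simp⟩
  have : Nontrivial (A ⧸ I) := Ideal.Quotient.nontrivial_iff.mpr hI
  have : Nontrivial (T.V I D) := ⟨⟨1, h1⟩, 0, by
    intro h
    exact one_ne_zero (congrArg Subtype.val h)⟩
  exact Module.finrank_pos

end Filt

/-- Summation of the inequality of `H_chain`: a lower bound of degree `k` downstairs becomes one of
degree `k + 1` upstairs. -/
theorem growth_step (s D0 k : ℕ) (g h : ℕ → ℕ) (hgh : ∀ D, g D + h (D + 1) ≤ g (D + 1))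
    (hh : ∀ e, s * Nat.choose e k ≤ h (D0 + e)) (e : ℕ) :
    s * Nat.choose e (k + 1) ≤ g (D0 + e) := by
  induction e with
  | zero => simp
  | succ e ih =>
    have h1 := hgh (D0 + e)
    have h2 := hh (e + 1)
    have h3 : Nat.choose e k ≤ Nat.choose (e + 1) k := Nat.choose_le_choose k (Nat.le_succ e)
    have h4 := Nat.mul_le_mul_left s h3
    rw [Nat.choose_succ_succ', mul_add, ← add_assoc]
    have : D0 + (e + 1) = D0 + e + 1 := by ring
    rw [this] at h2
    omega

open Filter Topology in
/-- Comparison of the leading coefficients in `e`. -/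
theorem growth_limit (s K L D0 : ℕ)
    (h : ∀ e : ℕ, 2 * (s * Nat.choose e 3) ≤
      (K * (D0 + e) + 1) * (K * (D0 + e) + 2) * (L * (D0 + e) + 1)) : s ≤ 3 * K ^ 2 * L := by
  have h1 : ∀ e : ℕ, 1 ≤ e → (s : ℝ) * ((1 - 0 * (e : ℝ)⁻¹) * (1 - 1 * (e : ℝ)⁻¹) * (1 - 2 * (e : ℝ)⁻¹)) / 3 ≤
      (K + (K * D0 + 1) * (e : ℝ)⁻¹) * (K + (K * D0 + 2) * (e : ℝ)⁻¹) * (L + (L * D0 + 1) * (e : ℝ)⁻¹) := by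
    intro e he
    have hc : (6 : ℝ) * Nat.choose e 3 = e * (e - 1) * (e - 2) := by
      have := Nat.descFactorial_eq_factorial_mul_choose e 3
      have h3 : ((e.descFactorial 3 : ℕ) : ℝ) = e * (e - 1) * (e - 2) := by
        rw [Nat.cast_descFactorial]
        simp [ascPochhammer_succ_eval]
        rcases e with _ | _ | e
        · simp
        · simp
        · push_cast [Nat.add_sub_cancel]
          ring
      rw [← h3, this]; simp [Nat.factorial]
    have hh : (2 : ℝ) * (s * Nat.choose e 3) ≤
      (K * (D0 + e) + 1) * (K * (D0 + e) + 2) * (L * (D0 + e) + 1) := by exact_mod_cast h e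
    have he' : (0 : ℝ) < e := by exact_mod_cast he
    have e1 : (s : ℝ) * ((1 - 0 * (e : ℝ)⁻¹) * (1 - 1 * (e : ℝ)⁻¹) * (1 - 2 * (e : ℝ)⁻¹)) / 3
        = (2 * (s * Nat.choose e 3)) / (e : ℝ) ^ 3 := by
      have : (2 * ((s : ℝ) * Nat.choose e 3)) = s * (6 * Nat.choose e 3) / 3 := by ring
      rw [this, hc]; field_simp; ring
    have e2 : (K + (K * D0 + 1) * (e : ℝ)⁻¹) * (K + (K * D0 + 2) * (e : ℝ)⁻¹) * (L + (L * D0 + 1) * (e : ℝ)⁻¹)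
        = ((K * (D0 + e) + 1) * (K * (D0 + e) + 2) * (L * (D0 + e) + 1)) / (e : ℝ) ^ 3 := by
      field_simp; ring
    rw [e1, e2]
    gcongr
  have hinv : Tendsto (fun e : ℕ => (e : ℝ)⁻¹) atTop (𝓝 0) := tendsto_inv_atTop_nhds_zero_nat
  have hl : Tendsto (fun e : ℕ => (s : ℝ) * ((1 - 0 * (e : ℝ)⁻¹) * (1 - 1 * (e : ℝ)⁻¹) * (1 - 2 * (e : ℝ)⁻¹)) / 3)
      atTop (𝓝 ((s : ℝ) * ((1 - 0 * 0) * (1 - 1 * 0) * (1 - 2 * 0)) / 3)) :=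
    ((((hinv.const_mul 0).const_sub 1).mul ((hinv.const_mul 1).const_sub 1)).mul
      ((hinv.const_mul 2).const_sub 1)).const_mul _ |>.div_const _
  have hr : Tendsto (fun e : ℕ => ((K : ℝ) + (K * D0 + 1) * (e : ℝ)⁻¹) * (K + (K * D0 + 2) * (e : ℝ)⁻¹) * (L + (L * D0 + 1) * (e : ℝ)⁻¹))
      atTop (𝓝 (((K : ℝ) + (K * D0 + 1) * 0) * (K + (K * D0 + 2) * 0) * (L + (L * D0 + 1) * 0))) :=
    (((hinv.const_mul _).const_add _).mul ((hinv.const_mul _).const_add _)).mul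
      ((hinv.const_mul _).const_add _)
  have := le_of_tendsto_of_tendsto hl hr (eventually_atTop.mpr ⟨1, h1⟩)
  have h5 : (s : ℝ) ≤ 3 * K ^ 2 * L := by nlinarith
  exact_mod_cast h5

/-! ### Ideals of `ℂ[u, v, y]` and translation-stable primes -/

/-- The polynomial ring `ℂ[u, v, y]`, with `u, v, y` the variables `X 0`, `X 1`, `X 2`. -/
abbrev R3 := MvPolynomial (Fin 3) ℂ

section

open MvPolynomial

theorem sub_subst_mem (J : Ideal R3) (g : Fin 3 → R3) (hg : ∀ i, X i - g i ∈ J) (f : R3) :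
    f - aeval g f ∈ J := by
  rw [← Ideal.Quotient.eq]
  have : (Ideal.Quotient.mkₐ ℂ J) = (Ideal.Quotient.mkₐ ℂ J).comp (aeval g) := by
    apply MvPolynomial.algHom_ext
    intro i
    simp only [AlgHom.comp_apply, aeval_X, Ideal.Quotient.mkₐ_eq_mk]
    exact Ideal.Quotient.eq.mpr (hg i)
  exact congrArg (fun φ : R3 →ₐ[ℂ] (R3 ⧸ J) => φ f) this

/-- Depth by hand: if `x, y, z` is a regular sequence and `P, Q` is one too, then an element whose
multiples by `x`, `y`, `z` lie in `(P, Q)` lies in `(P, Q)`. -/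
theorem koszul_abstract {A : Type*} [CommRing A] [IsDomain A] (x y z P Q h : A) (hx0 : x ≠ 0)
    (hxy : ∀ a, x ∣ y * a → x ∣ a)
    (hxyz : ∀ a, (∃ f g, z * a = x * f + y * g) → ∃ f g, a = x * f + y * g)
    (hQ : Q ≠ 0) (hPQ : ∀ a, Q ∣ a * P → Q ∣ a)
    (h1 : ∃ a b, x * h = a * P + b * Q) (h2 : ∃ a b, y * h = a * P + b * Q)
    (h3 : ∃ a b, z * h = a * P + b * Q) : ∃ a b, h = a * P + b * Q := by
  obtain ⟨a1, b1, h1⟩ := h1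
  obtain ⟨a2, b2, h2⟩ := h2
  obtain ⟨a3, b3, h3⟩ := h3
  have key : ∀ a b : A, a * P + b * Q = 0 → ∃ e, a = e * Q ∧ b = - e * P := by
    intro a b hab
    obtain ⟨e, he⟩ := hPQ a ⟨-b, by linear_combination hab⟩
    refine ⟨e, by rw [he]; ring, ?_⟩
    apply mul_right_cancel₀ hQ
    rw [he] at hab
    linear_combination hab
  obtain ⟨e, he1, he2⟩ := key (y * a1 - x * a2) (y * b1 - x * b2)
    (by linear_combination -y * h1 + x * h2)
  obtain ⟨e', he1', he2'⟩ := key (z * a1 - x * a3) (z * b1 - x * b3)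
    (by linear_combination -z * h1 + x * h3)
  obtain ⟨e'', he1'', he2''⟩ := key (z * a2 - y * a3) (z * b2 - y * b3)
    (by linear_combination -z * h2 + y * h3)
  have h4 : z * e = x * (-e'') + y * e' := by
    apply mul_right_cancel₀ hQ
    linear_combination -z * he1 + y * he1' - x * he1''
  obtain ⟨f, g, hfg⟩ := hxyz e ⟨_, _, h4⟩
  obtain ⟨w, hw⟩ := hxy (a1 - g * Q) ⟨a2 + f * Q, by rw [hfg] at he1; linear_combination he1⟩
  obtain ⟨w', hw'⟩ := hxy (b1 + g * P) ⟨b2 - f * P, by rw [hfg] at he2; linear_combination he2⟩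
  refine ⟨w, w', ?_⟩
  apply mul_left_cancel₀ hx0
  linear_combination h1 + P * hw + Q * hw'

/-- The ideal generated by two coprime polynomials has no embedded or isolated point: no element outside
it is killed by a maximal ideal. -/
theorem koszul (P Q h : R3) (hQ : Q ≠ 0) (hrel : IsRelPrime P Q) (c : Fin 3 → ℂ)
    (hh : ∀ i, (X i - C (c i)) * h ∈ Ideal.span {P, Q}) : h ∈ Ideal.span {P, Q} := by
  have conv : ∀ f : R3, f ∈ Ideal.span {P, Q} ↔ ∃ a b, f = a * P + b * Q := by
    intro f
    rw [Ideal.mem_span_pair]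
    constructor
    · rintro ⟨a, b, h⟩; exact ⟨a, b, h.symm⟩
    · rintro ⟨a, b, h⟩; exact ⟨a, b, h.symm⟩
  rw [conv]
  refine koszul_abstract (X 0 - C (c 0)) (X 1 - C (c 1)) (X 2 - C (c 2)) P Q h ?_ ?_ ?_ hQ ?_
    ((conv _).mp (hh 0)) ((conv _).mp (hh 1)) ((conv _).mp (hh 2))
  · intro h0
    have := congrArg (fun p : R3 => eval (fun _ => c 0 + 1) p) h0
    simp at this
  · intro a ha
    let g : Fin 3 → R3 := ![C (c 0), X 1, X 2]
    have hmem := sub_subst_mem (Ideal.span {X 0 - C (c 0)}) g (by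
      intro i; fin_cases i
      · exact Ideal.mem_span_singleton_self _
      · simp [g]
      · simp [g]) a
    obtain ⟨q, hq⟩ := ha
    have h1 := congrArg (aeval g) hq
    simp only [map_mul, map_sub, aeval_X, aeval_C, algebraMap_eq] at h1
    have h2 : (X 1 - C (c 1) : R3) * aeval g a = 0 := by
      simpa [g] using h1
    have h3 : (X 1 - C (c 1) : R3) ≠ 0 := by
      intro h0
      have := congrArg (fun p : R3 => eval (fun _ => c 1 + 1) p) h0
      simp at this
    have h4 : aeval g a = 0 := (mul_eq_zero.mp h2).resolve_left h3
    rw [h4, sub_zero] at hmem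
    exact Ideal.mem_span_singleton.mp hmem
  · rintro a ⟨f, k, hfk⟩
    let g : Fin 3 → R3 := ![C (c 0), C (c 1), X 2]
    have hmem := sub_subst_mem (Ideal.span {X 0 - C (c 0), X 1 - C (c 1)}) g (by
      intro i; fin_cases i
      · exact Ideal.subset_span (by simp [g])
      · exact Ideal.subset_span (by simp [g])
      · simp [g]) a
    have h1 := congrArg (aeval g) hfk
    simp only [map_mul, map_sub, map_add, aeval_X, aeval_C, algebraMap_eq] at h1
    have h2 : (X 2 - C (c 2) : R3) * aeval g a = 0 := by
      simpa [g] using h1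
    have h3 : (X 2 - C (c 2) : R3) ≠ 0 := by
      intro h0
      have := congrArg (fun p : R3 => eval (fun _ => c 2 + 1) p) h0
      simp at this
    have h4 : aeval g a = 0 := (mul_eq_zero.mp h2).resolve_left h3
    rw [h4, sub_zero, Ideal.mem_span_pair] at hmem
    obtain ⟨f', k', h5⟩ := hmem
    exact ⟨f', k', by rw [← h5]; ring⟩
  · intro a ha
    exact hrel.symm.dvd_of_dvd_mul_right ha

/-- The automorphism `u ↦ u + a`, `v ↦ v + c`, `y ↦ w y`. -/
noncomputable def shift3 (a c w : ℂ) : R3 →ₐ[ℂ] R3 := aeval ![X 0 + C a, X 1 + C c, C w * X 2]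

theorem aeval_shift3 {E : Type*} [CommRing E] [Algebra ℂ E] (a c w : ℂ) (g : Fin 3 → E) (f : R3) :
    aeval g (shift3 a c w f) = aeval ![g 0 + algebraMap ℂ E a, g 1 + algebraMap ℂ E c,
      algebraMap ℂ E w * g 2] f := by
  have : (aeval g).comp (shift3 a c w) = aeval ![g 0 + algebraMap ℂ E a, g 1 + algebraMap ℂ E c,
      algebraMap ℂ E w * g 2] := by
    apply MvPolynomial.algHom_ext
    intro i
    fin_cases i <;> simp [shift3]
  exact congrArg (fun φ : R3 →ₐ[ℂ] E => φ f) this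

/-- If `f` vanishes along the orbit of `x` under `(u, v, y) ↦ (u + a, v + c, ω y)` with `ω` of infinite
order, it vanishes on the plane spanned by the orbit: exponential polynomials in `k` have
independent coefficients. -/
theorem lemS_curve {E : Type*} [Field E] [Algebra ℂ E] (f : R3) (a c ω : ℂ) (x : Fin 3 → E)
    (hω : Function.Injective (fun k : ℕ => ω ^ k)) (hx2 : x 2 ≠ 0)
    (hk : ∀ k : ℕ, aeval ![x 0 + algebraMap ℂ E (k * a), x 1 + algebraMap ℂ E (k * c),
      algebraMap ℂ E (ω ^ k) * x 2] f = 0) (z y : E) :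
    aeval ![x 0 + z * algebraMap ℂ E a, x 1 + z * algebraMap ℂ E c, y] f = 0 := by
  classical
  have : CharZero E := charZero_of_injective_algebraMap (algebraMap ℂ E).injective
  set K := f.totalDegree with hK
  let P : ℕ → Polynomial E := fun l => ∑ m ∈ f.support.filter (fun m => m 2 = l),
    Polynomial.C (algebraMap ℂ E (coeff m f) * x 2 ^ l) *
      (Polynomial.C (x 0) + Polynomial.C (algebraMap ℂ E a) * Polynomial.X) ^ (m 0) *
      (Polynomial.C (x 1) + Polynomial.C (algebraMap ℂ E c) * Polynomial.X) ^ (m 1)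
  have htd : ∀ m ∈ f.support, m 0 + m 1 + m 2 ≤ K := by
    intro m hm
    have := le_totalDegree hm
    rw [Finsupp.sum_fintype _ _ (fun _ => rfl), Fin.sum_univ_three] at this
    exact this
  have hPev : ∀ z Y : E, ∑ l ∈ Finset.range (K + 1), (P l).eval z * Y ^ l =
      aeval ![x 0 + z * algebraMap ℂ E a, x 1 + z * algebraMap ℂ E c, x 2 * Y] f := by
    intro z Y
    rw [aeval_def, eval₂_eq', ← Finset.sum_fiberwise_of_maps_to
      (s := f.support) (t := Finset.range (K + 1)) (g := fun m => m 2)]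
    · refine Finset.sum_congr rfl fun l _ => ?_
      simp only [P, Polynomial.eval_finsetSum, Finset.sum_mul]
      refine Finset.sum_congr rfl fun m hm => ?_
      have hm2 : m 2 = l := (Finset.mem_filter.mp hm).2
      rw [Fin.prod_univ_three]
      simp [hm2]
      ring
    · intro m hm
      have := htd m hm
      simp; omega
  have hlin : ∀ p q : E, (Polynomial.C p + Polynomial.C q * Polynomial.X).natDegree ≤ 1 := by
    intro p q
    rw [add_comm]; exact Polynomial.natDegree_linear_le
  have hPdeg : ∀ l, (P l).natDegree ≤ K := by
    intro l
    refine Polynomial.natDegree_sum_le_of_forall_le _ _ fun m hm => ?_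
    have := htd m (Finset.mem_filter.mp hm).1
    refine Polynomial.natDegree_mul_le.trans ?_
    have h1 := Polynomial.natDegree_C_mul_le (algebraMap ℂ E (coeff m f) * x 2 ^ l)
      ((Polynomial.C (x 0) + Polynomial.C (algebraMap ℂ E a) * Polynomial.X) ^ (m 0))
    have h2 := Polynomial.natDegree_pow_le_of_le (m 0) (hlin (x 0) (algebraMap ℂ E a))
    have h3 := Polynomial.natDegree_pow_le_of_le (m 1) (hlin (x 1) (algebraMap ℂ E c))
    omega
  let s : Finset E := (Finset.range (K * (K + 1) + 1)).image (fun j : ℕ => (j : E))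
  have hscard : s.card = K * (K + 1) + 1 := by
    rw [Finset.card_image_of_injective _ Nat.cast_injective, Finset.card_range]
  have hsm : ∀ t ∈ s, ∃ j : ℕ, t = j := by
    intro t ht
    obtain ⟨j, _, hj⟩ := Finset.mem_image.mp ht
    exact ⟨j, hj.symm⟩
  have hsm' : ∀ t : E, ∃ j : ℕ, t ∈ s → t = j := by
    intro t
    by_cases h : t ∈ s
    · obtain ⟨j, hj⟩ := hsm t h; exact ⟨j, fun _ => hj⟩
    · exact ⟨0, fun h' => absurd h' h⟩
  choose idx hidx using hsm'
  have hω0 : ω ≠ 0 := by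
    intro h0
    have := @hω 1 2 (by simp [h0])
    omega
  have hωE : algebraMap ℂ E ω ≠ 0 := by simpa using hω0
  have hP0 := Z2 K K P hPdeg 1 (algebraMap ℂ E ω) (by
      intro i j hij
      simp only [← map_pow] at hij
      exact hω ((algebraMap ℂ E).injective hij)) s (fun t => (algebraMap ℂ E ω) ^ idx t)
    (fun t _ => pow_ne_zero _ hωE) (by omega) (by
      intro t ht i _
      rw [hPev, ← hk (idx t + i), hidx t ht]
      congr 2
      ext k
      have e1 : idx (idx t : E) = idx t := by rw [← hidx t ht]
      fin_cases k
      · simp [e1]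
      · simp [e1]
      · simp [pow_add]; rw [e1]; ring)
  have h1 := hPev z (y / x 2)
  rw [mul_div_cancel₀ _ hx2] at h1
  rw [← h1]
  refine Finset.sum_eq_zero fun l hl => ?_
  rw [hP0 l (by simpa [Nat.lt_succ_iff] using hl)]
  simp

theorem root_of_aeval_zero {E : Type*} [Field E] [Algebra ℂ E] (q : Polynomial ℂ) (hq : q ≠ 0) (s : E)
    (hs : Polynomial.aeval s q = 0) : ∃ s0 : ℂ, s = algebraMap ℂ E s0 := by
  have h1 := (IsAlgClosed.splits q).eq_prod_roots
  rw [h1] at hs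
  simp only [map_mul, Polynomial.aeval_C, map_multiset_prod, Multiset.map_map] at hs
  rcases mul_eq_zero.mp hs with h | h
  · simp [hq] at h
  · rw [Multiset.prod_eq_zero_iff, Multiset.mem_map] at h
    obtain ⟨r, _, hr⟩ := h
    refine ⟨r, ?_⟩
    simpa [sub_eq_zero] using hr

/-- A prime stable under a translation with `ω` of infinite order lies in the ideal of a plane
`c u - a v = s₀`. -/
theorem lemS (𝔭 : Ideal R3) [h𝔭 : 𝔭.IsPrime] (hX2 : X 2 ∉ 𝔭) (a c ω : ℂ)
    (hac : a ≠ 0 ∨ c ≠ 0) (hω : Function.Injective (fun k : ℕ => ω ^ k))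
    (hT : ∀ f ∈ 𝔭, shift3 a c ω f ∈ 𝔭) :
    ∃ s0 : ℂ, ∀ f ∈ 𝔭, (C c * X 0 - C a * X 1 - C s0) ∣ f := by
  classical
  by_cases hbot : 𝔭 = ⊥
  · refine ⟨0, fun f hf => ?_⟩
    rw [hbot] at hf
    rw [Ideal.mem_bot.mp hf]; exact dvd_zero _
  obtain ⟨a', c', hac'⟩ : ∃ a' c' : ℂ, a * a' + c * c' = 1 := by
    rcases hac with h | h
    · exact ⟨a⁻¹, 0, by field_simp; ring⟩
    · exact ⟨0, c⁻¹, by field_simp; ring⟩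
  let E := FractionRing (R3 ⧸ 𝔭)
  let pr : R3 →ₐ[ℂ] E := (IsScalarTower.toAlgHom ℂ (R3 ⧸ 𝔭) E).comp (Ideal.Quotient.mkₐ ℂ 𝔭)
  have hpr : ∀ f, pr f = 0 ↔ f ∈ 𝔭 := by
    intro f
    have : pr f = algebraMap (R3 ⧸ 𝔭) E (Ideal.Quotient.mk 𝔭 f) := rfl
    rw [this, FaithfulSMul.algebraMap_eq_zero_iff, Ideal.Quotient.eq_zero_iff_mem]
  let x : Fin 3 → E := fun i => pr (X i)
  have hprx : ∀ f, pr f = aeval x f := by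
    intro f
    have : pr = aeval x := by
      apply MvPolynomial.algHom_ext
      intro i
      simp [x]
    rw [this]
  have hTk : ∀ f ∈ 𝔭, ∀ k : ℕ, aeval ![x 0 + algebraMap ℂ E (k * a), x 1 + algebraMap ℂ E (k * c),
      algebraMap ℂ E (ω ^ k) * x 2] f = 0 := by
    intro f hf k
    induction k generalizing f with
    | zero =>
      have := (hpr f).mpr hf
      rw [hprx] at this
      rw [← this]
      congr 2
      ext i; fin_cases i <;> simp
    | succ k ih =>
      have := ih _ (hT f hf)
      rw [aeval_shift3] at this
      rw [← this]
      congr 2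
      ext i; fin_cases i <;> simp <;> ring
  have hx2 : x 2 ≠ 0 := fun h => hX2 ((hpr _).mp h)
  have hcurve : ∀ f ∈ 𝔭, ∀ z y : E,
      aeval ![x 0 + z * algebraMap ℂ E a, x 1 + z * algebraMap ℂ E c, y] f = 0 :=
    fun f hf z y => lemS_curve f a c ω x hω hx2 (hTk f hf) z y
  set s : E := algebraMap ℂ E c * x 0 - algebraMap ℂ E a * x 1 with hs
  have hplane : ∀ f ∈ 𝔭, ∀ x1 y : E,
      aeval ![algebraMap ℂ E a * x1 + algebraMap ℂ E c' * s,
        algebraMap ℂ E c * x1 - algebraMap ℂ E a' * s, y] f = 0 := by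
    intro f hf x1 y
    rw [← hcurve f hf (x1 - (algebraMap ℂ E a' * x 0 + algebraMap ℂ E c' * x 1)) y]
    have e := congrArg (algebraMap ℂ E) hac'
    simp only [map_add, map_mul, map_one] at e
    congr 2
    ext i; fin_cases i
    · simp only [Fin.zero_eta, Matrix.cons_val_zero, hs]
      linear_combination (x 0) * e
    · simp only [Fin.mk_one, Matrix.cons_val_one, Matrix.cons_val_zero, hs]
      linear_combination (x 1) * e
    · simp
  obtain ⟨f0, hf0, hf0ne⟩ := Submodule.exists_mem_ne_zero_of_ne_bot hbot
  obtain ⟨s0, hs0⟩ : ∃ s0 : ℂ, s = algebraMap ℂ E s0 := by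
    let q : ℂ → ℂ → Polynomial ℂ := fun x1 y1 =>
      aeval ![Polynomial.C (a * x1) + Polynomial.C c' * Polynomial.X,
        Polynomial.C (c * x1) - Polynomial.C a' * Polynomial.X, Polynomial.C y1] f0
    have hqs : ∀ x1 y1, Polynomial.aeval s (q x1 y1) = 0 := by
      intro x1 y1
      rw [← hplane f0 hf0 (algebraMap ℂ E x1) (algebraMap ℂ E y1)]
      simp only [q]
      rw [← AlgHom.comp_apply, comp_aeval]
      congr 2
      ext i; fin_cases i <;> simp
    have hex : ∃ x1 y1, q x1 y1 ≠ 0 := by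
      by_contra hcon
      push Not at hcon
      apply hf0ne
      apply MvPolynomial.funext
      intro p
      have := congrArg (Polynomial.aeval (c * p 0 - a * p 1)) (hcon (a' * p 0 + c' * p 1) (p 2))
      simp only [q] at this
      rw [← AlgHom.comp_apply, comp_aeval, map_zero] at this
      rw [map_zero, ← this, ← coe_aeval_eq_eval]
      simp only [RingHom.coe_coe]
      congr 2
      ext i; fin_cases i
      · simp; linear_combination (-p 0) * hac'
      · simp; linear_combination (-p 1) * hac'
      · simp
    obtain ⟨x1, y1, hq⟩ := hex
    exact root_of_aeval_zero (q x1 y1) hq s (hqs x1 y1)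
  refine ⟨s0, fun f hf => ?_⟩
  let g : Fin 3 → R3 := ![C a * (C a' * X 0 + C c' * X 1) + C (c' * s0),
    C c * (C a' * X 0 + C c' * X 1) - C (a' * s0), X 2]
  have eC := congrArg (C (σ := Fin 3)) hac'
  simp only [map_add, map_mul, map_one] at eC
  have hmem := sub_subst_mem (Ideal.span {C c * X 0 - C a * X 1 - C s0}) g (by
    intro i
    rw [Ideal.mem_span_singleton]
    fin_cases i
    · refine ⟨C c', ?_⟩
      simp [g]
      linear_combination (-X 0) * eC
    · refine ⟨-C a', ?_⟩
      simp [g]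
      linear_combination (-X 1) * eC
    · simp [g]) f
  have h0 : aeval g f = 0 := by
    apply MvPolynomial.funext
    intro p
    rw [map_zero, ← coe_aeval_eq_eval]
    simp only [RingHom.coe_coe]
    rw [← AlgHom.comp_apply, comp_aeval]
    have := hplane f hf (algebraMap ℂ E (a' * p 0 + c' * p 1)) (algebraMap ℂ E (p 2))
    rw [hs0] at this
    have h2 : ∀ w : Fin 3 → ℂ, aeval (fun i => algebraMap ℂ E (w i)) f = algebraMap ℂ E (aeval w f) := by
      intro w
      exact MvPolynomial.aeval_algebraMap_apply E w f
    have h3 := h2 ![a * (a' * p 0 + c' * p 1) + c' * s0, c * (a' * p 0 + c' * p 1) - a' * s0, p 2]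
    have h4 : (fun i => algebraMap ℂ E (![a * (a' * p 0 + c' * p 1) + c' * s0, c * (a' * p 0 + c' * p 1) - a' * s0, p 2] i))
      = ![algebraMap ℂ E a * algebraMap ℂ E (a' * p 0 + c' * p 1) + algebraMap ℂ E c' * algebraMap ℂ E s0,
        algebraMap ℂ E c * algebraMap ℂ E (a' * p 0 + c' * p 1) - algebraMap ℂ E a' * algebraMap ℂ E s0, algebraMap ℂ E (p 2)] := by
      ext i; fin_cases i <;> simp
    rw [h4, this] at h3
    have h5 := (FaithfulSMul.algebraMap_eq_zero_iff ℂ E).mp h3.symm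
    rw [← h5]
    congr 2
    ext i; fin_cases i <;> simp [g]
  rw [h0, sub_zero] at hmem
  exact Ideal.mem_span_singleton.mp hmem

end

/-! ### The filtration by bidegree -/

section
open MvPolynomial

/-- Polynomials of total degree at most `p` in `u, v` and of degree at most `q` in `y`. -/
noncomputable def Fil (p q : ℕ) : Submodule ℂ R3 :=
  restrictSupport ℂ {m | m 0 + m 1 ≤ p ∧ m 2 ≤ q}

theorem Fil_mul {p q p' q' : ℕ} {f g : R3} (hf : f ∈ Fil p q) (hg : g ∈ Fil p' q') :
    f * g ∈ Fil (p + p') (q + q') := by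
  classical
  unfold Fil at *
  rw [mem_restrictSupport_iff] at *
  intro m hm
  have := support_mul f g hm
  obtain ⟨a, ha, b, hb, rfl⟩ := Finset.mem_add.mp this
  have h1 := hf ha
  have h2 := hg hb
  simp only [Set.mem_ofPred_eq, Finsupp.add_apply] at *
  omega

theorem Fil_mono {p q p' q' : ℕ} (hp : p ≤ p') (hq : q ≤ q') : Fil p q ≤ Fil p' q' := by
  apply restrictSupport_mono
  intro m hm
  simp only [Set.mem_ofPred_eq] at *
  omega

theorem Fil_C (c : ℂ) : C c ∈ Fil 0 0 := by
  unfold Fil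
  rw [C_apply, monomial_mem_restrictSupport]
  left; simp

theorem Fil_X (i : Fin 3) : X i ∈ Fil (if i = 2 then 0 else 1) (if i = 2 then 1 else 0) := by
  unfold Fil
  rw [X, monomial_mem_restrictSupport]
  left
  fin_cases i <;> simp

theorem Fil_pow {p q : ℕ} {f : R3} (hf : f ∈ Fil p q) (k : ℕ) : f ^ k ∈ Fil (k * p) (k * q) := by
  induction k with
  | zero => simpa using Fil_C 1
  | succ k ih =>
    rw [pow_succ, add_mul, add_mul, one_mul, one_mul]
    exact Fil_mul ih hf

theorem shift3_mem_Fil (a c w : ℂ) {p q : ℕ} {f : R3} (hf : f ∈ Fil p q) :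
    shift3 a c w f ∈ Fil p q := by
  have hf' := hf
  unfold Fil at hf'
  rw [restrictSupport_eq_span] at hf'
  induction hf' using Submodule.span_induction with
  | zero => simp
  | add x y hx hy h1 h2 =>
    rw [map_add]
    refine Submodule.add_mem _ (h1 ?_) (h2 ?_)
    · unfold Fil; rw [restrictSupport_eq_span]; exact hx
    · unfold Fil; rw [restrictSupport_eq_span]; exact hy
  | smul r x hx h1 =>
    rw [map_smul]
    refine Submodule.smul_mem _ _ (h1 ?_)
    unfold Fil; rw [restrictSupport_eq_span]; exact hx
  | mem x hx =>
    obtain ⟨m, hm, rfl⟩ := hx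
    simp only [Set.mem_ofPred_eq] at hm
    unfold shift3
    rw [aeval_monomial, Finsupp.prod_fintype _ _ (fun _ => pow_zero _), Fin.prod_univ_three]
    simp only [map_one, one_mul, Matrix.cons_val_zero, Matrix.cons_val_one, Matrix.cons_val]
    have h0 : (X 0 + C a : R3) ∈ Fil 1 0 :=
      Submodule.add_mem _ (by simpa using Fil_X 0) (Fil_mono (by omega) le_rfl (Fil_C a))
    have h1 : (X 1 + C c : R3) ∈ Fil 1 0 :=
      Submodule.add_mem _ (by simpa using Fil_X 1) (Fil_mono (by omega) le_rfl (Fil_C c))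
    have h2 : (C w * X 2 : R3) ∈ Fil 0 1 := by
      simpa using Fil_mul (Fil_C w) (Fil_X 2)
    have := Fil_mul (Fil_mul (Fil_pow h0 (m 0)) (Fil_pow h1 (m 1))) (Fil_pow h2 (m 2))
    exact Fil_mono (by simp; omega) (by simp; omega) this

theorem Fil_finrank (p q : ℕ) : Module.Finite ℂ (Fil p q) ∧
    2 * Module.finrank ℂ (Fil p q) ≤ (p + 1) * (p + 2) * (q + 1) := by
  classical
  set S : Set (Fin 3 →₀ ℕ) := {m | m 0 + m 1 ≤ p ∧ m 2 ≤ q} with hS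
  let b : Module.Basis S ℂ (Fil p q) := basisRestrictSupport ℂ S
  let W : Finset ((Σ _ : ℕ, ℕ) × ℕ) :=
    ((Finset.range (p + 1)).sigma (fun s => Finset.range (s + 1))) ×ˢ Finset.range (q + 1)
  have hW : 2 * W.card = (p + 1) * (p + 2) * (q + 1) := by
    simp only [W, Finset.card_product, Finset.card_sigma, Finset.card_range]
    have h2 : ∑ x ∈ Finset.range (p + 1), (x + 1) = ∑ i ∈ Finset.range (p + 2), i := by
      rw [Finset.sum_range_succ' _ (p + 1)]; simp
    have h3 := Finset.sum_range_id_mul_two (p + 2)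
    have : p + 2 - 1 = p + 1 := rfl
    rw [this] at h3
    rw [h2, ← mul_assoc, mul_comm 2, h3]; ring
  let φ : S → W := fun m => ⟨(⟨m.1 0 + m.1 1, m.1 0⟩, m.1 2), by
    have := m.2
    simp only [hS, Set.mem_ofPred_eq] at this
    simp only [W, Finset.mem_product, Finset.mem_sigma, Finset.mem_range]
    omega⟩
  have hφ : Function.Injective φ := by
    intro m m' h
    have h1 := congrArg Subtype.val h
    simp only [φ, Prod.mk.injEq, Sigma.mk.injEq, heq_eq_eq] at h1
    ext i
    fin_cases i
    · exact h1.1.2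
    · have := h1.1; simp; omega
    · exact h1.2
  have hfin : Finite S := Finite.of_injective φ hφ
  have := Fintype.ofFinite S
  refine ⟨Module.Finite.of_basis b, ?_⟩
  rw [Module.finrank_eq_card_basis b, ← hW]
  have := Fintype.card_le_of_injective φ hφ
  rw [Fintype.card_coe] at this
  omega

/-- The filtration of `ℂ[u, v, y]` whose `D`-th step is `Fil (K D) (L D)`. -/
noncomputable def filt (K L : ℕ) (hK : 1 ≤ K) (hL : 1 ≤ L) : Filt R3 where
  F D := Fil (K * D) (L * D)
  fin D := (Fil_finrank _ _).1
  mul := by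
    intro m n a b ha hb
    rw [mul_add, mul_add]; exact Fil_mul ha hb
  mono := by
    intro a b h
    exact Fil_mono (Nat.mul_le_mul_left _ h) (Nat.mul_le_mul_left _ h)
  exh := by
    intro f
    refine ⟨f.totalDegree, ?_⟩
    unfold Fil
    rw [mem_restrictSupport_iff]
    intro m hm
    have := le_totalDegree hm
    rw [Finsupp.sum_fintype _ _ (fun _ => rfl), Fin.sum_univ_three] at this
    have h1 : f.totalDegree ≤ K * f.totalDegree := Nat.le_mul_of_pos_left _ hK
    have h2 : f.totalDegree ≤ L * f.totalDegree := Nat.le_mul_of_pos_left _ hL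
    simp only [Set.mem_ofPred_eq]
    omega

theorem Fil_totalDegree {p q : ℕ} {f : R3} (hf : f ∈ Fil p q) : f.totalDegree ≤ p + q := by
  refine Finset.sup_le fun m hm => ?_
  have := hf hm
  simp only [Set.mem_ofPred_eq] at this
  rw [Finsupp.sum_fintype _ _ (fun _ => rfl), Fin.sum_univ_three]
  omega

/-- The degree of the curve `(P, Q)`: a Hilbert function growing like `s e` downstairs gives growth
`s C(e, 3)` upstairs, which is at most that of the full ring. -/
theorem hilbert_bound (K L : ℕ) (hK : 1 ≤ K) (hL : 1 ≤ L) (P Q : R3) (I : Ideal R3)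
    (hP : P ≠ 0) (hPF : P ∈ Fil K L) (hQF : Q ∈ Fil K L) (hrel : IsRelPrime P Q)
    (hI : Ideal.span {P, Q} ≤ I) (s D0 : ℕ)
    (hs : ∀ e, s * e ≤ (filt K L hK hL).H I (D0 + e)) : s ≤ 3 * K ^ 2 * L := by
  have hF1 : (filt K L hK hL).F 1 = Fil K L := by simp [filt]
  have c1 := (filt K L hK hL).H_chain ⊥ P (by rw [hF1]; exact hPF) (by
    intro h hh
    rw [Ideal.mem_bot] at *
    exact (mul_eq_zero.mp hh).resolve_left hP)
  have c2 := (filt K L hK hL).H_chain (⊥ ⊔ Ideal.span {P}) Q (by rw [hF1]; exact hQF) (by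
    intro h hh
    rw [bot_sup_eq, Ideal.mem_span_singleton] at *
    exact hrel.dvd_of_dvd_mul_left hh)
  have hle : ⊥ ⊔ Ideal.span {P} ⊔ Ideal.span {Q} ≤ I := by
    rw [bot_sup_eq, ← Ideal.span_union]
    exact hI
  have g1 := growth_step s D0 1 ((filt K L hK hL).H (⊥ ⊔ Ideal.span {P}))
    ((filt K L hK hL).H (⊥ ⊔ Ideal.span {P} ⊔ Ideal.span {Q})) c2 (by
      intro e
      rw [Nat.choose_one_right]
      exact (hs e).trans ((filt K L hK hL).H_anti hle _))
  have g2 := growth_step s D0 2 ((filt K L hK hL).H ⊥)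
    ((filt K L hK hL).H (⊥ ⊔ Ideal.span {P})) c1 g1
  apply growth_limit s K L D0
  intro e
  have h1 := g2 e
  have h2 := (filt K L hK hL).H_bot_le ⊥ (D0 + e)
  have h3 := (Fil_finrank (K * (D0 + e)) (L * (D0 + e))).2
  have h4 : (filt K L hK hL).F (D0 + e) = Fil (K * (D0 + e)) (L * (D0 + e)) := rfl
  rw [h4] at h2
  simp only [Nat.reduceAdd] at h1
  omega

/-- A nonzero polynomial has at most as many pairwise non-associated irreducible factors as its degree. -/
theorem prime_count {ι : Type*} (s : Finset ι) (q : ι → R3) (P : R3) (hP : P ≠ 0)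
    (hq : ∀ i ∈ s, Irreducible (q i)) (hdvd : ∀ i ∈ s, q i ∣ P)
    (hne : ∀ i ∈ s, ∀ j ∈ s, i ≠ j → ¬ Associated (q i) (q j)) : s.card ≤ P.totalDegree := by
  classical
  have h1 : ∏ i ∈ s, q i ∣ P := by
    refine Finset.prod_dvd_of_isRelPrime ?_ hdvd
    intro i hi j hj hij
    exact ((hq i hi).isRelPrime_iff_not_dvd).mpr fun hd =>
      hne i hi j hj hij ((hq i hi).associated_of_dvd (hq j hj) hd)
  obtain ⟨r, hr⟩ := h1
  have hr0 : r ≠ 0 := by rintro rfl; simp at hr; exact hP hr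
  have hp0 : ∏ i ∈ s, q i ≠ 0 := by intro h; rw [h] at hr; simp at hr; exact hP hr
  have h2 : s.card ≤ (∏ i ∈ s, q i).totalDegree := by
    clear hr hp0 hdvd
    induction s using Finset.induction_on with
    | empty => simp
    | insert i s hi ih =>
      have ih' := ih (fun j hj => hq j (Finset.mem_insert_of_mem hj))
        (fun j hj k hk => hne j (Finset.mem_insert_of_mem hj) k (Finset.mem_insert_of_mem hk))
      have hqi := hq i (Finset.mem_insert_self _ _)
      have hne0 : ∏ j ∈ s, q j ≠ 0 :=
        Finset.prod_ne_zero_iff.mpr fun j hj => (hq j (Finset.mem_insert_of_mem hj)).ne_zero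
      rw [Finset.prod_insert hi, totalDegree_mul_of_isDomain hqi.ne_zero hne0,
        Finset.card_insert_of_notMem hi]
      have : (q i).totalDegree ≠ 0 := by
        intro h0
        rw [totalDegree_eq_zero_iff_eq_C] at h0
        apply hqi.not_isUnit
        rw [h0]
        apply IsUnit.map
        rw [isUnit_iff_ne_zero]
        intro hc
        rw [hc, map_zero] at h0
        exact hqi.ne_zero h0
      omega
  rw [hr, totalDegree_mul_of_isDomain hp0 hr0]
  omega

/-- A complex vector space is not a finite union of proper subspaces. -/
theorem avoid {M : Type*} [AddCommGroup M] [Module ℂ M] {ι : Type*} (s : Finset ι)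
    (W : Submodule ℂ M) (N : ι → Submodule ℂ M) (h : ∀ i ∈ s, ¬ W ≤ N i) :
    ∃ x ∈ W, ∀ i ∈ s, x ∉ N i := by
  classical
  have := Subspace.biUnion_ne_univ_of_top_notMem (k := ℂ) (E := W)
    (s := s.image (fun i => (N i).comap W.subtype)) (by
      intro hm
      obtain ⟨i, hi, hi'⟩ := Finset.mem_image.mp hm
      apply h i hi
      intro x hx
      have : (⟨x, hx⟩ : W) ∈ (N i).comap W.subtype := by rw [hi']; trivial
      exact this)
  rw [Set.ne_univ_iff_exists_notMem] at this
  obtain ⟨x, hx⟩ := this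
  refine ⟨x, x.2, fun i hi hxi => hx ?_⟩
  simp only [Set.mem_iUnion]
  exact ⟨_, Finset.mem_image_of_mem _ hi, hxi⟩

end

/-! ### Translations and coprime translates -/

section
open MvPolynomial

/-- Prime avoidance over the associated primes of `I`: either `W` contains an element regular modulo `I`,
or `W` lies in an associated prime. -/
theorem regular_or_assoc (I : Ideal R3) (W : Submodule ℂ R3) :
    (∃ p ∈ W, ∀ h, p * h ∈ I → h ∈ I) ∨
    ∃ 𝔭 : Ideal R3, 𝔭.IsPrime ∧ (∃ h, h ∉ I ∧ ∀ f, f ∈ 𝔭 → f * h ∈ I) ∧ I ≤ 𝔭 ∧ ∀ f ∈ W, f ∈ 𝔭 := by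
  classical
  have hfin := associatedPrimes.finite R3 (R3 ⧸ I)
  by_cases hc : ∃ 𝔭 ∈ associatedPrimes R3 (R3 ⧸ I), W ≤ 𝔭.restrictScalars ℂ
  · right
    obtain ⟨𝔭, h𝔭, hW⟩ := hc
    rw [AssociatedPrimes.mem_iff, isAssociatedPrime_iff] at h𝔭
    obtain ⟨hpr, x, hx⟩ := h𝔭
    obtain ⟨h, rfl⟩ := Ideal.Quotient.mk_surjective x
    have key : ∀ f, f ∈ 𝔭 ↔ f * h ∈ I := by
      intro f
      rw [hx, ← Ideal.Quotient.eq_zero_iff_mem (I := I), map_mul, Submodule.mem_colon_singleton,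
        Submodule.mem_bot]
      rfl
    refine ⟨𝔭, hpr, ⟨h, ?_, fun f hf => (key f).mp hf⟩, ?_, hW⟩
    · intro hh
      apply hpr.ne_top
      rw [Ideal.eq_top_iff_one, key, one_mul]
      exact hh
    · intro f hf
      rw [key]; exact Ideal.mul_mem_right _ _ hf
  · left
    push Not at hc
    obtain ⟨p, hpW, hp⟩ := avoid hfin.toFinset W (fun 𝔭 => 𝔭.restrictScalars ℂ) (by
      intro 𝔭 h; exact hc 𝔭 (hfin.mem_toFinset.mp h))
    refine ⟨p, hpW, fun h hh => ?_⟩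
    by_contra hn
    have hz : p ∈ { r : R3 | ∃ x : R3 ⧸ I, x ≠ 0 ∧ r • x = 0 } := by
      refine ⟨Ideal.Quotient.mk I h, ?_, ?_⟩
      · rwa [Ne, Ideal.Quotient.eq_zero_iff_mem]
      · rw [← Ideal.Quotient.eq_zero_iff_mem, map_mul] at hh
        exact hh
    rw [← biUnion_associatedPrimes_eq_zero_divisors] at hz
    simp only [Set.mem_iUnion] at hz
    obtain ⟨𝔭, h𝔭, hp𝔭⟩ := hz
    exact hp 𝔭 (hfin.mem_toFinset.mpr h𝔭) hp𝔭

/-- The ideal of the `h` with `X₂ʲ h ∈ I` for some `j`. -/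
def satur (I : Ideal R3) : Ideal R3 where
  carrier := {h | ∃ j : ℕ, X 2 ^ j * h ∈ I}
  zero_mem' := ⟨0, by simp⟩
  add_mem' := by
    rintro a b ⟨i, hi⟩ ⟨j, hj⟩
    refine ⟨i + j, ?_⟩
    have : (X 2 ^ (i + j) * (a + b) : R3) = X 2 ^ j * (X 2 ^ i * a) + X 2 ^ i * (X 2 ^ j * b) := by
      ring
    rw [this]
    exact I.add_mem (I.mul_mem_left _ hi) (I.mul_mem_left _ hj)
  smul_mem' := by
    rintro c a ⟨i, hi⟩
    refine ⟨i, ?_⟩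
    rw [smul_eq_mul, mul_left_comm]
    exact I.mul_mem_left _ hi

theorem mem_satur {I : Ideal R3} {h : R3} : h ∈ satur I ↔ ∃ j : ℕ, X 2 ^ j * h ∈ I := Iff.rfl

theorem le_satur (I : Ideal R3) : I ≤ satur I := fun h hh => ⟨0, by simpa using hh⟩

theorem satur_le_of_le {I 𝔭 : Ideal R3} [h𝔭 : 𝔭.IsPrime] (h : I ≤ 𝔭) (hX : X 2 ∉ 𝔭) :
    satur I ≤ 𝔭 := by
  rintro f ⟨j, hj⟩
  rcases h𝔭.mem_or_mem (h hj) with h1 | h1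
  · exact absurd (h𝔭.mem_of_pow_mem _ h1) hX
  · exact h1

/-- No associated prime of the saturation of `(P, Q)` is the ideal of a point. -/
theorem assoc_no_point (P Q : R3) (hQ : Q ≠ 0) (hrel : IsRelPrime P Q) (𝔭 : Ideal R3)
    (hex : ∃ h, h ∉ satur (Ideal.span {P, Q}) ∧ ∀ f, f ∈ 𝔭 → f * h ∈ satur (Ideal.span {P, Q})) :
    X 2 ∉ 𝔭 ∧ ¬ ∃ c : Fin 3 → ℂ, ∀ i, X i - C (c i) ∈ 𝔭 := by
  obtain ⟨h, hh, hf⟩ := hex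
  constructor
  · intro hX
    obtain ⟨j, hj⟩ := hf _ hX
    exact hh ⟨j + 1, by rw [pow_succ, mul_assoc]; exact hj⟩
  · rintro ⟨c, hc⟩
    have : ∀ i, ∃ j : ℕ, X 2 ^ j * ((X i - C (c i)) * h) ∈ Ideal.span {P, Q} := fun i => hf _ (hc i)
    choose j hj using this
    apply hh
    refine ⟨j 0 + j 1 + j 2, ?_⟩
    apply koszul P Q _ hQ hrel c
    intro i
    have hle : j i ≤ j 0 + j 1 + j 2 := by fin_cases i <;> simp <;> omega
    obtain ⟨k, hk⟩ := Nat.exists_eq_add_of_le hle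
    rw [hk, pow_add]
    have : (X i - C (c i)) * (X 2 ^ j i * X 2 ^ k * h) = X 2 ^ k * (X 2 ^ j i * ((X i - C (c i)) * h)) := by
      ring
    rw [this]
    exact Ideal.mul_mem_left _ _ (hj i)

theorem transc_of_no_root (𝔭 : Ideal R3) [h𝔭 : 𝔭.IsPrime] (x : R3) (hx : ∀ c : ℂ, x - C c ∉ 𝔭)
    (q : Polynomial ℂ) (hq : Polynomial.aeval x q ∈ 𝔭) : q = 0 := by
  by_contra hq0
  have h1 := (IsAlgClosed.splits q).eq_prod_roots
  rw [h1] at hq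
  simp only [map_mul, Polynomial.aeval_C, map_multiset_prod, Multiset.map_map] at hq
  rcases h𝔭.mem_or_mem hq with h | h
  · apply h𝔭.ne_top
    apply Ideal.eq_top_of_isUnit_mem _ h
    exact (isUnit_iff_ne_zero.mpr (by simpa using hq0)).map _
  · rw [h𝔭.multiset_prod_mem_iff_exists_mem] at h
    obtain ⟨p, hp, hp'⟩ := h
    obtain ⟨r, _, rfl⟩ := Multiset.mem_map.mp hp
    apply hx r
    simpa [algebraMap_eq] using hp'

theorem exists_injOn_subset {α β : Type*} [DecidableEq β] (S : Finset α) (f : α → β) :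
    ∃ S1 ⊆ S, S1.image f = S.image f ∧ Set.InjOn f S1 := by
  obtain ⟨u, h1, h2, h3⟩ := Finset.exists_subset_injOn_image_eq_of_surjOn (S : Set α) (S.image f) (f := f)
    (by intro y hy; simpa using hy)
  exact ⟨u, by exact_mod_cast h1, h3, h2⟩

/-- A commutative group acting on `ℂ² × ℂˣ` by translations: `g` adds `(u g, v g)` and multiplies by
`w g`, where `w g` is `1` or of infinite order. -/
structure TransData (G : Type*) [AddCommGroup G] where
  u : G →+ ℂ
  v : G →+ ℂ
  w : G → ℂ
  w_zero : w 0 = 1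
  w_add : ∀ g h, w (g + h) = w g * w h
  w_inj : ∀ g, w g ≠ 1 → Function.Injective (fun k : ℕ => w g ^ k)

namespace TransData
variable {G : Type*} [AddCommGroup G] (Z : TransData G)

/-- The substitution `f ↦ f ∘ (translation by g)`. -/
noncomputable def T (g : G) : R3 →ₐ[ℂ] R3 := shift3 (Z.u g) (Z.v g) (Z.w g)

/-- The orbit of the neutral element `(0, 0, 1)`. -/
def pt (g : G) : Fin 3 → ℂ := ![Z.u g, Z.v g, Z.w g]

theorem w_ne (g : G) : Z.w g ≠ 0 := by
  intro h
  have := Z.w_add g (-g)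
  rw [h, add_neg_cancel, Z.w_zero, zero_mul] at this
  exact one_ne_zero this

theorem T_add (g h : G) (f : R3) : Z.T (g + h) f = Z.T g (Z.T h f) := by
  have : Z.T (g + h) = (Z.T g).comp (Z.T h) := by
    apply MvPolynomial.algHom_ext
    intro i
    fin_cases i
    · simp [T, shift3]; ring
    · simp [T, shift3]; ring
    · simp [T, shift3, Z.w_add]; ring
  rw [this]; rfl

theorem T_zero (f : R3) : Z.T 0 f = f := by
  have : Z.T 0 = AlgHom.id ℂ R3 := by
    apply MvPolynomial.algHom_ext
    intro i
    fin_cases i <;> simp [T, shift3, Z.w_zero]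
  rw [this]; rfl

theorem T_neg_T (g : G) (f : R3) : Z.T (-g) (Z.T g f) = f := by
  rw [← T_add, neg_add_cancel, T_zero]

theorem T_T_neg (g : G) (f : R3) : Z.T g (Z.T (-g) f) = f := by
  rw [← T_add, add_neg_cancel, T_zero]

/-- `T g` as a ring automorphism. -/
noncomputable def Te (g : G) : R3 ≃+* R3 :=
  { (Z.T g : R3 →+* R3) with
    invFun := Z.T (-g)
    left_inv := Z.T_neg_T g
    right_inv := Z.T_T_neg g }

theorem Te_apply (g : G) (f : R3) : Z.Te g f = Z.T g f := rfl

theorem eval_T (g h : G) (f : R3) : eval (Z.pt h) (Z.T g f) = eval (Z.pt (g + h)) f := by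
  rw [← coe_aeval_eq_eval, ← coe_aeval_eq_eval]
  simp only [RingHom.coe_coe]
  unfold T
  rw [aeval_shift3]
  congr 2
  ext i; fin_cases i
  · simp [pt]; ring
  · simp [pt]; ring
  · simp [pt, Z.w_add]

theorem T_X2 (g : G) : Z.T g (X 2) = C (Z.w g) * X 2 := by simp [T, shift3]
theorem T_X0 (g : G) : Z.T g (X 0) = X 0 + C (Z.u g) := by simp [T, shift3]
theorem T_X1 (g : G) : Z.T g (X 1) = X 1 + C (Z.v g) := by simp [T, shift3]
theorem T_C (g : G) (c : ℂ) : Z.T g (C c) = C c := by simp [T, shift3]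

theorem T_mem (g : G) {p q : ℕ} {f : R3} (hf : f ∈ Fil p q) : Z.T g f ∈ Fil p q :=
  shift3_mem_Fil _ _ _ hf

theorem T_dvd (g : G) (p q : R3) : Z.T g p ∣ q ↔ p ∣ Z.T (-g) q := by
  constructor
  · intro h
    have := map_dvd (Z.T (-g)) h
    rwa [T_neg_T] at this
  · intro h
    have := map_dvd (Z.T g) h
    rwa [T_T_neg] at this

theorem not_unit_lin (a c s : ℂ) (hac : a ≠ 0 ∨ c ≠ 0) :
    ¬ IsUnit (C c * X 0 - C a * X 1 - C s : R3) := by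
  intro h
  rw [MvPolynomial.isUnit_iff_eq_C_of_isReduced] at h
  obtain ⟨r, hr, h⟩ := h
  have e : ∀ p : Fin 3 → ℂ, c * p 0 - a * p 1 - s = r := by
    intro p
    have := congrArg (eval p) h
    simpa using this
  have h0 := e ![0, 0, 0]
  have h1 := e ![1, 0, 0]
  have h2 := e ![0, 1, 0]
  simp at h0 h1 h2
  rcases hac with h' | h'
  · apply h'; linear_combination h0 - h2
  · apply h'; linear_combination h1 - h0

/-- First section: an irreducible factor `q` of `P` fails to divide some translate of `P`. Otherwise
the many translates of `q` all divide `P`; if few of them are distinct, `q` is stable under a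
translation, hence a plane by `lemS`, and planes have many distinct translates by `hND`. -/
theorem step1 (K L : ℕ) (S S' : Finset G) (hS' : S' ⊆ S)
    (hinj : ∀ σ ∈ S, ∀ τ ∈ S, σ ≠ τ → Z.u (τ - σ) ≠ 0 ∨ Z.v (τ - σ) ≠ 0)
    (hcard : K + L < S'.card) (hw : Set.InjOn Z.w S')
    (hND : ∀ a c : ℂ, (a ≠ 0 ∨ c ≠ 0) → (∃ δ, Z.u δ = a ∧ Z.v δ = c) →
      K + L < (S.image (fun σ => c * Z.u σ - a * Z.v σ)).card)
    (P : R3) (hP : P ≠ 0) (hPF : P ∈ Fil K L) (hX : ¬ X 2 ∣ P) (q : R3) (hq : Irreducible q)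
    (hqP : q ∣ P) : ∃ σ ∈ S, ¬ q ∣ Z.T σ P := by
  classical
  by_contra hcon
  push Not at hcon
  have hdeg := Fil_totalDegree hPF
  have hdvd : ∀ σ ∈ S, Z.T (-σ) q ∣ P := by
    intro σ hσ
    rw [T_dvd, neg_neg]; exact hcon σ hσ
  have hirr : ∀ σ, Irreducible (Z.T σ q) := by
    intro σ
    rw [← Te_apply]
    exact (MulEquiv.irreducible_iff (Z.Te σ)).mpr hq
  by_cases hA : ∃ σ ∈ S, ∃ τ ∈ S, Z.w σ ≠ Z.w τ ∧ Associated (Z.T (-σ) q) (Z.T (-τ) q)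
  · obtain ⟨σ, hσ, τ, hτ, hwne, hass⟩ := hA
    have hne : σ ≠ τ := fun h => hwne (by rw [h])
    have h1 : q ∣ Z.T (τ - σ) q := by
      have h3 := map_dvd (Z.T τ) hass.symm.dvd
      rw [T_T_neg, ← T_add, ← sub_eq_add_neg] at h3
      exact h3
    have hw1 : Z.w (τ - σ) ≠ 1 := by
      intro h
      have := Z.w_add (τ - σ) σ
      rw [sub_add_cancel, h, one_mul] at this
      exact hwne this.symm
    have hqp : Prime q := hq.prime
    have hprime : (Ideal.span {q}).IsPrime := (Ideal.span_singleton_prime hq.ne_zero).mpr hqp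
    have hac := hinj σ hσ τ hτ hne
    obtain ⟨s0, hs0⟩ := lemS (Ideal.span {q}) (by
        intro h
        rw [Ideal.mem_span_singleton] at h
        have : Associated q (X 2) := hq.associated_of_dvd (X_prime (R := ℂ) (i := (2 : Fin 3))).irreducible h
        exact hX (this.symm.dvd.trans hqP)) (Z.u (τ - σ)) (Z.v (τ - σ)) (Z.w (τ - σ)) hac
      (Z.w_inj _ hw1) (by
        intro f hf
        rw [Ideal.mem_span_singleton] at *
        exact h1.trans (map_dvd (Z.T (τ - σ)) hf))
    set a := Z.u (τ - σ)
    set c := Z.v (τ - σ)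
    set ℓ : R3 := C c * X 0 - C a * X 1 - C s0 with hℓ
    have hℓq : ℓ ∣ q := hs0 q (Ideal.mem_span_singleton_self q)
    have hℓass : Associated ℓ q :=
      (hq.dvd_iff.mp hℓq).resolve_left (not_unit_lin a c s0 hac) |>.symm
    have hTℓ : ∀ ρ, Z.T (-ρ) ℓ = ℓ - C (c * Z.u ρ - a * Z.v ρ) := by
      intro ρ
      simp only [hℓ, map_sub, map_mul, T_C, T_X0, T_X1, map_neg]
      ring
    obtain ⟨S1, hS1, hS1im, hS1inj⟩ := exists_injOn_subset S
      (fun σ => c * Z.u σ - a * Z.v σ)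
    have hc1 : S1.card = (S.image (fun σ => c * Z.u σ - a * Z.v σ)).card := by
      rw [← hS1im, Finset.card_image_of_injOn hS1inj]
    have := prime_count S1 (fun σ => Z.T (-σ) q) P hP (fun i _ => hirr _)
      (fun i hi => hdvd i (hS1 hi)) (by
        intro i hi j hj hij hass'
        have h2 : Associated (Z.T (-i) ℓ) (Z.T (-j) ℓ) :=
          ((hℓass.map (Z.T (-i))).trans hass').trans (hℓass.map (Z.T (-j))).symm
        have h3 := dvd_sub h2.dvd (dvd_refl (Z.T (-i) ℓ))
        have hval : c * Z.u i - a * Z.v i ≠ c * Z.u j - a * Z.v j := fun h => hij (hS1inj hi hj h)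
        have h4 : Z.T (-j) ℓ - Z.T (-i) ℓ = C ((c * Z.u i - a * Z.v i) - (c * Z.u j - a * Z.v j)) := by
          rw [hTℓ, hTℓ]; simp only [map_sub]; ring
        rw [h4] at h3
        have h5 : IsUnit (Z.T (-i) ℓ) := isUnit_of_dvd_unit h3
          ((isUnit_iff_ne_zero.mpr (sub_ne_zero.mpr hval)).map C)
        exact (hirr (-i)).not_isUnit ((hℓass.map (Z.T (-i))).isUnit h5))
    have h6 := hND a c hac ⟨_, rfl, rfl⟩
    omega
  · push Not at hA
    have := prime_count S' (fun σ => Z.T (-σ) q) P hP (fun i _ => hirr _)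
      (fun i hi => hdvd i (hS' hi)) (by
        intro i hi j hj hij
        exact hA i (hS' hi) j (hS' hj) (fun h => hij (hw hi hj h)))
    omega

/-- Some combination of the translates of `P` is coprime to `P`. -/
theorem step1' (K L : ℕ) (S S' : Finset G) (hS' : S' ⊆ S)
    (hinj : ∀ σ ∈ S, ∀ τ ∈ S, σ ≠ τ → Z.u (τ - σ) ≠ 0 ∨ Z.v (τ - σ) ≠ 0)
    (hcard : K + L < S'.card) (hw : Set.InjOn Z.w S')
    (hND : ∀ a c : ℂ, (a ≠ 0 ∨ c ≠ 0) → (∃ δ, Z.u δ = a ∧ Z.v δ = c) →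
      K + L < (S.image (fun σ => c * Z.u σ - a * Z.v σ)).card)
    (P : R3) (hP : P ≠ 0) (hPF : P ∈ Fil K L) (hX : ¬ X 2 ∣ P) :
    ∃ Q ∈ Submodule.span ℂ ((fun σ => Z.T σ P) '' (S : Set G)), IsRelPrime P Q := by
  classical
  obtain ⟨Q, hQ, hQq⟩ := avoid (UniqueFactorizationMonoid.factors P).toFinset
    (Submodule.span ℂ ((fun σ => Z.T σ P) '' (S : Set G)))
    (fun q => (Ideal.span {q}).restrictScalars ℂ) (by
      intro q hq hle
      rw [Multiset.mem_toFinset] at hq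
      obtain ⟨σ, hσ, h⟩ := Z.step1 K L S S' hS' hinj hcard hw hND P hP hPF hX q
        (UniqueFactorizationMonoid.irreducible_of_factor q hq)
        (UniqueFactorizationMonoid.dvd_of_mem_factors hq)
      apply h
      have := hle (Submodule.subset_span ⟨σ, hσ, rfl⟩)
      exact Ideal.mem_span_singleton.mp this)
  refine ⟨Q, hQ, ?_⟩
  rw [UniqueFactorizationMonoid.isRelPrime_iff_no_prime_factors hP]
  intro d hdP hdQ hd
  obtain ⟨q, hq, hdq⟩ := UniqueFactorizationMonoid.exists_mem_factors_of_dvd hP hd.irreducible hdP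
  exact hQq q (Multiset.mem_toFinset.mpr hq) (Ideal.mem_span_singleton.mpr (hdq.symm.dvd.trans hdQ))

end TransData
end

/-! ### The zero estimate in three variables -/

section
open MvPolynomial

namespace TransData
variable {G : Type*} [AddCommGroup G] (Z : TransData G)

theorem T_coord (g : G) (i : Fin 3) : ∃ r s : ℂ, r ≠ 0 ∧ Z.T g (X i) = C r * X i + C s := by
  fin_cases i
  · exact ⟨1, Z.u g, one_ne_zero, by simp [T_X0]⟩
  · exact ⟨1, Z.v g, one_ne_zero, by simp [T_X1]⟩
  · exact ⟨Z.w g, 0, Z.w_ne g, by simp [T_X2]⟩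

theorem no_root_comap (𝔭 : Ideal R3) (g : G) (i : Fin 3) (h : ∀ c : ℂ, X i - C c ∉ 𝔭) (c : ℂ) :
    X i - C c ∉ 𝔭.comap (Z.T g) := by
  intro hm
  rw [Ideal.mem_comap, map_sub, T_C] at hm
  obtain ⟨r, s, hr, he⟩ := Z.T_coord g i
  rw [he] at hm
  apply h ((c - s) / r)
  have : (X i - C ((c - s) / r) : R3) = C r⁻¹ * (C r * X i + C s - C c) := by
    have e1 : (C r⁻¹ * C r : R3) = 1 := by rw [← C_mul, inv_mul_cancel₀ hr, C_1]
    have e2 : (C ((c - s) / r) : R3) = C r⁻¹ * (C c - C s) := by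
      rw [← C_sub, ← C_mul]; congr 1; field_simp
    rw [e2]
    linear_combination (-X i) * e1
  rw [this]
  exact Ideal.mul_mem_left _ _ hm

/-- Second section: some combination `p` of the translates of `P` and `Q` is regular modulo the
saturation of `(P, Q)`. Otherwise all these translates lie in one associated prime `𝔭`, so the many
translates of `𝔭` all contain `(P, Q)`, against `hilbert_bound`. -/
theorem step2 (K L : ℕ) (hL : 1 ≤ L) (hLK : L ≤ K) (S S' : Finset G) (hS' : S' ⊆ S)
    (hinj : ∀ σ ∈ S, ∀ τ ∈ S, σ ≠ τ → Z.u (τ - σ) ≠ 0 ∨ Z.v (τ - σ) ≠ 0)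
    (hw : Set.InjOn Z.w S')
    (hc : 3 * K ^ 2 * L < S.card * L) (hc' : 3 * K ^ 2 * L < S'.card * K)
    (P Q : R3) (hP : P ≠ 0) (hQ : Q ≠ 0) (hPF : P ∈ Fil K L) (hQF : Q ∈ Fil K L)
    (hrel : IsRelPrime P Q) :
    ∃ p ∈ Submodule.span ℂ ((fun σ => Z.T σ P) '' (S : Set G) ∪ (fun σ => Z.T σ Q) '' (S : Set G)),
      ∀ h, p * h ∈ satur (Ideal.span {P, Q}) → h ∈ satur (Ideal.span {P, Q}) := by
  classical
  rcases regular_or_assoc (satur (Ideal.span {P, Q})) (Submodule.span ℂ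
    ((fun σ => Z.T σ P) '' (S : Set G) ∪ (fun σ => Z.T σ Q) '' (S : Set G))) with h | h
  · exact h
  exfalso
  obtain ⟨𝔭, hpr, hex, hI, hWp⟩ := h
  obtain ⟨hX2, hnopt⟩ := assoc_no_point P Q hQ hrel 𝔭 hex
  have hK : 1 ≤ K := hL.trans hLK
  -- Each translate of `𝔭` by an element of `S` is a prime containing the saturation of `(P, Q)`.
  let 𝔮 : G → Ideal R3 := fun σ => 𝔭.comap (Z.T σ)
  have h𝔮pr : ∀ σ, (𝔮 σ).IsPrime := fun σ => Ideal.comap_isPrime _ _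
  have h𝔮X : ∀ σ, X 2 ∉ 𝔮 σ := by
    intro σ h
    rw [Ideal.mem_comap, T_X2] at h
    rcases hpr.mem_or_mem h with h | h
    · exact hpr.ne_top (Ideal.eq_top_of_isUnit_mem _ h ((isUnit_iff_ne_zero.mpr (Z.w_ne σ)).map C))
    · exact hX2 h
  have h𝔮I : ∀ σ ∈ S, satur (Ideal.span {P, Q}) ≤ 𝔮 σ := by
    intro σ hσ
    have := h𝔮pr σ
    apply satur_le_of_le _ (h𝔮X σ)
    rw [Ideal.span_le]
    rintro f (rfl | rfl)
    · exact hWp _ (Submodule.subset_span (Or.inl ⟨σ, hσ, rfl⟩))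
    · exact hWp _ (Submodule.subset_span (Or.inr ⟨σ, hσ, rfl⟩))
  have hcmp : ∀ σ τ, 𝔮 σ ≤ 𝔮 τ → ∀ f ∈ 𝔭, Z.T (τ - σ) f ∈ 𝔭 := by
    intro σ τ hle f hf
    have h1 : Z.T (-σ) f ∈ 𝔮 σ := by
      rw [Ideal.mem_comap, T_T_neg]; exact hf
    have h2 := hle h1
    rw [Ideal.mem_comap, ← T_add, ← sub_eq_add_neg] at h2
    exact h2
  have hcmpw : ∀ σ ∈ S, ∀ τ ∈ S, σ ≠ τ → 𝔮 σ ≤ 𝔮 τ → Z.w σ = Z.w τ := by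
    intro σ hσ τ hτ hne hle
    by_contra hwne
    have hw1 : Z.w (τ - σ) ≠ 1 := by
      intro h
      have := Z.w_add (τ - σ) σ
      rw [sub_add_cancel, h, one_mul] at this
      exact hwne this.symm
    obtain ⟨s0, hs0⟩ := lemS 𝔭 hX2 _ _ _ (hinj σ hσ τ hτ hne) (Z.w_inj _ hw1) (hcmp σ τ hle)
    have hPI : P ∈ 𝔭 := hI (le_satur _ (Ideal.subset_span (by simp)))
    have hQI : Q ∈ 𝔭 := hI (le_satur _ (Ideal.subset_span (by simp)))
    exact not_unit_lin _ _ _ (hinj σ hσ τ hτ hne) (hrel (hs0 P hPI) (hs0 Q hQI))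
  -- `R` incomparable translates, each with a transcendental coordinate `x`, contribute `|R| ℓ e`
  -- to the Hilbert function of `(P, Q)`.
  have count : ∀ (R : Finset G) (ℓ : ℕ) (x : R3), R ⊆ S →
      (∀ σ ∈ R, ∀ τ ∈ R, σ ≠ τ → ¬ 𝔮 σ ≤ 𝔮 τ) → (∀ σ, ∀ c : ℂ, x - C c ∉ 𝔮 σ) →
      (∀ D i, i ≤ ℓ * D → x ^ i ∈ Fil (K * D) (L * D)) → R.card * ℓ ≤ 3 * K ^ 2 * L := by
    intro R ℓ x hRS hinc hroot hxF
    obtain ⟨c, hcc⟩ := (filt K L hK hL).H_primes (ι := R) (satur (Ideal.span {P, Q}))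
      (fun σ => 𝔮 σ) (fun σ => h𝔮pr σ) (fun σ => h𝔮I σ (hRS σ.2))
      (fun σ τ hne => hinc τ τ.2 σ σ.2 (fun h => hne (Subtype.ext h.symm)))
    refine hilbert_bound K L hK hL P Q _ hP hPF hQF hrel (le_satur _) _ c ?_
    intro e
    rw [add_comm]
    refine le_trans ?_ (hcc e)
    have : ∀ σ : R, ℓ * e ≤ (filt K L hK hL).H (𝔮 σ) e := by
      intro σ
      have := h𝔮pr σ
      have h1 := (filt K L hK hL).H_transc (𝔮 σ) x (transc_of_no_root (𝔮 σ) x (hroot σ)) e (ℓ * e)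
        (fun i hi => hxF e i hi)
      omega
    calc R.card * ℓ * e = ∑ _σ : R, ℓ * e := by simp [mul_assoc]
      _ ≤ _ := Finset.sum_le_sum fun σ _ => this σ
  have hxF : ∀ i : Fin 3, i ≠ 2 → ∀ D k, k ≤ K * D → (X i : R3) ^ k ∈ Fil (K * D) (L * D) := by
    intro i hi D k hk
    have := Fil_pow (Fil_X i) k
    simp only [hi, if_false] at this
    exact Fil_mono (by omega) (by omega) this
  have hxF2 : ∀ D k, k ≤ L * D → (X 2 : R3) ^ k ∈ Fil (K * D) (L * D) := by
    intro D k hk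
    have := Fil_pow (Fil_X 2) k
    exact Fil_mono (by simp) (by simpa using hk) this
  by_cases hcase : ∃ σ ∈ S, ∃ τ ∈ S, σ ≠ τ ∧ 𝔮 σ ≤ 𝔮 τ
  · obtain ⟨σ, hσ, τ, hτ, hne, hle⟩ := hcase
    have hst := hcmp σ τ hle
    have hcoord : ∃ i : Fin 3, i ≠ 2 ∧ ∀ c : ℂ, X i - C c ∉ 𝔭 := by
      by_contra hcon
      push Not at hcon
      obtain ⟨u0, hu0⟩ := hcon 0 (by decide)
      obtain ⟨v0, hv0⟩ := hcon 1 (by decide)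
      have h1 := 𝔭.sub_mem (hst _ hu0) hu0
      have h2 := 𝔭.sub_mem (hst _ hv0) hv0
      rw [map_sub, T_X0, T_C] at h1
      rw [map_sub, T_X1, T_C] at h2
      have e1 : (X 0 + C (Z.u (τ - σ)) - C u0 - (X 0 - C u0) : R3) = C (Z.u (τ - σ)) := by ring
      have e2 : (X 1 + C (Z.v (τ - σ)) - C v0 - (X 1 - C v0) : R3) = C (Z.v (τ - σ)) := by ring
      rw [e1] at h1
      rw [e2] at h2
      rcases hinj σ hσ τ hτ hne with h | h
      · exact hpr.ne_top (Ideal.eq_top_of_isUnit_mem _ h1 ((isUnit_iff_ne_zero.mpr h).map C))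
      · exact hpr.ne_top (Ideal.eq_top_of_isUnit_mem _ h2 ((isUnit_iff_ne_zero.mpr h).map C))
    obtain ⟨i, hi, hroot⟩ := hcoord
    have := count S' K (X i) hS' (by
      intro σ hσ τ hτ hne hle
      exact hne (hw hσ hτ (hcmpw σ (hS' hσ) τ (hS' hτ) hne hle)))
      (fun σ c => Z.no_root_comap 𝔭 σ i hroot c) (hxF i hi)
    omega
  · push Not at hcase
    have hcoord : ∃ i : Fin 3, ∀ c : ℂ, X i - C c ∉ 𝔭 := by
      by_contra hcon
      push Not at hcon
      choose c hc using hcon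
      exact hnopt ⟨c, hc⟩
    obtain ⟨i, hroot⟩ := hcoord
    have := count S L (X i) subset_rfl (fun σ hσ τ hτ hne => hcase σ hσ τ hτ hne)
      (fun σ c => Z.no_root_comap 𝔭 σ i hroot c) (by
        intro D k hk
        by_cases hi : i = 2
        · subst hi; exact hxF2 D k hk
        · exact hxF i hi D k (hk.trans (Nat.mul_le_mul_right _ hLK)))
    omega

/-- Third section: `P, Q, p` have at most `3 K² L` common zeros among the orbit points. -/
theorem step3 (K L : ℕ) (hL : 1 ≤ L) (hLK : L ≤ K) (S : Finset G)
    (hinj : ∀ σ ∈ S, ∀ τ ∈ S, σ ≠ τ → Z.u (τ - σ) ≠ 0 ∨ Z.v (τ - σ) ≠ 0)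
    (P Q p : R3) (hP : P ≠ 0) (hPF : P ∈ Fil K L) (hQF : Q ∈ Fil K L) (hpF : p ∈ Fil K L)
    (hrel : IsRelPrime P Q)
    (hreg : ∀ h, p * h ∈ satur (Ideal.span {P, Q}) → h ∈ satur (Ideal.span {P, Q}))
    (hPv : ∀ σ ∈ S, eval (Z.pt σ) P = 0) (hQv : ∀ σ ∈ S, eval (Z.pt σ) Q = 0)
    (hpv : ∀ σ ∈ S, eval (Z.pt σ) p = 0) : S.card ≤ 3 * K ^ 2 * L := by
  classical
  have hK : 1 ≤ K := hL.trans hLK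
  set F := filt K L hK hL with hF
  have hF1 : F.F 1 = Fil K L := by simp [hF, filt]
  set I := satur (Ideal.span {P, Q}) with hIdef
  have c3 := F.H_chain I p (by rw [hF1]; exact hpF) hreg
  let 𝔪 : G → Ideal R3 := fun σ => RingHom.ker (eval (Z.pt σ))
  have h𝔪 : ∀ σ, (𝔪 σ).IsPrime := fun σ => RingHom.ker_isPrime _
  have hle : ∀ σ ∈ S, I ⊔ Ideal.span {p} ≤ 𝔪 σ := by
    intro σ hσ
    apply sup_le
    · have := h𝔪 σ
      apply satur_le_of_le
      · rw [Ideal.span_le]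
        rintro f (rfl | rfl)
        · exact hPv σ hσ
        · exact hQv σ hσ
      · intro h
        rw [RingHom.mem_ker, eval_X] at h
        exact Z.w_ne σ h
    · rw [Ideal.span_le]
      rintro f rfl
      exact hpv σ hσ
  obtain ⟨c, hc⟩ := F.H_primes (ι := S) (I ⊔ Ideal.span {p}) (fun σ => 𝔪 σ) (fun σ => h𝔪 σ)
    (fun σ => hle σ σ.2) (by
      intro σ τ hne hle'
      have h0 : (X 0 - C (Z.u τ) : R3) ∈ 𝔪 τ := by simp [𝔪, RingHom.mem_ker, pt]
      have h1 : (X 1 - C (Z.v τ) : R3) ∈ 𝔪 τ := by simp [𝔪, RingHom.mem_ker, pt]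
      have h0' := hle' h0
      have h1' := hle' h1
      simp only [𝔪, RingHom.mem_ker, map_sub, eval_X, eval_C, pt, Matrix.cons_val_zero,
        Matrix.cons_val_one] at h0' h1'
      rcases hinj τ τ.2 σ σ.2 (fun h => hne (Subtype.ext h.symm)) with h | h
      · exact h (by rw [map_sub]; exact h0')
      · exact h (by rw [map_sub]; exact h1'))
  choose d hd using fun σ : S => F.H_pos (𝔪 σ) (h𝔪 σ).ne_top
  obtain ⟨d0, hd0⟩ : ∃ d0, ∀ σ, d σ ≤ d0 :=
    ⟨Finset.univ.sup d, fun i => Finset.le_sup (Finset.mem_univ i)⟩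
  have hJ : ∀ e, S.card * Nat.choose e 0 ≤ F.H (I ⊔ Ideal.span {p}) (d0 + c + e) := by
    intro e
    have h1 := hc (d0 + e)
    have h2 : ∀ σ : S, 1 ≤ F.H (𝔪 σ) (d0 + e) := fun σ => hd σ _ ((hd0 σ).trans (by omega))
    have h3 : ∑ _σ : S, 1 ≤ ∑ σ : S, F.H (𝔪 σ) (d0 + e) := Finset.sum_le_sum fun σ _ => h2 σ
    simp only [Finset.sum_const, Finset.card_univ, Fintype.card_coe, smul_eq_mul, mul_one] at h3
    have : d0 + c + e = d0 + e + c := by ring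
    rw [this, Nat.choose_zero_right, mul_one]
    exact h3.trans h1
  have g := growth_step S.card (d0 + c) 0 (F.H I) (F.H (I ⊔ Ideal.span {p})) c3 hJ
  refine hilbert_bound K L hK hL P Q I hP hPF hQF hrel (le_satur _) _ (d0 + c) ?_
  intro e
  have := g e
  simpa using this

/-- The zero estimate: a polynomial of bidegree `(K, L)` vanishing on `S1 + S2 + S3` is zero, provided
the three sets are large enough to make three successive sections proper. -/
theorem zero_estimate (K L : ℕ) (hL : 1 ≤ L) (hLK : L ≤ K) (S1 S1' S2 S2' S3 : Finset G)
    (hS1' : S1' ⊆ S1) (hS2' : S2' ⊆ S2) (h01 : 0 ∈ S1) (h02 : 0 ∈ S2)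
    (hinj1 : ∀ σ ∈ S1, ∀ τ ∈ S1, σ ≠ τ → Z.u (τ - σ) ≠ 0 ∨ Z.v (τ - σ) ≠ 0)
    (hinj2 : ∀ σ ∈ S2, ∀ τ ∈ S2, σ ≠ τ → Z.u (τ - σ) ≠ 0 ∨ Z.v (τ - σ) ≠ 0)
    (hinj3 : ∀ σ ∈ S3, ∀ τ ∈ S3, σ ≠ τ → Z.u (τ - σ) ≠ 0 ∨ Z.v (τ - σ) ≠ 0)
    (hw1 : Set.InjOn Z.w S1') (hw2 : Set.InjOn Z.w S2')
    (hc1 : K + L < S1'.card)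
    (hND : ∀ a c : ℂ, (a ≠ 0 ∨ c ≠ 0) → (∃ δ, Z.u δ = a ∧ Z.v δ = c) →
      K + L < (S1.image (fun σ => c * Z.u σ - a * Z.v σ)).card)
    (hc2 : 3 * K ^ 2 * L < S2.card * L) (hc2' : 3 * K ^ 2 * L < S2'.card * K)
    (hc3 : 3 * K ^ 2 * L < S3.card)
    (P : R3) (hPF : P ∈ Fil K L)
    (hvan : ∀ σ1 ∈ S1, ∀ σ2 ∈ S2, ∀ σ3 ∈ S3, eval (Z.pt (σ1 + σ2 + σ3)) P = 0) : P = 0 := by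
  classical
  by_contra hP
  -- minimality of the total degree ensures that `X 2` does not divide `P`
  induction hn : P.totalDegree using Nat.strong_induction_on generalizing P with
  | _ n ih =>
  by_cases hX : X 2 ∣ P
  · obtain ⟨P1, rfl⟩ := hX
    have hP1 : P1 ≠ 0 := right_ne_zero_of_mul hP
    refine ih P1.totalDegree ?_ P1 ?_ ?_ hP1 rfl
    · rw [← hn, totalDegree_mul_of_isDomain (X_ne_zero _) hP1, totalDegree_X]
      omega
    · intro m hm
      have h1 : m + Finsupp.single 2 1 ∈ (X 2 * P1).support := by
        rw [mul_comm, support_mul_X]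
        exact Finset.mem_map.mpr ⟨m, Finset.mem_coe.mp hm, rfl⟩
      have := hPF h1
      simp only [Set.mem_ofPred_eq, Finsupp.add_apply] at this ⊢
      simp at this
      omega
    · intro σ1 h1 σ2 h2 σ3 h3
      have := hvan σ1 h1 σ2 h2 σ3 h3
      rw [map_mul, eval_X] at this
      exact (mul_eq_zero.mp this).resolve_left (Z.w_ne _)
  · obtain ⟨Q, hQs, hrel⟩ := Z.step1' K L S1 S1' hS1' hinj1 hc1 hw1 hND P hP hPF hX
    have hQF : Q ∈ Fil K L := by
      have : Submodule.span ℂ ((fun σ => Z.T σ P) '' (S1 : Set G)) ≤ Fil K L := by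
        rw [Submodule.span_le]
        rintro _ ⟨σ, _, rfl⟩
        exact Z.T_mem σ hPF
      exact this hQs
    have hPv : ∀ σ2 ∈ S2, ∀ σ3 ∈ S3, eval (Z.pt (σ2 + σ3)) P = 0 := by
      intro σ2 h2 σ3 h3
      have := hvan 0 h01 σ2 h2 σ3 h3
      rwa [zero_add] at this
    have hQv : ∀ σ2 ∈ S2, ∀ σ3 ∈ S3, eval (Z.pt (σ2 + σ3)) Q = 0 := by
      intro σ2 h2 σ3 h3
      have : Submodule.span ℂ ((fun σ => Z.T σ P) '' (S1 : Set G)) ≤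
          LinearMap.ker (aeval (Z.pt (σ2 + σ3)) : R3 →ₐ[ℂ] ℂ).toLinearMap := by
        rw [Submodule.span_le]
        rintro _ ⟨σ, hσ, rfl⟩
        have h := hvan σ hσ σ2 h2 σ3 h3
        rw [add_assoc, ← eval_T] at h
        exact h
      exact this hQs
    by_cases hQ : Q = 0
    · -- then `P` is a unit, which has no zeros
      subst hQ
      have hu : IsUnit P := hrel dvd_rfl (dvd_zero _)
      have hne : S3.Nonempty := Finset.card_pos.mp (by omega)
      obtain ⟨σ3, h3⟩ := hne
      have := hPv 0 h02 σ3 h3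
      exact (hu.map (eval (Z.pt (0 + σ3)))).ne_zero this
    · obtain ⟨p, hps, hreg⟩ := Z.step2 K L hL hLK S2 S2' hS2' hinj2 hw2 hc2 hc2' P Q hP hQ hPF hQF hrel
      have hpF : p ∈ Fil K L := by
        have : Submodule.span ℂ ((fun σ => Z.T σ P) '' (S2 : Set G) ∪ (fun σ => Z.T σ Q) '' (S2 : Set G))
            ≤ Fil K L := by
          rw [Submodule.span_le]
          rintro _ (⟨σ, _, rfl⟩ | ⟨σ, _, rfl⟩)
          · exact Z.T_mem σ hPF
          · exact Z.T_mem σ hQF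
        exact this hps
      have hpv : ∀ σ3 ∈ S3, eval (Z.pt σ3) p = 0 := by
        intro σ3 h3
        have : Submodule.span ℂ ((fun σ => Z.T σ P) '' (S2 : Set G) ∪ (fun σ => Z.T σ Q) '' (S2 : Set G))
            ≤ LinearMap.ker (aeval (Z.pt σ3) : R3 →ₐ[ℂ] ℂ).toLinearMap := by
          rw [Submodule.span_le]
          rintro _ (⟨σ, hσ, rfl⟩ | ⟨σ, hσ, rfl⟩)
          · have h := hPv σ hσ σ3 h3
            rw [← eval_T] at h
            exact h
          · have h := hQv σ hσ σ3 h3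
            rw [← eval_T] at h
            exact h
        exact this hps
      have := Z.step3 K L hL hLK S3 hinj3 P Q p hP hPF hQF hpF hrel hreg
        (fun σ h => by simpa using hPv 0 h02 σ h) (fun σ h => by simpa using hQv 0 h02 σ h) hpv
      omega

end TransData
end

/-! ### Box principle and polynomial representations -/

/-- Dirichlet's box principle for `nc` real linear forms in `N ≥ 4 nc` unknowns: the exponent `4`
buys forms as small as `M⁻³` relative to the trivial bound. -/
theorem box_principle {ι c : Type*} [Fintype ι] [Fintype c] (X : c → ι → ℝ) (W : ℝ) (hW : 0 < W)
    (hX : ∀ k i, |X k i| ≤ W) (hc : 0 < Fintype.card c)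
    (hN : 4 * Fintype.card c ≤ Fintype.card ι) (M : ℕ) (hM : 1 ≤ M) :
    ∃ p : ι → ℤ, p ≠ 0 ∧ (∀ i, |p i| ≤ M) ∧
      ∀ k, |∑ i, X k i * p i| ≤ 4 * Fintype.card ι * W / (M : ℝ) ^ 3 := by
  classical
  set N := Fintype.card ι with hNdef
  have hN0 : 0 < N := by omega
  have hNr : (0 : ℝ) < N := by exact_mod_cast hN0
  have hMr : (1 : ℝ) ≤ M := by exact_mod_cast hM
  have hM0 : (0 : ℝ) < M := by linarith
  let f : (ι → Fin (M + 1)) → c → ℝ := fun p k => ∑ i, X k i * ((p i : ℕ) : ℝ)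
  have hf : ∀ p k, |f p k| ≤ N * W * M := by
    intro p k
    calc |f p k| ≤ ∑ i, |X k i * ((p i : ℕ) : ℝ)| := Finset.abs_sum_le_sum_abs _ _
      _ ≤ ∑ i : ι, W * M := by
          refine Finset.sum_le_sum fun i _ => ?_
          rw [abs_mul]
          have h1 : |((p i : ℕ) : ℝ)| ≤ M := by
            rw [abs_of_nonneg (by positivity)]
            exact_mod_cast Nat.lt_succ_iff.mp (p i).2
          exact mul_le_mul (hX k i) h1 (abs_nonneg _) hW.le
      _ = N * W * M := by simp [hNdef]; ring
  have hs0 : 0 < 2 * N * W * M := by positivity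
  let g : (ι → Fin (M + 1)) → c → ℝ := fun p k => (f p k + N * W * M) / (2 * N * W * M) * (M : ℝ) ^ 4
  have hg0 : ∀ p k, 0 ≤ g p k := by
    intro p k
    have := abs_le.mp (hf p k)
    have h2 : 0 ≤ f p k + N * W * M := by linarith [this.1]
    positivity
  have hg1 : ∀ p k, g p k ≤ (M : ℝ) ^ 4 := by
    intro p k
    have := abs_le.mp (hf p k)
    have h2 : (f p k + N * W * M) / (2 * N * W * M) ≤ 1 := by
      rw [div_le_one hs0]; linarith [this.2]
    exact mul_le_of_le_one_left (by positivity) h2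
  have hfl : ∀ p k, ⌊g p k⌋₊ < M ^ 4 + 1 := by
    intro p k
    rw [Nat.lt_succ_iff]
    have := Nat.floor_le_floor (hg1 p k)
    refine this.trans_eq ?_
    exact_mod_cast Nat.floor_natCast (R := ℝ) (M ^ 4)
  let h : (ι → Fin (M + 1)) → c → Fin (M ^ 4 + 1) := fun p k => ⟨⌊g p k⌋₊, hfl p k⟩
  have hcard : Fintype.card (c → Fin (M ^ 4 + 1)) < Fintype.card (ι → Fin (M + 1)) := by
    rw [Fintype.card_fun, Fintype.card_fun, Fintype.card_fin, Fintype.card_fin]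
    have h1 : M ^ 4 + 1 < (M + 1) ^ 4 := by
      ring_nf
      nlinarith [Nat.zero_le (M ^ 2), Nat.zero_le (M ^ 3)]
    calc (M ^ 4 + 1) ^ Fintype.card c < ((M + 1) ^ 4) ^ Fintype.card c :=
          Nat.pow_lt_pow_left h1 (by omega)
      _ = (M + 1) ^ (4 * Fintype.card c) := by rw [pow_mul]
      _ ≤ (M + 1) ^ N := Nat.pow_le_pow_right (by omega) hN
  obtain ⟨p1, p2, hne, heq⟩ := Fintype.exists_ne_map_eq_of_card_lt h hcard
  refine ⟨fun i => ((p1 i : ℕ) : ℤ) - ((p2 i : ℕ) : ℤ), ?_, ?_, ?_⟩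
  · intro h0
    apply hne
    funext i
    have := congrFun h0 i
    simp only [Pi.zero_apply] at this
    ext
    omega
  · intro i
    rw [abs_le]
    have h1 := (p1 i).2
    have h2 := (p2 i).2
    constructor <;> dsimp only <;> omega
  · intro k
    have h1 : ⌊g p1 k⌋₊ = ⌊g p2 k⌋₊ := by
      have := congrFun heq k
      simpa [h] using this
    have h2 : |g p1 k - g p2 k| ≤ 1 := by
      have a1 := Nat.floor_le (hg0 p1 k)
      have a2 := Nat.lt_floor_add_one (g p1 k)
      have a3 := Nat.floor_le (hg0 p2 k)
      have a4 := Nat.lt_floor_add_one (g p2 k)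
      rw [h1] at a1 a2
      rw [abs_le]; constructor <;> linarith
    have h3 : ∑ i, X k i * (((((p1 i : ℕ) : ℤ) - ((p2 i : ℕ) : ℤ) : ℤ)) : ℝ) = f p1 k - f p2 k := by
      simp only [f, ← Finset.sum_sub_distrib]
      refine Finset.sum_congr rfl fun i _ => ?_
      push_cast; ring
    rw [h3]
    have h4 : f p1 k - f p2 k = (g p1 k - g p2 k) * (2 * N * W / (M : ℝ) ^ 3) := by
      simp only [g]; field_simp; ring
    rw [h4, abs_mul, abs_of_pos (by positivity : 0 < 2 * N * W / (M : ℝ) ^ 3)]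
    calc |g p1 k - g p2 k| * (2 * N * W / (M : ℝ) ^ 3) ≤ 1 * (2 * N * W / (M : ℝ) ^ 3) := by gcongr
      _ ≤ 4 * N * W / (M : ℝ) ^ 3 := by
          rw [one_mul]; gcongr; norm_num

/-- `PolyRep p q a c W f`: on the points, `f` is a polynomial in the functions `p`, `q`, of partial
degrees at most `a`, `c`, whose coefficients have absolute sum at most `W`. -/
def PolyRep {P : Type*} (p q : P → ℝ) (a c : ℕ) (W : ℝ) (f : P → ℝ) : Prop :=
  ∃ x : ℕ → ℕ → ℝ,
    (∀ σ, f σ = ∑ k ∈ Finset.range (a + 1), ∑ j ∈ Finset.range (c + 1),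
      x k j * p σ ^ k * q σ ^ j) ∧
    ∑ k ∈ Finset.range (a + 1), ∑ j ∈ Finset.range (c + 1), |x k j| ≤ W

namespace PolyRep
variable {P : Type*} {p q : P → ℝ} {a c : ℕ} {W W' : ℝ} {f g : P → ℝ}

theorem monoW (h : PolyRep p q a c W f) (hW : W ≤ W') : PolyRep p q a c W' f := by
  obtain ⟨x, h1, h2⟩ := h
  exact ⟨x, h1, h2.trans hW⟩

theorem mono (h : PolyRep p q a c W f) {a' c' : ℕ} (ha : a ≤ a') (hc : c ≤ c') :
    PolyRep p q a' c' W f := by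
  obtain ⟨x, h1, h2⟩ := h
  have key : ∀ F : ℕ → ℕ → ℝ, ∑ k ∈ Finset.range (a' + 1), ∑ j ∈ Finset.range (c' + 1),
      (if k < a + 1 then if j < c + 1 then F k j else 0 else 0) =
      ∑ k ∈ Finset.range (a + 1), ∑ j ∈ Finset.range (c + 1), F k j := by
    intro F
    rw [← Finset.sum_subset (Finset.range_mono (by omega : a + 1 ≤ a' + 1))]
    · refine Finset.sum_congr rfl fun k hk => ?_
      rw [← Finset.sum_subset (Finset.range_mono (by omega : c + 1 ≤ c' + 1))]
      · refine Finset.sum_congr rfl fun j hj => ?_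
        rw [Finset.mem_range] at hk hj
        rw [if_pos hk, if_pos hj]
      · intro j _ hj
        rw [Finset.mem_range] at hj
        simp [hj]
    · intro k _ hk
      rw [Finset.mem_range] at hk
      simp [hk]
  refine ⟨fun k j => if k < a + 1 then if j < c + 1 then x k j else 0 else 0, ?_, ?_⟩
  · intro σ
    rw [h1 σ, ← key (fun k j => x k j * p σ ^ k * q σ ^ j)]
    refine Finset.sum_congr rfl fun k _ => Finset.sum_congr rfl fun j _ => ?_
    dsimp only; split_ifs <;> simp
  · rw [← key (fun k j => |x k j|)] at h2
    refine le_trans (le_of_eq ?_) h2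
    refine Finset.sum_congr rfl fun k _ => Finset.sum_congr rfl fun j _ => ?_
    dsimp only; split_ifs <;> simp

theorem add (hf : PolyRep p q a c W f) (hg : PolyRep p q a c W' g) :
    PolyRep p q a c (W + W') (fun σ => f σ + g σ) := by
  obtain ⟨x, h1, h2⟩ := hf
  obtain ⟨y, h3, h4⟩ := hg
  refine ⟨fun k j => x k j + y k j, ?_, ?_⟩
  · intro σ
    simp only [h1, h3, ← Finset.sum_add_distrib]
    refine Finset.sum_congr rfl fun k _ => Finset.sum_congr rfl fun j _ => ?_
    ring
  · refine le_trans ?_ (add_le_add h2 h4)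
    simp only [← Finset.sum_add_distrib]
    exact Finset.sum_le_sum fun k _ => Finset.sum_le_sum fun j _ => abs_add_le _ _

theorem smul (hf : PolyRep p q a c W f) (t : ℝ) :
    PolyRep p q a c (|t| * W) (fun σ => t * f σ) := by
  obtain ⟨x, h1, h2⟩ := hf
  refine ⟨fun k j => t * x k j, ?_, ?_⟩
  · intro σ
    simp only [h1, Finset.mul_sum]
    refine Finset.sum_congr rfl fun k _ => Finset.sum_congr rfl fun j _ => ?_
    ring
  · refine le_trans ?_ (mul_le_mul_of_nonneg_left h2 (abs_nonneg t))
    simp only [Finset.mul_sum, abs_mul, le_refl]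

theorem mul_p (hf : PolyRep p q a c W f) : PolyRep p q (a + 1) c W (fun σ => p σ * f σ) := by
  obtain ⟨x, h1, h2⟩ := hf
  refine ⟨fun k j => if k = 0 then 0 else x (k - 1) j, ?_, ?_⟩
  · intro σ
    rw [Finset.sum_range_succ']
    simp only [h1, Finset.mul_sum]
    simp
    refine Finset.sum_congr rfl fun k _ => Finset.sum_congr rfl fun j _ => ?_
    ring
  · rw [Finset.sum_range_succ']
    simpa using h2

theorem mul_q (hf : PolyRep p q a c W f) : PolyRep p q a (c + 1) W (fun σ => q σ * f σ) := by
  obtain ⟨x, h1, h2⟩ := hf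
  refine ⟨fun k j => if j = 0 then 0 else x k (j - 1), ?_, ?_⟩
  · intro σ
    simp only [h1, Finset.mul_sum]
    refine Finset.sum_congr rfl fun k _ => ?_
    rw [Finset.sum_range_succ' _ (c + 1)]
    simp only [Nat.add_eq_zero_iff, one_ne_zero, and_false, if_false, if_true, zero_mul, add_zero,
      Nat.add_sub_cancel]
    refine Finset.sum_congr rfl fun j _ => ?_
    ring
  · refine le_trans (le_of_eq ?_) h2
    refine Finset.sum_congr rfl fun k _ => ?_
    rw [Finset.sum_range_succ']
    simp

theorem one : PolyRep p q 0 0 1 (fun _ => 1) := ⟨fun _ _ => 1, by simp, by simp⟩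

theorem nonneg (hf : PolyRep p q a c W f) : 0 ≤ W := by
  obtain ⟨x, h1, h2⟩ := hf
  exact le_trans (Finset.sum_nonneg fun k _ => Finset.sum_nonneg fun j _ => abs_nonneg _) h2

/-- Multiplication by a linear form in `p`, `q`. -/
theorem mul_lin (hf : PolyRep p q a c W f) (u : P → ℝ) (U1 U2 h : ℝ)
    (hu : ∀ σ, u σ = U1 * p σ + U2 * q σ) :
    PolyRep p q (a + 1) (c + 1) ((|U1| + |U2| + |h|) * W) (fun σ => (u σ - h) * f σ) := by
  have h1 := (hf.mul_p.smul U1).mono le_rfl (Nat.le_succ c)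
  have h2 := (hf.mul_q.smul U2).mono (Nat.le_succ a) le_rfl
  have h3 := (hf.smul (-h)).mono (Nat.le_succ a) (Nat.le_succ c)
  have h4 := (h1.add h2).add h3
  have e1 : (fun σ => (u σ - h) * f σ) =
      fun σ => U1 * (p σ * f σ) + U2 * (q σ * f σ) + -h * f σ := by
    funext σ; rw [hu]; ring
  rw [e1]
  refine h4.monoW (le_of_eq ?_)
  rw [abs_neg]; ring

theorem choose (hf : PolyRep p q a c W f) (u : P → ℕ) (U1 U2 : ℝ) (i : ℕ)
    (hu : ∀ σ, (u σ : ℝ) = U1 * p σ + U2 * q σ) :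
    PolyRep p q (a + i) (c + i) ((|U1| + |U2| + i) ^ i / i.factorial * W)
      (fun σ => (u σ).choose i * f σ) := by
  have key : ∀ t ≤ i, PolyRep p q (a + t) (c + t) ((|U1| + |U2| + i) ^ t * W)
      (fun σ => ((u σ).descFactorial t : ℝ) * f σ) := by
    intro t
    induction t with
    | zero => intro _; simpa using hf
    | succ t ih =>
      intro ht
      have h1 := (ih (by omega)).mul_lin (fun σ => (u σ : ℝ)) U1 U2 t hu
      have e1 : (fun σ => ((u σ).descFactorial (t + 1) : ℝ) * f σ) =
          fun σ => ((u σ : ℝ) - t) * (((u σ).descFactorial t : ℝ) * f σ) := by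
        funext σ
        rw [Nat.descFactorial_succ]
        rcases le_or_gt t (u σ) with h | h
        · rw [Nat.cast_mul, Nat.cast_sub h]; ring
        · rw [Nat.descFactorial_eq_zero_iff_lt.mpr h]; simp
      rw [e1]
      refine h1.monoW ?_
      rw [pow_succ, Nat.abs_cast]
      have h2 : (t : ℝ) ≤ i := by exact_mod_cast (by omega : t ≤ i)
      have h3 := hf.nonneg
      calc (|U1| + |U2| + t) * ((|U1| + |U2| + i) ^ t * W)
          ≤ (|U1| + |U2| + i) * ((|U1| + |U2| + i) ^ t * W) := by gcongr
        _ = _ := by ring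
  have h1 := (key i le_rfl).smul (1 / i.factorial : ℝ)
  have e1 : (fun σ => ((u σ).choose i : ℝ) * f σ) =
      fun σ => 1 / (i.factorial : ℝ) * (((u σ).descFactorial i : ℝ) * f σ) := by
    funext σ
    rw [Nat.choose_eq_descFactorial_div_factorial,
      Nat.cast_div (Nat.factorial_dvd_descFactorial _ _) (by positivity)]
    ring
  rw [e1]
  refine h1.monoW (le_of_eq ?_)
  rw [abs_of_pos (by positivity)]; ring

/-- Multiplication by a truncated exponential series in `ζ p`. -/
theorem mul_exp (hf : PolyRep p q a c W f) (ζ : ℝ) (κ : ℕ) :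
    PolyRep p q (a + κ) c (exp |ζ| * W)
      (fun σ => (∑ k ∈ Finset.range κ, (ζ * p σ) ^ k / k.factorial) * f σ) := by
  have key : PolyRep p q (a + κ) c ((∑ k ∈ Finset.range κ, |ζ| ^ k / k.factorial) * W)
      (fun σ => (∑ k ∈ Finset.range κ, (ζ * p σ) ^ k / k.factorial) * f σ) := by
    induction κ with
    | zero => simpa using hf.smul 0
    | succ t ih =>
      have hp : PolyRep p q (a + t) c W (fun σ => p σ ^ t * f σ) := by
        clear ih
        induction t with
        | zero => simpa using hf
        | succ t ih =>
          have := ih.mul_p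
          simpa [pow_succ', mul_assoc, ← add_assoc] using this
      have h1 := ih.add (hp.smul (ζ ^ t / t.factorial))
      have h2 := h1.mono (Nat.le_succ (a + t)) (le_refl c)
      have e1 : (fun σ => (∑ k ∈ Finset.range (t + 1), (ζ * p σ) ^ k / k.factorial) * f σ) =
        fun σ => (∑ k ∈ Finset.range t, (ζ * p σ) ^ k / k.factorial) * f σ +
          ζ ^ t / t.factorial * (p σ ^ t * f σ) := by
        funext σ
        rw [Finset.sum_range_succ]; ring
      rw [e1]
      refine h2.monoW (le_of_eq ?_)
      rw [Finset.sum_range_succ, abs_div, abs_pow, Nat.abs_cast]; ring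
  refine key.monoW (mul_le_mul_of_nonneg_right ?_ hf.nonneg)
  exact Real.sum_le_exp_of_nonneg (abs_nonneg _) _

theorem abs_le (hf : PolyRep p q a c W f) (hp : ∀ σ, |p σ| ≤ 1) (hq : ∀ σ, |q σ| ≤ 1) (σ : P) :
    |f σ| ≤ W := by
  obtain ⟨x, h1, h2⟩ := hf
  rw [h1]
  refine le_trans ?_ h2
  refine (Finset.abs_sum_le_sum_abs _ _).trans (Finset.sum_le_sum fun k _ => ?_)
  refine (Finset.abs_sum_le_sum_abs _ _).trans (Finset.sum_le_sum fun j _ => ?_)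
  rw [abs_mul, abs_mul, abs_pow, abs_pow]
  have h3 := pow_le_one₀ (n := k) (abs_nonneg _) (hp σ)
  have h4 := pow_le_one₀ (n := j) (abs_nonneg _) (hq σ)
  calc |x k j| * |p σ| ^ k * |q σ| ^ j ≤ |x k j| * 1 * 1 := by gcongr
    _ = _ := by ring

end PolyRep

/-! ### The auxiliary function and Liouville's inequality in `ℤ[φ]` -/

/-- The ring `ℤ[φ]`, each element recorded as the pair of its two real conjugates. -/
def ZPhi : Subring (ℝ × ℝ) where
  carrier := {x | ∃ a b : ℤ, x.1 = a + b * goldenRatio ∧ x.2 = a + b * goldenConj}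
  mul_mem' := by
    rintro x y ⟨a, b, h1, h2⟩ ⟨c, d, h3, h4⟩
    refine ⟨a * c + b * d, a * d + b * c + b * d, ?_, ?_⟩
    · rw [Prod.fst_mul, h1, h3]; push_cast
      linear_combination (b * d : ℝ) * goldenRatio_sq
    · rw [Prod.snd_mul, h2, h4]; push_cast
      linear_combination (b * d : ℝ) * goldenConj_sq
  one_mem' := ⟨1, 0, by simp, by simp⟩
  add_mem' := by
    rintro x y ⟨a, b, h1, h2⟩ ⟨c, d, h3, h4⟩
    refine ⟨a + c, b + d, ?_, ?_⟩
    · rw [Prod.fst_add, h1, h3]; push_cast; ring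
    · rw [Prod.snd_add, h2, h4]; push_cast; ring
  zero_mem' := ⟨0, 0, by simp, by simp⟩
  neg_mem' := by
    rintro x ⟨a, b, h1, h2⟩
    refine ⟨-a, -b, ?_, ?_⟩
    · rw [Prod.fst_neg, h1]; push_cast; ring
    · rw [Prod.snd_neg, h2]; push_cast; ring

theorem ZPhi_int (a : ℤ) : ((a : ℝ), (a : ℝ)) ∈ ZPhi := ⟨a, 0, by simp, by simp⟩

theorem ZPhi_nat (a : ℕ) : ((a : ℝ), (a : ℝ)) ∈ ZPhi := ⟨a, 0, by simp, by simp⟩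

theorem ZPhi_phi : (goldenRatio, goldenConj) ∈ ZPhi := ⟨0, 1, by simp, by simp⟩

theorem ZPhi_phi_inv : (goldenRatio⁻¹, goldenConj⁻¹) ∈ ZPhi :=
  ⟨-1, 1, by rw [inv_goldenRatio, ← one_sub_goldenConj]; push_cast; ring,
    by rw [inv_goldenConj, ← one_sub_goldenRatio]; push_cast; ring⟩

/-- Liouville's inequality: the norm of a nonzero element of `ℤ[φ]` is a nonzero integer. -/
theorem ZPhi_liouville {x : ℝ × ℝ} (hx : x ∈ ZPhi) (h : |x.1| * |x.2| < 1) : x.1 = 0 := by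
  obtain ⟨a, b, h1, h2⟩ := hx
  have e : x.1 * x.2 = ((a * a + a * b - b * b : ℤ) : ℝ) := by
    rw [h1, h2]; push_cast
    linear_combination (a * b : ℝ) * goldenRatio_add_goldenConj +
      (b * b : ℝ) * goldenRatio_mul_goldenConj
  rw [← abs_mul, e, ← Int.cast_abs] at h
  have h0 : |a * a + a * b - b * b| < 1 := by exact_mod_cast h
  rw [Int.abs_lt_one_iff] at h0
  rw [h0, Int.cast_zero] at e
  rcases mul_eq_zero.mp e with h3 | h3
  · exact h3
  · rw [h2] at h3
    have hb : b = 0 := by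
      by_contra hb
      apply goldenConj_irrational
      refine ⟨-a / b, ?_⟩
      have : (b : ℝ) ≠ 0 := by exact_mod_cast hb
      push_cast
      rw [div_eq_iff this]
      linarith
    subst hb
    rw [h1]
    simpa using h3

theorem exp_tail_nonneg (y : ℝ) (hy : 0 ≤ y) (n : ℕ) :
    exp y - ∑ k ∈ Finset.range n, y ^ k / k.factorial ≤ y ^ n / n.factorial * exp y := by
  have h1 : HasSum (fun k => y ^ k / (k.factorial : ℝ)) (exp y) := by
    rw [Real.exp_eq_exp_ℝ]; exact NormedSpace.expSeries_div_hasSum_exp y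
  have h2 := (hasSum_nat_add_iff' n).mpr h1
  have h3 := h1.mul_left (y ^ n / n.factorial)
  refine hasSum_le (fun k => ?_) h2 h3
  rw [div_mul_div_comm, ← pow_add, add_comm n k]
  have h4 : ((n.factorial * k.factorial : ℕ) : ℝ) ≤ ((k + n).factorial : ℝ) := by
    have := Nat.factorial_mul_factorial_dvd_factorial_add k n
    have := Nat.le_of_dvd (Nat.factorial_pos _) this
    exact_mod_cast (by linarith : n.factorial * k.factorial ≤ (k + n).factorial)
  push_cast at h4
  gcongr

/-- The remainder of the exponential series. -/
theorem exp_tail (x : ℝ) (n : ℕ) :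
    |exp x - ∑ k ∈ Finset.range n, x ^ k / k.factorial| ≤ |x| ^ n / n.factorial * exp |x| := by
  have h := Complex.norm_exp_sub_sum_le_exp_norm_sub_sum (x : ℂ) n
  rw [Complex.norm_real, Real.norm_eq_abs] at h
  refine le_trans (le_of_eq ?_) (h.trans (exp_tail_nonneg _ (abs_nonneg x) n))
  rw [← Real.norm_eq_abs, ← Complex.norm_real]
  push_cast
  rfl

/-- When `q` vanishes at all points, the degree in `q` may be taken to be `0`. -/
theorem PolyRep.drop {P : Type*} {p q : P → ℝ} {a c : ℕ} {W : ℝ} {f : P → ℝ}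
    (h : PolyRep p q a c W f) (hq : ∀ σ, q σ = 0) : PolyRep p q a 0 W f := by
  obtain ⟨x, h1, h2⟩ := h
  refine ⟨x, ?_, ?_⟩
  · intro σ
    rw [h1]
    refine Finset.sum_congr rfl fun k _ => ?_
    rw [Finset.sum_range_succ']
    simp [hq]
  · refine le_trans (Finset.sum_le_sum fun k _ => ?_) h2
    exact Finset.sum_le_sum_of_subset_of_nonneg (Finset.range_mono (by omega))
      fun _ _ _ => abs_nonneg _

/-- A square of an integer within a factor `4` above `A`. -/
theorem exists_sq_between (A : ℝ) (hA : 1 ≤ A) : ∃ M : ℕ, 1 ≤ M ∧ A ≤ (M : ℝ) ^ 2 ∧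
    (M : ℝ) ^ 2 ≤ 4 * A := by
  have h1 : 1 ≤ √A := Real.one_le_sqrt.mpr hA
  have h2 := Nat.le_ceil (√A)
  have h3 := Nat.ceil_lt_add_one (by linarith : 0 ≤ √A)
  have h4 := Real.sq_sqrt (by linarith : 0 ≤ A)
  refine ⟨⌈√A⌉₊, ?_, ?_, ?_⟩
  · exact_mod_cast h1.trans h2
  · nlinarith
  · nlinarith

/-- The bookkeeping of constants in `aux_poly`: with `M²` of the indicated size, denominator, value and
conjugate of the auxiliary function have product less than one. -/
theorem liouville_arith (N M Q τ a b e D F F' : ℝ) (hN : 0 < N) (hM : 0 < M) (hQ : 0 < Q)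
    (hτ0 : 0 ≤ τ) (ha : 0 < a) (hb : 0 < b) (he : 0 < e) (hD0 : 0 ≤ D) (hF0 : 0 ≤ F)
    (hF0' : 0 ≤ F')
    (hM2 : 3 * N ^ 3 * Q ^ 2 * (a * b * e) ≤ M ^ 2)
    (hM3 : M ^ 2 ≤ 4 * (3 * N ^ 3 * Q ^ 2 * (a * b * e))) (hD : D ≤ b)
    (hF : F ≤ N ^ 2 * (a * Q) / M ^ 3 + N * (M * Q * (2 * τ))) (hF' : F' ≤ N * (M * Q * e))
    (hτ : 36 * N ^ 5 * Q ^ 4 * (a * (b * e) ^ 2) * τ < 1) : D * F * F' < 1 := by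
  calc D * F * F' ≤ b * (N ^ 2 * (a * Q) / M ^ 3 + N * (M * Q * (2 * τ))) *
          (N * (M * Q * e)) := by gcongr
    _ = N ^ 3 * Q ^ 2 * (a * b * e) / M ^ 2 + N ^ 2 * Q ^ 2 * (b * e) * (2 * τ) * M ^ 2 := by
        field_simp
    _ ≤ 1 / 3 + N ^ 2 * Q ^ 2 * (b * e) * (2 * τ) *
          (4 * (3 * N ^ 3 * Q ^ 2 * (a * b * e))) := by
        refine add_le_add ?_ ?_
        · rw [div_le_div_iff₀ (by positivity) (by norm_num)]
          linarith
        · gcongr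
    _ = 1 / 3 + 2 / 3 * (36 * N ^ 5 * Q ^ 4 * (a * (b * e) ^ 2) * τ) := by ring
    _ < 1 / 3 + 2 / 3 * 1 := by gcongr
    _ = 1 := by norm_num

set_option maxHeartbeats 800000 in
/-- Construction of the auxiliary function. The functions `C(u,i) C(v,j) y^l` are approximated, on
all points, by polynomials in `p`, `q` with few coefficients; the box principle makes all these
coefficients small, and the Liouville inequality in `ℤ[φ]` turns small values into zeros. -/
theorem aux_poly {P : Type*} (p q : P → ℝ) (hp : ∀ σ, |p σ| ≤ 1) (hq : ∀ σ, |q σ| ≤ 1)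
    (K L κ J : ℕ) (hJ : J = K ∨ (J = 0 ∧ ∀ σ, q σ = 0))
    (I : Finset (ℕ × ℕ × ℕ)) (hI : ∀ x ∈ I, x.1 + x.2.1 ≤ K ∧ x.2.2 ≤ L)
    (u v : P → ℕ) (U1 U2 V : ℝ) (hu : ∀ σ, (u σ : ℝ) = U1 * p σ + U2 * q σ)
    (hv : ∀ σ, (v σ : ℝ) = V * q σ) (Q : ℝ)
    (hQ : ∀ i j : ℕ, i + j ≤ K →
      (|U1| + |U2| + i) ^ i / i.factorial * ((|V| + j) ^ j / j.factorial) ≤ Q)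
    (hcard : 4 * ((K + κ + 1) * (J + 1)) ≤ I.card)
    (ζ Z : ℝ) (hζ : |ζ| ≤ Z) (y ω : P → ℝ) (hy : ∀ σ, y σ = exp (ζ * p σ + ω σ))
    (ε : ℝ) (hε : ε ≤ 1) (hω : ∀ σ, L * |ω σ| ≤ ε) (d E : ℝ) (hd : 0 ≤ d) (hE : 0 ≤ E)
    (har : ∀ σ, ∃ D : ℕ, 1 ≤ D ∧ (D : ℝ) ≤ exp d ∧
      ∀ l ≤ L, ∃ c' : ℝ, ((D : ℝ) * y σ ^ l, c') ∈ ZPhi ∧ |c'| ≤ exp E)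
    (τ : ℝ) (htail : exp (L * Z) * ((L * Z) ^ κ / κ.factorial + 2 * ε) ≤ 2 * τ)
    (hτ : 36 * (I.card : ℝ) ^ 5 * Q ^ 4 * exp (L * Z + 2 * (d + E)) * τ < 1) :
    ∃ c : ℕ × ℕ × ℕ → ℤ, (∃ x ∈ I, c x ≠ 0) ∧
      ∀ σ, ∑ x ∈ I, (c x : ℝ) * ((u σ).choose x.1 * (v σ).choose x.2.1 * y σ ^ x.2.2) = 0 := by
  classical
  set N := I.card with hNdef
  have hZ : 0 ≤ Z := (abs_nonneg _).trans hζ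
  have hQ1 : 1 ≤ Q := by simpa using hQ 0 0 (by omega)
  have hLZ : 0 ≤ L * Z := by positivity
  have hCC : ∀ x ∈ I, PolyRep p q K J Q
      (fun σ => ((u σ).choose x.1 : ℝ) * (v σ).choose x.2.1) := by
    intro x hx
    obtain ⟨h1, h2⟩ := hI x hx
    have r1 := (PolyRep.one (p := p) (q := q)).choose v 0 V x.2.1 (by simpa using hv)
    have r2 := r1.choose u U1 U2 x.1 hu
    have r3 := (r2.mono (by omega : _ ≤ K) (by omega : _ ≤ K)).monoW
      (W' := Q) (le_trans (le_of_eq (by simp)) (hQ x.1 x.2.1 h1))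
    have r4 : PolyRep p q K K Q (fun σ => ((u σ).choose x.1 : ℝ) * (v σ).choose x.2.1) := by
      simpa using r3
    rcases hJ with rfl | ⟨rfl, h0⟩
    · exact r4
    · exact r4.drop h0
  have hCCabs : ∀ x ∈ I, ∀ σ, ((u σ).choose x.1 : ℝ) * (v σ).choose x.2.1 ≤ Q := fun x hx σ =>
    (le_abs_self _).trans ((hCC x hx).abs_le hp hq σ)
  have hT : ∀ x ∈ I, PolyRep p q (K + κ) J (exp (L * Z) * Q)
      (fun σ => (∑ k ∈ Finset.range κ, (x.2.2 * ζ * p σ) ^ k / k.factorial) *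
        (((u σ).choose x.1 : ℝ) * (v σ).choose x.2.1)) := by
    intro x hx
    refine ((hCC x hx).mul_exp (x.2.2 * ζ) κ).monoW ?_
    have h2 : (x.2.2 : ℝ) ≤ L := by exact_mod_cast (hI x hx).2
    gcongr
    rw [abs_mul, Nat.abs_cast]
    gcongr
  choose! X hX1 hX2 using hT
  -- `M` is chosen so that `M²` balances the value against the conjugate in the Liouville inequality.
  have hN4 : 4 * ((K + κ + 1) * (J + 1)) ≤ N := hcard
  have hN0 : 0 < N := lt_of_lt_of_le (by positivity) hN4
  have hN1 : (1 : ℝ) ≤ N := by exact_mod_cast hN0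
  obtain ⟨M, hM1, hM2, hM3⟩ := exists_sq_between
    (3 * (N : ℝ) ^ 3 * Q ^ 2 * exp (L * Z + d + E)) (by
      have h1 : 1 ≤ exp (L * Z + d + E) := Real.one_le_exp (by positivity)
      have h2 : 1 ≤ (N : ℝ) ^ 3 := one_le_pow₀ hN1
      have h3 : 1 ≤ Q ^ 2 := one_le_pow₀ hQ1
      have h4 : 1 ≤ (N : ℝ) ^ 3 * Q ^ 2 := one_le_mul_of_one_le_of_one_le h2 h3
      have h5 := one_le_mul_of_one_le_of_one_le h4 h1
      linarith)
  have hMr : (1 : ℝ) ≤ M := by exact_mod_cast hM1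
  have hcardI : Fintype.card I = N := by simp [hNdef]
  have hcc : Fintype.card (Fin (K + κ + 1) × Fin (J + 1)) = (K + κ + 1) * (J + 1) := by simp
  obtain ⟨c0, hc0, hcM, hcs⟩ := box_principle
    (fun (k : Fin (K + κ + 1) × Fin (J + 1)) (x : I) => X x.1 k.1 k.2)
    (exp (L * Z) * Q) (by positivity)
    (by
      intro k x
      refine le_trans ?_ (hX2 x.1 x.2)
      refine le_trans ?_ (Finset.single_le_sum (f := fun k => ∑ j ∈ Finset.range (J + 1),
        |X x.1 k j|) (fun k _ => Finset.sum_nonneg fun j _ => abs_nonneg _)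
        (Finset.mem_range.mpr k.1.2))
      exact Finset.single_le_sum (f := fun j => |X x.1 k.1 j|) (fun j _ => abs_nonneg _)
        (Finset.mem_range.mpr k.2.2))
    (by rw [hcc]; positivity) (by rw [hcc, hcardI]; exact hN4) M hM1
  rw [hcardI] at hcs
  let c : ℕ × ℕ × ℕ → ℤ := fun x => if h : x ∈ I then c0 ⟨x, h⟩ else 0
  have hcx : ∀ x : I, c x.1 = c0 x := by
    intro x; simp only [c]; rw [dif_pos x.2]
  have hcabs : ∀ x, |(c x : ℝ)| ≤ M := by
    intro x
    simp only [c]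
    split_ifs with h
    · exact_mod_cast hcM ⟨x, h⟩
    · simp
  refine ⟨c, ?_, ?_⟩
  · by_contra hcon
    push Not at hcon
    apply hc0
    funext x
    rw [← hcx]
    exact hcon x.1 x.2
  intro σ
  set F := ∑ x ∈ I, (c x : ℝ) * ((u σ).choose x.1 * (v σ).choose x.2.1 * y σ ^ x.2.2) with hF
  have hA : |∑ x ∈ I, (c x : ℝ) * ((∑ k ∈ Finset.range κ, (x.2.2 * ζ * p σ) ^ k / k.factorial) *
        (((u σ).choose x.1 : ℝ) * (v σ).choose x.2.1))| ≤
        (N : ℝ) ^ 2 * (exp (L * Z) * Q) / (M : ℝ) ^ 3 := by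
    have e1 : ∑ x ∈ I, (c x : ℝ) * ((∑ k ∈ Finset.range κ, (x.2.2 * ζ * p σ) ^ k / k.factorial) *
        (((u σ).choose x.1 : ℝ) * (v σ).choose x.2.1)) =
        ∑ k ∈ Finset.range (K + κ + 1), ∑ j ∈ Finset.range (J + 1),
          (∑ x ∈ I, X x k j * c x) * (p σ ^ k * q σ ^ j) := by
      calc _ = ∑ x ∈ I, (c x : ℝ) * ∑ k ∈ Finset.range (K + κ + 1), ∑ j ∈ Finset.range (J + 1),
            X x k j * p σ ^ k * q σ ^ j :=
            Finset.sum_congr rfl fun x hx => by rw [← hX1 x hx σ]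
        _ = ∑ x ∈ I, ∑ k ∈ Finset.range (K + κ + 1), ∑ j ∈ Finset.range (J + 1),
            X x k j * c x * (p σ ^ k * q σ ^ j) := by
            refine Finset.sum_congr rfl fun x hx => ?_
            rw [Finset.mul_sum]
            refine Finset.sum_congr rfl fun k hk => ?_
            rw [Finset.mul_sum]
            refine Finset.sum_congr rfl fun j hj => ?_
            ring
        _ = _ := by
            rw [Finset.sum_comm]
            refine Finset.sum_congr rfl fun k hk => ?_
            rw [Finset.sum_comm]
            refine Finset.sum_congr rfl fun j hj => ?_
            rw [Finset.sum_mul]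
    have hB : 0 ≤ 4 * (N : ℝ) * (exp (L * Z) * Q) / (M : ℝ) ^ 3 := by positivity
    have e2 : ∀ k ∈ Finset.range (K + κ + 1), ∀ j ∈ Finset.range (J + 1),
        |(∑ x ∈ I, X x k j * c x) * (p σ ^ k * q σ ^ j)| ≤
          4 * N * (exp (L * Z) * Q) / (M : ℝ) ^ 3 := by
      intro k hk j hj
      have := hcs (⟨k, Finset.mem_range.mp hk⟩, ⟨j, Finset.mem_range.mp hj⟩)
      simp only [← hcx] at this
      rw [Finset.sum_coe_sort I (fun x => X x k j * (c x : ℝ))] at this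
      have h3 := pow_le_one₀ (n := k) (abs_nonneg _) (hp σ)
      have h4 := pow_le_one₀ (n := j) (abs_nonneg _) (hq σ)
      rw [abs_mul, abs_mul, abs_pow, abs_pow]
      calc _ ≤ 4 * N * (exp (L * Z) * Q) / (M : ℝ) ^ 3 * (1 * 1) := by gcongr
        _ = _ := by ring
    rw [e1]
    calc _ ≤ ∑ k ∈ Finset.range (K + κ + 1), ∑ j ∈ Finset.range (J + 1),
          4 * N * (exp (L * Z) * Q) / (M : ℝ) ^ 3 := by
          refine (Finset.abs_sum_le_sum_abs _ _).trans (Finset.sum_le_sum fun k hk => ?_)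
          exact (Finset.abs_sum_le_sum_abs _ _).trans (Finset.sum_le_sum fun j hj => e2 k hk j hj)
      _ = ((4 * ((K + κ + 1) * (J + 1)) : ℕ) : ℝ) * (N * (exp (L * Z) * Q) / (M : ℝ) ^ 3) := by
          simp; ring
      _ ≤ N * (N * (exp (L * Z) * Q) / (M : ℝ) ^ 3) := by
          gcongr
      _ = _ := by ring
  have hR : ∀ x ∈ I, |y σ ^ x.2.2 - ∑ k ∈ Finset.range κ, (x.2.2 * ζ * p σ) ^ k / k.factorial| ≤
      2 * τ := by
    intro x hx
    have h2 : (x.2.2 : ℝ) ≤ L := by exact_mod_cast (hI x hx).2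
    set w := x.2.2 * ζ * p σ with hw
    have hwabs : |w| ≤ L * Z := by
      rw [hw, abs_mul, abs_mul, Nat.abs_cast]
      calc (x.2.2 : ℝ) * |ζ| * |p σ| ≤ L * Z * 1 := by gcongr; exact hp σ
        _ = _ := mul_one _
    have hyl : y σ ^ x.2.2 = exp w * exp (x.2.2 * ω σ) := by
      rw [hy, ← Real.exp_nat_mul, ← Real.exp_add, hw]; congr 1; ring
    have hωx : |x.2.2 * ω σ| ≤ ε := by
      rw [abs_mul, Nat.abs_cast]
      exact (mul_le_mul_of_nonneg_right h2 (abs_nonneg _)).trans (hω σ)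
    have h5 : |exp (x.2.2 * ω σ) - 1| ≤ 2 * ε :=
      (Real.abs_exp_sub_one_le (hωx.trans hε)).trans (by linarith)
    have h6 : exp w ≤ exp (L * Z) := Real.exp_le_exp.mpr ((le_abs_self w).trans hwabs)
    have h7 := exp_tail w κ
    have h8 : |w| ^ κ / κ.factorial * exp |w| ≤ (L * Z) ^ κ / κ.factorial * exp (L * Z) := by
      gcongr
    rw [hyl]
    calc _ = |(exp w - ∑ k ∈ Finset.range κ, w ^ k / k.factorial) +
          exp w * (exp (x.2.2 * ω σ) - 1)| := by congr 1; ring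
      _ ≤ |exp w - ∑ k ∈ Finset.range κ, w ^ k / k.factorial| +
          |exp w * (exp (x.2.2 * ω σ) - 1)| := abs_add_le _ _
      _ ≤ (L * Z) ^ κ / κ.factorial * exp (L * Z) + exp (L * Z) * (2 * ε) := by
          rw [abs_mul, abs_of_pos (exp_pos w)]
          have : 0 ≤ 2 * ε := (abs_nonneg _).trans h5
          gcongr
          exact h7.trans h8
      _ ≤ 2 * τ := by linarith
  have hτ0 : 0 ≤ 2 * τ := by
    obtain ⟨x, hx⟩ := Finset.card_pos.mp hN0
    exact (abs_nonneg _).trans (hR x hx)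
  have hFs : |F| ≤ (N : ℝ) ^ 2 * (exp (L * Z) * Q) / (M : ℝ) ^ 3 + N * (M * Q * (2 * τ)) := by
    have e3 : F = (∑ x ∈ I, (c x : ℝ) *
        ((∑ k ∈ Finset.range κ, (x.2.2 * ζ * p σ) ^ k / k.factorial) *
        (((u σ).choose x.1 : ℝ) * (v σ).choose x.2.1))) +
        ∑ x ∈ I, (c x : ℝ) * (((u σ).choose x.1 : ℝ) * (v σ).choose x.2.1) *
          (y σ ^ x.2.2 - ∑ k ∈ Finset.range κ, (x.2.2 * ζ * p σ) ^ k / k.factorial) := by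
      rw [hF, ← Finset.sum_add_distrib]
      refine Finset.sum_congr rfl fun x hx => ?_
      ring
    rw [e3]
    refine (abs_add_le _ _).trans (add_le_add hA ?_)
    refine (Finset.abs_sum_le_sum_abs _ _).trans ?_
    calc _ ≤ ∑ x ∈ I, M * Q * (2 * τ) := by
          refine Finset.sum_le_sum fun x hx => ?_
          rw [abs_mul, abs_mul]
          have h1 := hCCabs x hx σ
          rw [abs_of_nonneg (by positivity :
            (0 : ℝ) ≤ ((u σ).choose x.1 : ℝ) * (v σ).choose x.2.1)]
          have h2 := hcabs x
          have h3 := hR x hx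
          gcongr
      _ = _ := by simp [hNdef]
  -- `D F` lies in `ℤ[φ]`; its norm is less than one, so it vanishes.
  obtain ⟨D, hD1, hD2, hD3⟩ := har σ
  choose! c' hc'1 hc'2 using hD3
  have hDr : (1 : ℝ) ≤ D := by exact_mod_cast hD1
  have hmem : ((D : ℝ) * F, ∑ x ∈ I, (c x : ℝ) *
      (((u σ).choose x.1 : ℝ) * (v σ).choose x.2.1) * c' x.2.2) ∈ ZPhi := by
    have e4 : ((D : ℝ) * F, ∑ x ∈ I, (c x : ℝ) *
        (((u σ).choose x.1 : ℝ) * (v σ).choose x.2.1) * c' x.2.2) =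
        ∑ x ∈ I, ((c x : ℝ), (c x : ℝ)) * ((((u σ).choose x.1 : ℝ), ((u σ).choose x.1 : ℝ)) *
          (((v σ).choose x.2.1 : ℝ), ((v σ).choose x.2.1 : ℝ))) *
          ((D : ℝ) * y σ ^ x.2.2, c' x.2.2) := by
      refine Prod.ext ?_ ?_
      · rw [Prod.fst_sum, hF, Finset.mul_sum]
        refine Finset.sum_congr rfl fun x hx => ?_
        simp only [Prod.mk_mul_mk]; ring
      · rw [Prod.snd_sum]
        simp only [Prod.mk_mul_mk]
    rw [e4]
    exact Subring.sum_mem _ fun x hx => ZPhi.mul_mem (ZPhi.mul_mem (ZPhi_int _)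
      (ZPhi.mul_mem (ZPhi_nat _) (ZPhi_nat _))) (hc'1 _ (hI x hx).2)
  have hconj : |∑ x ∈ I, (c x : ℝ) *
      (((u σ).choose x.1 : ℝ) * (v σ).choose x.2.1) * c' x.2.2| ≤ N * (M * Q * exp E) := by
    refine (Finset.abs_sum_le_sum_abs _ _).trans ?_
    calc _ ≤ ∑ x ∈ I, M * Q * exp E := by
          refine Finset.sum_le_sum fun x hx => ?_
          rw [abs_mul, abs_mul]
          have h1 := hCCabs x hx σ
          rw [abs_of_nonneg (by positivity :
            (0 : ℝ) ≤ ((u σ).choose x.1 : ℝ) * (v σ).choose x.2.1)]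
          have h2 := hcabs x
          have h3 := hc'2 x.2.2 (hI x hx).2
          gcongr
      _ = _ := by simp [hNdef]
  have hlast : |(D : ℝ) * F| * |∑ x ∈ I, (c x : ℝ) *
      (((u σ).choose x.1 : ℝ) * (v σ).choose x.2.1) * c' x.2.2| < 1 := by
    rw [abs_mul, Nat.abs_cast]
    have h1 : exp (L * Z + d + E) = exp (L * Z) * exp d * exp E := by
      rw [Real.exp_add, Real.exp_add]
    have h2 : exp (L * Z + 2 * (d + E)) = exp (L * Z) * (exp d * exp E) ^ 2 := by
      rw [← Real.exp_add, ← Real.exp_nat_mul, ← Real.exp_add]; push_cast; rfl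
    rw [h1] at hM2 hM3
    rw [h2] at hτ
    exact liouville_arith N M Q τ (exp (L * Z)) (exp d) (exp E) D |F| _ (by positivity)
      (by positivity) (by positivity) (by linarith) (exp_pos _) (exp_pos _) (exp_pos _)
      (by positivity) (abs_nonneg _) (abs_nonneg _) hM2 hM3 hD2 hFs hconj hτ
  have hzero := ZPhi_liouville hmem hlast
  simp only at hzero
  rcases mul_eq_zero.mp hzero with h | h
  · linarith
  · exact h

/-! ### Logarithmic form of the auxiliary construction -/

theorem pow_div_factorial_mono (H : ℝ) (K s : ℕ) (hs : s ≤ K) (hK : (K : ℝ) ≤ H) :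
    H ^ s / s.factorial ≤ H ^ K / K.factorial := by
  have hH : 0 ≤ H := le_trans (Nat.cast_nonneg K) hK
  induction K, hs using Nat.le_induction with
  | base => exact le_rfl
  | succ k hk ih =>
    push_cast at hK
    refine (ih (by linarith)).trans ?_
    rw [Nat.factorial_succ, pow_succ, div_le_div_iff₀ (by positivity) (by positivity)]
    push_cast
    have : H ^ k * k.factorial * (k + 1) ≤ H ^ k * k.factorial * H := by gcongr
    linarith

theorem pow_div_factorial_le_pow (H : ℝ) (hH : 0 ≤ H) (K : ℕ) :
    H ^ K / K.factorial ≤ (exp 1 * H / K) ^ K := by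
  rcases Nat.eq_zero_or_pos K with rfl | hK
  · simp
  have hKr : (0 : ℝ) < K := by exact_mod_cast hK
  have h1 := Real.pow_div_factorial_le_exp (K : ℝ) hKr.le K
  rw [div_le_iff₀ (by positivity)] at h1
  rw [div_pow, mul_pow, ← Real.exp_nat_mul, mul_one, div_le_div_iff₀ (by positivity) (by positivity)]
  calc H ^ K * (K : ℝ) ^ K ≤ H ^ K * (exp K * K.factorial) := by gcongr
    _ = _ := by ring

/-- The bound for the coefficients of products of two binomial polynomials of total degree at most `K`. -/
theorem binom_norm (x y H : ℝ) (hx : 0 ≤ x) (hy : 0 ≤ y) (K i j : ℕ) (hij : i + j ≤ K)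
    (hH : x + y + K ≤ H) :
    (x + i) ^ i / i.factorial * ((y + j) ^ j / j.factorial) ≤ (exp 1 * H / K) ^ K := by
  have hKH : (K : ℝ) ≤ H := by linarith
  have hH0 : 0 ≤ H := le_trans (Nat.cast_nonneg K) hKH
  have hij' : (i : ℝ) + j ≤ K := by exact_mod_cast hij
  have h1 : (x + i) ^ i * (y + j) ^ j * ((i + j).choose i : ℝ) ≤ H ^ (i + j) := by
    calc _ ≤ ((x + i) + (y + j)) ^ (i + j) := by
          rw [add_pow (x + i) (y + j)]
          have := Finset.single_le_sum (f := fun m => (x + i) ^ m * (y + j) ^ (i + j - m) *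
            ((i + j).choose m : ℝ)) (fun m _ => by positivity)
            (Finset.mem_range.mpr (by omega : i < i + j + 1))
          simpa using this
      _ ≤ H ^ (i + j) := by
          apply pow_le_pow_left₀ (by positivity)
          linarith
  have h2 : ((i + j).choose i : ℝ) = (i + j).factorial / (i.factorial * j.factorial) := by
    rw [Nat.choose_symm_add, Nat.add_choose, Nat.cast_div (Nat.factorial_mul_factorial_dvd_factorial_add i j)
      (by positivity)]
    push_cast; rfl
  have h3 : (x + i) ^ i / i.factorial * ((y + j) ^ j / j.factorial) ≤
      H ^ (i + j) / (i + j).factorial := by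
    rw [le_div_iff₀ (by positivity)]
    refine le_trans (le_of_eq ?_) h1
    rw [h2]; field_simp
  exact h3.trans ((pow_div_factorial_mono H K _ hij hKH).trans (pow_div_factorial_le_pow H hH0 K))

theorem exp_248 : exp 2.48 ≤ 12 := by
  have h1 : exp 2.48 ^ 25 ≤ (12 : ℝ) ^ 25 := by
    rw [← Real.exp_nat_mul]
    have h2 : ((25 : ℕ) : ℝ) * 2.48 = ((62 : ℕ) : ℝ) * 1 := by norm_num
    rw [h2, Real.exp_nat_mul]
    have h3 := Real.exp_one_lt_d9
    calc exp 1 ^ 62 ≤ 2.7182818286 ^ 62 := by gcongr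
      _ ≤ (12 : ℝ) ^ 25 := by norm_num
  exact le_of_pow_le_pow_left₀ (by norm_num) (by norm_num) h1

theorem tail_small (x : ℝ) (hx : 0 ≤ x) (κ : ℕ) (h : x ≤ κ / 12) :
    x ^ κ / κ.factorial ≤ exp (-1.48 * κ) := by
  rcases Nat.eq_zero_or_pos κ with rfl | hκ
  · simp
  have hκr : (0 : ℝ) < κ := by exact_mod_cast hκ
  refine (pow_div_factorial_le_pow x hx κ).trans ?_
  have h1 : exp 1 * x / κ ≤ exp (-1.48) := by
    rw [div_le_iff₀ hκr]
    have h2 : exp 1 = exp (-1.48) * exp 2.48 := by rw [← Real.exp_add]; norm_num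
    rw [h2]
    have h3 := exp_248
    calc exp (-1.48) * exp 2.48 * x ≤ exp (-1.48) * 12 * (κ / 12) := by gcongr
      _ = _ := by ring
  calc (exp 1 * x / κ) ^ κ ≤ exp (-1.48) ^ κ := pow_le_pow_left₀ (by positivity) h1 _
    _ = _ := by rw [← Real.exp_nat_mul]; congr 1; ring

/-- `aux_poly` with its analytic conditions in logarithmic form. -/
theorem aux_poly_log {P : Type*} (p q : P → ℝ) (hp : ∀ σ, |p σ| ≤ 1) (hq : ∀ σ, |q σ| ≤ 1)
    (K L κ J : ℕ) (hK : 1 ≤ K) (hJ : J = K ∨ (J = 0 ∧ ∀ σ, q σ = 0))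
    (I : Finset (ℕ × ℕ × ℕ)) (hI : ∀ x ∈ I, x.1 + x.2.1 ≤ K ∧ x.2.2 ≤ L)
    (u v : P → ℕ) (U1 U2 V : ℝ) (hu : ∀ σ, (u σ : ℝ) = U1 * p σ + U2 * q σ)
    (hv : ∀ σ, (v σ : ℝ) = V * q σ) (lam : ℝ)
    (hH : exp 1 * (|U1| + |U2| + |V| + K) ≤ K * exp lam)
    (hcard : 4 * ((K + κ + 1) * (J + 1)) ≤ I.card)
    (hcard' : (I.card : ℝ) ≤ exp (3 * K + 3))
    (ζ Z : ℝ) (hζ : |ζ| ≤ Z) (y ω : P → ℝ) (hy : ∀ σ, y σ = exp (ζ * p σ + ω σ))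
    (hω : ∀ σ, L * |ω σ| ≤ exp (-1.48 * κ) / 2) (d E : ℝ) (hd : 0 ≤ d) (hE : 0 ≤ E)
    (har : ∀ σ, ∃ D : ℕ, 1 ≤ D ∧ (D : ℝ) ≤ exp d ∧
      ∀ l ≤ L, ∃ c' : ℝ, ((D : ℝ) * y σ ^ l, c') ∈ ZPhi ∧ |c'| ≤ exp E)
    (hLZ : L * Z ≤ κ / 12)
    (hbud : 4 + 5 * (3 * K + 3) + 4 * K * lam + L * Z + 2 * (d + E) < 1.39 * κ) :
    ∃ c : ℕ × ℕ × ℕ → ℤ, (∃ x ∈ I, c x ≠ 0) ∧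
      ∀ σ, ∑ x ∈ I, (c x : ℝ) * ((u σ).choose x.1 * (v σ).choose x.2.1 * y σ ^ x.2.2) = 0 := by
  have hZ : 0 ≤ Z := (abs_nonneg _).trans hζ
  have hKr : (1 : ℝ) ≤ K := by exact_mod_cast hK
  refine aux_poly p q hp hq K L κ J hJ I hI u v U1 U2 V hu hv (exp (K * lam)) ?_ hcard ζ Z hζ y ω hy
    (exp (-1.48 * κ) / 2) ?_ hω d E hd hE har (exp (-1.39 * κ)) ?_ ?_
  · intro i j hij
    refine (binom_norm _ _ _ (by positivity) (by positivity) K i j hij le_rfl).trans ?_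
    rw [Real.exp_nat_mul]
    refine pow_le_pow_left₀ (by positivity) ?_ _
    rw [div_le_iff₀ (by linarith), mul_comm (exp lam)]
    linarith
  · have : exp (-1.48 * κ) ≤ 1 := by
      rw [Real.exp_le_one_iff]
      have : (0 : ℝ) ≤ κ := Nat.cast_nonneg _
      linarith
    linarith
  · have h1 := tail_small (L * Z) (by positivity) κ hLZ
    have h2 : exp (L * Z) * exp (-1.48 * κ) ≤ exp (-1.39 * κ) := by
      rw [← Real.exp_add, Real.exp_le_exp]
      have : (0 : ℝ) ≤ κ := Nat.cast_nonneg _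
      linarith
    calc _ ≤ exp (L * Z) * (exp (-1.48 * κ) + 2 * (exp (-1.48 * κ) / 2)) := by gcongr
      _ = 2 * (exp (L * Z) * exp (-1.48 * κ)) := by ring
      _ ≤ _ := by linarith
  · have h36 : (36 : ℝ) ≤ exp 4 := by
      have := Real.add_one_le_exp (1 : ℝ)
      have h3 := Real.exp_one_gt_d9
      have h2 : exp 4 = exp 1 ^ 4 := by rw [← Real.exp_nat_mul]; norm_num
      rw [h2]
      calc (36 : ℝ) ≤ 2.7182818283 ^ 4 := by norm_num
        _ ≤ _ := by gcongr
    calc 36 * (I.card : ℝ) ^ 5 * exp (K * lam) ^ 4 * exp (L * Z + 2 * (d + E)) * exp (-1.39 * κ)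
        ≤ exp 4 * exp (3 * K + 3) ^ 5 * exp (K * lam) ^ 4 * exp (L * Z + 2 * (d + E)) *
          exp (-1.39 * κ) := by gcongr
      _ = exp (4 + 5 * (3 * K + 3) + 4 * K * lam + L * Z + 2 * (d + E) - 1.39 * κ) := by
          rw [← Real.exp_nat_mul, ← Real.exp_nat_mul, ← Real.exp_add, ← Real.exp_add,
            ← Real.exp_add, ← Real.exp_add]
          congr 1; push_cast; ring
      _ < 1 := by rw [Real.exp_lt_one_iff]; linarith

theorem abs_goldenConj : |goldenConj| = goldenRatio⁻¹ := by
  rw [abs_of_neg goldenConj_neg, inv_goldenRatio]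

theorem ZPhi_phi_zpow (r : ℤ) : (goldenRatio ^ r, goldenConj ^ r) ∈ ZPhi := by
  rcases r with n | n
  · simpa using ZPhi.pow_mem ZPhi_phi n
  · have := ZPhi.pow_mem ZPhi_phi_inv (n + 1)
    rw [Prod.pow_mk, inv_pow, inv_pow] at this
    rwa [zpow_negSucc, zpow_negSucc]

theorem abs_goldenConj_zpow (r : ℤ) : |goldenConj ^ r| ≤ exp (|(r : ℝ)| * log goldenRatio) := by
  rw [abs_zpow, abs_goldenConj, inv_zpow, ← zpow_neg]
  have h1 : goldenRatio ^ (-r) = exp ((-r : ℤ) * log goldenRatio) := by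
    rw [← Real.rpow_intCast, Real.rpow_def_of_pos goldenRatio_pos, mul_comm]
  rw [h1, Real.exp_le_exp]
  have h2 : 0 < log goldenRatio := Real.log_pos one_lt_goldenRatio
  gcongr
  push_cast
  exact neg_le_abs _

/-- Denominator and conjugate of the powers of `φ^r b^s γ^t`. -/
theorem arith_point (b δ : ℕ) (hb : 2 ≤ b) (hδ : 1 ≤ δ) (γ ν' g : ℝ)
    (hν : ((δ : ℝ) * γ, ν') ∈ ZPhi) (hδg : log δ ≤ g) (hν' : |ν'| ≤ exp g)
    (r : ℤ) (s t L : ℕ) (d E : ℝ) (hd : L * (t * g) ≤ d)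
    (hE : L * (|(r : ℝ)| * log goldenRatio + s * log b + t * g) ≤ E) :
    ∃ D : ℕ, 1 ≤ D ∧ (D : ℝ) ≤ exp d ∧ ∀ l ≤ L, ∃ c' : ℝ,
      ((D : ℝ) * (goldenRatio ^ r * (b : ℝ) ^ s * γ ^ t) ^ l, c') ∈ ZPhi ∧ |c'| ≤ exp E := by
  have hδr : (1 : ℝ) ≤ δ := by exact_mod_cast hδ
  have hbr : (2 : ℝ) ≤ b := by exact_mod_cast hb
  have hδe : (δ : ℝ) ≤ exp g := by
    rw [← Real.log_le_iff_le_exp (by linarith)]; exact hδg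
  have hφ : 0 < log goldenRatio := Real.log_pos one_lt_goldenRatio
  refine ⟨δ ^ (t * L), Nat.one_le_pow _ _ hδ, ?_, ?_⟩
  · push_cast
    calc (δ : ℝ) ^ (t * L) ≤ exp g ^ (t * L) := by gcongr
      _ = exp (L * (t * g)) := by rw [← Real.exp_nat_mul]; push_cast; congr 1; ring
      _ ≤ _ := Real.exp_le_exp.mpr hd
  · intro l hl
    refine ⟨(goldenConj ^ r * (b : ℝ) ^ s * ν' ^ t) ^ l * ((δ : ℝ) ^ t) ^ (L - l), ?_, ?_⟩
    · have h1 : (((goldenRatio ^ r, goldenConj ^ r) * ((b : ℝ), (b : ℝ)) ^ s *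
          ((δ : ℝ) * γ, ν') ^ t) ^ l * ((((δ : ℝ), (δ : ℝ)) ^ t) ^ (L - l))) ∈ ZPhi :=
        ZPhi.mul_mem (ZPhi.pow_mem (ZPhi.mul_mem (ZPhi.mul_mem (ZPhi_phi_zpow r)
          (ZPhi.pow_mem (ZPhi_nat b) s)) (ZPhi.pow_mem hν t)) l)
          (ZPhi.pow_mem (ZPhi.pow_mem (ZPhi_nat δ) t) _)
      convert h1 using 1
      refine Prod.ext ?_ ?_
      · simp only [Prod.pow_mk, Prod.mk_mul_mk]
        have h2 : t * L = t * l + t * (L - l) := by rw [← mul_add]; congr 1; omega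
        push_cast
        rw [h2, pow_add, pow_mul, pow_mul, mul_pow (δ : ℝ) γ t]
        ring
      · simp only [Prod.pow_mk, Prod.mk_mul_mk]
    · have hbe : (b : ℝ) = exp (log b) := (Real.exp_log (by linarith)).symm
      have hs : (b : ℝ) ^ s = exp (s * log b) := by rw [Real.exp_nat_mul, ← hbe]
      have hlL : (l : ℝ) ≤ L := by exact_mod_cast hl
      have h0 : 0 ≤ log (b : ℝ) := Real.log_nonneg (by linarith)
      calc |(goldenConj ^ r * (b : ℝ) ^ s * ν' ^ t) ^ l * ((δ : ℝ) ^ t) ^ (L - l)|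
          = (|goldenConj ^ r| * (b : ℝ) ^ s * |ν'| ^ t) ^ l * ((δ : ℝ) ^ t) ^ (L - l) := by
            rw [abs_mul, abs_pow, abs_mul, abs_mul, abs_pow ν',
              abs_of_nonneg (by positivity : (0 : ℝ) ≤ (b : ℝ) ^ s),
              abs_of_nonneg (by positivity : (0 : ℝ) ≤ ((δ : ℝ) ^ t) ^ (L - l))]
        _ ≤ (exp (|(r : ℝ)| * log goldenRatio) * exp (s * log b) * exp g ^ t) ^ l *
            (exp g ^ t) ^ (L - l) := by
            rw [hs]
            have := abs_goldenConj_zpow r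
            gcongr
        _ = exp (l * (|(r : ℝ)| * log goldenRatio + s * log b) + L * (t * g)) := by
            rw [← Real.exp_nat_mul, ← Real.exp_add, ← Real.exp_add, ← Real.exp_nat_mul,
              ← Real.exp_nat_mul, ← Real.exp_add]
            congr 1
            rw [Nat.cast_sub hl]; ring
        _ ≤ exp E := by
            rw [Real.exp_le_exp]
            refine le_trans ?_ hE
            have : l * (|(r : ℝ)| * log goldenRatio + s * log b) ≤
              L * (|(r : ℝ)| * log goldenRatio + s * log b) := by gcongr
            linarith

/-! ### The degenerate case: two multiplicatively related numbers -/

theorem goldenRatio_bounds : 1.618033988 < goldenRatio ∧ goldenRatio < 1.618033989 := by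
  have h1 : (2.236067976 : ℝ) < √5 := Real.lt_sqrt_of_sq_lt (by norm_num)
  have h2 : √5 < (2.236067978 : ℝ) := by
    rw [Real.sqrt_lt' (by norm_num)]; norm_num
  constructor <;> rw [goldenRatio] <;> linarith

theorem log_phi_gt : 0.48 < log goldenRatio := by
  have h := goldenRatio_bounds.1
  rw [Real.lt_log_iff_exp_lt goldenRatio_pos]
  refine lt_of_pow_lt_pow_left₀ 25 goldenRatio_pos.le ?_
  rw [← Real.exp_nat_mul]
  have h2 : ((25 : ℕ) : ℝ) * 0.48 = ((12 : ℕ) : ℝ) * 1 := by norm_num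
  rw [h2, Real.exp_nat_mul]
  have h3 := Real.exp_one_lt_d9
  calc exp 1 ^ 12 ≤ 2.7182818286 ^ 12 := by gcongr
    _ < (1.618033988 : ℝ) ^ 25 := by norm_num
    _ ≤ _ := by gcongr

theorem log_phi_lt : log goldenRatio < 13 / 27 := by
  have h := goldenRatio_bounds.2
  rw [Real.log_lt_iff_lt_exp goldenRatio_pos]
  refine lt_of_pow_lt_pow_left₀ 27 (exp_pos _).le ?_
  rw [← Real.exp_nat_mul]
  have h2 : ((27 : ℕ) : ℝ) * (13 / 27) = ((13 : ℕ) : ℝ) * 1 := by norm_num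
  rw [h2, Real.exp_nat_mul]
  have h3 := Real.exp_one_gt_d9
  have h4 := goldenRatio_pos
  calc goldenRatio ^ 27 ≤ (1.618033989 : ℝ) ^ 27 := by gcongr
    _ < 2.7182818283 ^ 13 := by norm_num
    _ ≤ _ := by gcongr

theorem log_base_ge (b : ℕ) (hb : 2 ≤ b) : 0.69 ≤ log b := by
  have h1 := Real.log_two_gt_d9
  have h2 : log 2 ≤ log b := Real.log_le_log (by norm_num) (by exact_mod_cast hb)
  linarith

/-- The binomial functions `C(·, i)` are linearly independent. -/
theorem choose_indep {R : Type*} [CommRing R] (c : ℕ → R) (K : ℕ)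
    (h : ∀ a : ℕ, ∑ i ∈ Finset.range (K + 1), c i * (a.choose i : R) = 0) : ∀ i ≤ K, c i = 0 := by
  intro i
  induction i using Nat.strong_induction_on with
  | _ i ih =>
    intro hi
    have h1 := h i
    rw [Finset.sum_eq_single i] at h1
    · simpa using h1
    · intro j hj hji
      rcases lt_or_gt_of_ne hji with h2 | h2
      · rw [ih j h2 (by omega)]; simp
      · rw [Nat.choose_eq_zero_of_lt h2]; simp
    · intro h2; exact absurd (Finset.mem_range.mpr (by omega)) h2

/-- The binomial polynomial `C(X, i)`. -/
noncomputable def binomP (E : Type*) [Field E] (i : ℕ) : Polynomial E :=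
  Polynomial.C (i.factorial : E)⁻¹ * descPochhammer E i

theorem binomP_eval (E : Type*) [Field E] [CharZero E] (i a : ℕ) :
    (binomP E i).eval (a : E) = a.choose i := by
  have : (i.factorial : E) ≠ 0 := by exact_mod_cast i.factorial_ne_zero
  rw [binomP, Polynomial.eval_mul, Polynomial.eval_C, descPochhammer_eval_eq_descFactorial,
    Nat.descFactorial_eq_factorial_mul_choose]
  push_cast
  field_simp

theorem binomP_natDegree (E : Type*) [Field E] (i : ℕ) : (binomP E i).natDegree ≤ i := by
  refine (Polynomial.natDegree_C_mul_le _ _).trans ?_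
  rw [descPochhammer_natDegree]

/-- Multiplicative independence of `φ` and `b`. -/
theorem phi_pow_ne (b a c : ℕ) (hb : 2 ≤ b) (hac : a ≠ 0 ∨ c ≠ 0) :
    goldenRatio ^ a ≠ (b : ℝ) ^ c := by
  intro h
  have hmem : (goldenRatio ^ a - (b : ℝ) ^ c, goldenConj ^ a - (b : ℝ) ^ c) ∈ ZPhi := by
    have := ZPhi.sub_mem (ZPhi.pow_mem ZPhi_phi a) (ZPhi.pow_mem (ZPhi_nat b) c)
    simpa only [Prod.pow_mk, Prod.mk_sub_mk] using this
  obtain ⟨p, q, h1, h2⟩ := hmem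
  simp only [h, sub_self] at h1
  have hq : q = 0 := by
    by_contra hq
    apply goldenRatio_irrational
    refine ⟨-p / q, ?_⟩
    have : (q : ℝ) ≠ 0 := by exact_mod_cast hq
    push_cast
    rw [div_eq_iff this]
    linarith
  subst hq
  simp only [Int.cast_zero, zero_mul, add_zero] at h1 h2
  rw [← h1] at h2
  have h3 : |goldenConj| ^ a = (b : ℝ) ^ c := by
    rw [← abs_pow]
    have : goldenConj ^ a = (b : ℝ) ^ c := by linarith
    rw [this, abs_of_nonneg (by positivity)]
  rw [abs_goldenConj, inv_pow, ← h] at h3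
  have h4 : 1 ≤ goldenRatio ^ a := one_le_pow₀ one_lt_goldenRatio.le
  have h5 : goldenRatio ^ a = 1 := by
    have h6 : (goldenRatio ^ a) * (goldenRatio ^ a) = 1 := by
      nth_rewrite 1 [← h3]
      exact inv_mul_cancel₀ (by positivity)
    nlinarith
  have ha : a = 0 := by
    by_contra ha
    have := one_lt_pow₀ one_lt_goldenRatio ha
    linarith
  have hc : c = 0 := by
    by_contra hc
    have hb' : (1 : ℝ) < b := by exact_mod_cast (by omega : 1 < b)
    have := one_lt_pow₀ hb' hc
    linarith
  omega

theorem pow_injective_of_pos {x : ℝ} (hx : 0 < x) (h1 : x ≠ 1) :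
    Function.Injective (fun k : ℕ => x ^ k) := by
  intro i j hij
  exact pow_right_injective₀ hx h1 hij

set_option maxHeartbeats 1000000 in
/-- Choice of parameters for the one-dimensional interpolation problem. -/
theorem params2 (B g lam : ℝ) (hB : 0.69 ≤ B) (hg : 1 ≤ g) (hl : 30 ≤ lam) :
    ∃ K l R T : ℕ, 1e10 * g ≤ (K : ℝ) ∧ 210 ≤ l ∧ 7 * lam ≤ l ∧
      3 * (K : ℝ) + 1 + 1.48 * (K * l) ≤ 2e11 * B * lam ^ 2 * g ∧
      (R : ℝ) * B * 9000 ≤ K ∧ (T : ℝ) * g * 47000 ≤ K ∧ 4 * l + 4 ≤ K ∧ 4 * l + 3 < R ∧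
      K * (4 * l + 4) < (R - (4 * l + 3)) * T ∧ (R : ℝ) ≤ 1.6e6 * lam * g := by
  have hB0 : 0 < B := by linarith
  have hg0 : 0 < g := by linarith
  have hlB : 20 ≤ lam * B := by nlinarith
  have hlg : 30 ≤ lam * g := by nlinarith
  have hX : 20 * g ≤ lam * B * g := by nlinarith
  set K := ⌈1.4e10 * (lam * B * g)⌉₊ with hK
  have hK1 : 1.4e10 * (lam * B * g) ≤ K := Nat.le_ceil _
  have hK2 : (K : ℝ) < 1.4e10 * (lam * B * g) + 1 := Nat.ceil_lt_add_one (by positivity)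
  set l := ⌈7 * lam⌉₊ with hldef
  have hl1 : 7 * lam ≤ l := Nat.le_ceil _
  have hl2 : (l : ℝ) < 7 * lam + 1 := Nat.ceil_lt_add_one (by positivity)
  set R := ⌊(K : ℝ) / (9000 * B)⌋₊ with hR
  have hR1 : (R : ℝ) ≤ K / (9000 * B) := Nat.floor_le (by positivity)
  have hR2 : (K : ℝ) / (9000 * B) < R + 1 := Nat.lt_floor_add_one _
  set T := ⌊(K : ℝ) / (47000 * g)⌋₊ with hT
  have hT1 : (T : ℝ) ≤ K / (47000 * g) := Nat.floor_le (by positivity)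
  have hT2 : (K : ℝ) / (47000 * g) < T + 1 := Nat.lt_floor_add_one _
  have hKB : 1.4e10 * (lam * g) ≤ K / B := by
    rw [le_div_iff₀ hB0]; linarith
  have hKB2 : K / B ≤ 1.4e10 * (lam * g) + 2 := by
    rw [div_le_iff₀ hB0]; nlinarith
  have hKg : 1.4e10 * (lam * B) ≤ K / g := by
    rw [le_div_iff₀ hg0]; linarith
  have eR : (K : ℝ) / (9000 * B) = K / B / 9000 := by field_simp
  have eT : (K : ℝ) / (47000 * g) = K / g / 47000 := by field_simp
  rw [eR] at hR1 hR2
  rw [eT] at hT1 hT2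
  have hlamg : lam ≤ lam * g := by nlinarith
  have hRl : 4 * (l : ℝ) + 3 + K / B / 9001 ≤ R := by linarith
  have hTl : K / g / 47001 ≤ T := by linarith
  have hRl' : 4 * l + 3 < R := by
    have : ((4 * l + 3 : ℕ) : ℝ) < R := by push_cast; linarith
    exact_mod_cast this
  refine ⟨K, l, R, T, by linarith, ?_, hl1, ?_, ?_, ?_, ?_, hRl', ?_, by linarith⟩
  · have : (210 : ℝ) ≤ l := by linarith
    exact_mod_cast this
  · have h1 : (l : ℝ) ≤ 7.034 * lam := by linarith
    have h2 : (K : ℝ) ≤ 1.40001e10 * (lam * B * g) := by linarith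
    have h3 : (K : ℝ) * l ≤ 1.40001e10 * (lam * B * g) * (7.034 * lam) := by
      apply mul_le_mul h2 h1 <;> positivity
    have h4 : (lam * B * g) * 30 ≤ lam * B * g * lam := by gcongr
    nlinarith
  · calc (R : ℝ) * B * 9000 ≤ K / B / 9000 * B * 9000 := by gcongr
      _ = K := by field_simp
  · calc (T : ℝ) * g * 47000 ≤ K / g / 47000 * g * 47000 := by gcongr
      _ = K := by field_simp
  · have h1 : lam ≤ 2 * (lam * B * g) := by nlinarith
    have : ((4 * l + 4 : ℕ) : ℝ) ≤ K := by push_cast; linarith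
    exact_mod_cast this
  · have h1 : ((K * (4 * l + 4) : ℕ) : ℝ) < (((R - (4 * l + 3)) * T : ℕ) : ℝ) := by
      rw [Nat.cast_mul, Nat.cast_mul, Nat.cast_sub hRl'.le]
      push_cast
      have h2 : (K : ℝ) / B / 9001 * (K / g / 47001) ≤ (R - (4 * l + 3)) * T := by
        apply mul_le_mul <;> linarith
      refine lt_of_lt_of_le ?_ h2
      have e : (K : ℝ) / B / 9001 * (K / g / 47001) = K * (K / (B * g) / (9001 * 47001)) := by
        field_simp
      rw [e]
      have hKBg : 1.4e10 * lam ≤ K / (B * g) := by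
        rw [le_div_iff₀ (by positivity)]; linarith
      have hKpos : (0 : ℝ) < K := by linarith
      apply mul_lt_mul_of_pos_left _ hKpos
      rw [lt_div_iff₀ (by norm_num)]
      linarith
    exact_mod_cast h1

/-- The zero estimate for `∑ C_{i,l} C(u,i) y^l` at the points `(r + m t, β^r η^t)`: too many zeros
force all coefficients to vanish. -/
theorem two_dim_zero (K L R T m : ℕ) (hRm : R ≤ m) (hm0 : 0 < m) (β η : ℝ) (hβ : 0 < β)
    (hβ1 : β ≠ 1) (hη : 0 < η) (hz : K * (L + 1) < (R - L) * T) (C : ℕ × ℕ × ℕ → ℤ)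
    (h : ∀ r < R, ∀ t < T, ∑ x ∈ Finset.range (K + 1) ×ˢ ({0} ×ˢ Finset.range (L + 1)),
      (C x : ℝ) * (((r + m * t).choose x.1 : ℝ) * ((0 : ℕ).choose x.2.1 : ℝ) *
        (β ^ r * η ^ t) ^ x.2.2) = 0) :
    ∀ x ∈ Finset.range (K + 1) ×ˢ ({0} ×ˢ Finset.range (L + 1)), C x = 0 := by
  classical
  let P : ℕ → Polynomial ℝ := fun l =>
    ∑ i ∈ Finset.range (K + 1), Polynomial.C (C (i, 0, l) : ℝ) * binomP ℝ i
  have hP : ∀ l, (P l).natDegree ≤ K := by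
    intro l
    refine Polynomial.natDegree_sum_le_of_forall_le _ _ ?_
    intro i hi
    refine (Polynomial.natDegree_C_mul_le _ _).trans ((binomP_natDegree ℝ i).trans ?_)
    have := Finset.mem_range.mp hi
    omega
  have hPe : ∀ l a : ℕ, (P l).eval (a : ℝ) =
      ∑ i ∈ Finset.range (K + 1), (C (i, 0, l) : ℝ) * (a.choose i : ℝ) := by
    intro l a
    simp only [P, Polynomial.eval_finsetSum, Polynomial.eval_mul, Polynomial.eval_C, binomP_eval]
  let f : ℕ × ℕ → ℝ := fun p => ((p.1 + m * p.2 : ℕ) : ℝ)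
  let s := (Finset.range (R - L) ×ˢ Finset.range T).image f
  have hdec : ∀ r t : ℕ, r < R → (r + m * t) % m = r ∧ (r + m * t) / m = t := by
    intro r t hr
    rw [Nat.add_mul_mod_self_left, Nat.add_mul_div_left _ _ hm0]
    exact ⟨Nat.mod_eq_of_lt (by omega), by rw [Nat.div_eq_of_lt (by omega)]; omega⟩
  have hs : s.card = (R - L) * T := by
    rw [Finset.card_image_of_injOn, Finset.card_product, Finset.card_range, Finset.card_range]
    intro p hp p' hp' hpp
    simp only [Finset.coe_product, Finset.coe_range, Set.mem_prod, Set.mem_Iio] at hp hp'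
    have h1 : p.1 + m * p.2 = p'.1 + m * p'.2 := by
      simp only [f] at hpp
      exact_mod_cast hpp
    have h2 := hdec p.1 p.2 (by omega)
    have h3 := hdec p'.1 p'.2 (by omega)
    rw [h1] at h2
    exact Prod.ext (h2.1.symm.trans h3.1) (h2.2.symm.trans h3.2)
  have key := Z2 K L P hP 1 β (pow_injective_of_pos hβ hβ1) s
    (fun x => β ^ (⌊x⌋₊ % m) * η ^ (⌊x⌋₊ / m)) (fun x _ => by positivity) (by rw [hs]; exact hz) (by
      intro x hx i hi
      obtain ⟨p, hp, rfl⟩ := Finset.mem_image.mp hx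
      simp only [Finset.mem_product, Finset.mem_range] at hp
      have h2 := hdec p.1 p.2 (by omega)
      have h3 := h (p.1 + i) (by omega) p.2 hp.2
      simp only [f, Nat.floor_natCast, h2.1, h2.2, mul_one]
      have e1 : (((p.1 + m * p.2 : ℕ) : ℝ) + (i : ℝ)) = ((p.1 + i + m * p.2 : ℕ) : ℝ) := by
        push_cast; ring
      have e2 : β ^ p.1 * η ^ p.2 * β ^ i = β ^ (p.1 + i) * η ^ p.2 := by rw [pow_add]; ring
      rw [e1, e2]
      simp only [hPe]
      rw [← h3, Finset.sum_product]
      simp only [Finset.sum_product, Finset.sum_singleton, Finset.sum_mul]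
      rw [Finset.sum_comm]
      refine Finset.sum_congr rfl fun k _ => Finset.sum_congr rfl fun l _ => ?_
      simp only [Nat.choose_self, Nat.cast_one]
      ring)
  intro x hx
  simp only [Finset.mem_product, Finset.mem_range, Finset.mem_singleton] at hx
  obtain ⟨i, j, l⟩ := x
  simp only at hx
  obtain ⟨h1, rfl, h2⟩ := hx
  have hl := key l (by omega)
  have := choose_indep (fun i => (C (i, 0, l) : ℝ)) K (fun a => by rw [← hPe, hl]; simp) i (by omega)
  exact_mod_cast this

/-- The multiplicative data of the third number `γ ∈ ℚ(√5)`, `γ > 0`: a denominator, the conjugate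
and `log γ` are all controlled by the height-like parameter `g`. -/
structure LogData (b : ℕ) (γ g : ℝ) : Prop where
  hb : 2 ≤ b
  pos : 0 < γ
  one_le : 1 ≤ g
  log_le : |log γ| ≤ g
  den : ∃ (δ : ℕ) (ν' : ℝ), 1 ≤ δ ∧ ((δ : ℝ) * γ, ν') ∈ ZPhi ∧ log δ ≤ g ∧ |ν'| ≤ exp g

theorem cube_le_exp (K : ℝ) (hK : 0 ≤ K) : 2 * K ^ 3 ≤ exp (3 * K + 1) := by
  have h1 := Real.add_one_le_exp K
  have h2 := Real.add_one_le_exp (1 : ℝ)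
  have h3 : exp (3 * K + 1) = exp 1 * exp K ^ 3 := by
    rw [← Real.exp_nat_mul, ← Real.exp_add]; congr 1; push_cast; ring
  rw [h3]
  have h4 : K ^ 3 ≤ exp K ^ 3 := pow_le_pow_left₀ hK (by linarith) 3
  nlinarith [pow_pos (exp_pos K) 3]

set_option maxHeartbeats 1000000 in
/-- If `γ^c φ^e` is extremely close to a power of `φ^{-a} b^c` with small exponents `a`, `c`, the
interpolation argument for the two numbers `φ^{-a} b^c`, `γ^c φ^e` already gives a
contradiction. -/
theorem two_dim (b : ℕ) (γ g : ℝ) (hD : LogData b γ g) (n m : ℕ) (lam : ℝ)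
    (hlam : exp lam = n / g) (hl : 30 ≤ lam) (hn : 2e11 * log b * lam ^ 2 * g ≤ n)
    (hΛ : |log γ + n * log goldenRatio - m * log b| ≤ exp (-(2e11 * log b * lam ^ 2 * g)))
    (a c : ℕ) (e : ℤ) (he : e = n * c - m * a) (hac : a ≠ 0 ∨ c ≠ 0)
    (haA : a * log goldenRatio ≤ 190 * log b) (hc : c ≤ 190)
    (heA : |(e : ℝ)| * log goldenRatio ≤ 740 * g) : False := by
  have hb := hD.hb
  have hγ := hD.pos
  have hg := hD.one_le
  have hγg := hD.log_le
  obtain ⟨δ, ν', hδ, hν, hδg, hν'⟩ := hD.den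
  set A := log goldenRatio with hA
  set B := log (b : ℝ) with hBdef
  have hA1 : 0.48 < A := log_phi_gt
  have hA2 : A < 13 / 27 := log_phi_lt
  have hB : 0.69 ≤ B := log_base_ge b hb
  set Λ := log γ + n * A - m * B with hΛdef
  obtain ⟨K, l, R, T, hK1, hl210, hl7, hbudΛ, hRB, hTg, hLK, hLR, hzero, hRle⟩ :=
    params2 B g lam hB hg hl
  have hKr : (1e10 : ℝ) ≤ K := by linarith
  have hK : 1 ≤ K := by
    have : (1 : ℝ) ≤ K := by linarith
    exact_mod_cast this
  have hT0 : 0 < T := by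
    rcases Nat.eq_zero_or_pos T with h | h
    · rw [h] at hzero; omega
    · exact h
  have hlr : (210 : ℝ) ≤ l := by exact_mod_cast hl210
  have hcr : (c : ℝ) ≤ 190 := by exact_mod_cast hc
  have hKl : 210 * (K : ℝ) ≤ K * l := by
    rw [mul_comm]; gcongr
  have hΛK : 2 * (K : ℝ) ^ 3 * |Λ| ≤ exp (-1.48 * (K * l)) := by
    have h1 := cube_le_exp K (by positivity)
    calc 2 * (K : ℝ) ^ 3 * |Λ| ≤ exp (3 * K + 1) * exp (-(2e11 * B * lam ^ 2 * g)) := by gcongr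
      _ = exp (3 * K + 1 - 2e11 * B * lam ^ 2 * g) := by rw [← Real.exp_add]; congr 1
      _ ≤ _ := by rw [Real.exp_le_exp]; linarith
  have hΛ1 : 190 * |Λ| ≤ 1 := by
    have h1 : exp (-1.48 * ((K : ℝ) * l)) ≤ 1 := by
      rw [Real.exp_le_one_iff]
      have : (0 : ℝ) ≤ K * l := by positivity
      linarith
    have h2 : 190 ≤ 2 * (K : ℝ) ^ 3 := by
      have : (1e10 : ℝ) ^ 3 ≤ (K : ℝ) ^ 3 := by gcongr
      linarith
    have h3 : 190 * |Λ| ≤ 2 * (K : ℝ) ^ 3 * |Λ| := by gcongr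
    linarith
  have hΛabs := abs_le.mp (by linarith : |Λ| ≤ 1)
  have hγabs := abs_le.mp hγg
  have hmB1 : m * B ≤ n * A + 2 * g := by linarith [hΛabs.1, hγabs.2]
  have hmB2 : n * A - 2 * g ≤ m * B := by linarith [hΛabs.2, hγabs.1]
  have hg0 : 0 < g := by linarith
  have hB0 : 0 < B := by linarith
  have hm1 : (m : ℝ) ≤ 0.7 * n + 3 * g := by
    have h1 : (m : ℝ) * 0.69 ≤ m * B := by gcongr
    have h2 : (n : ℝ) * A ≤ n * (13 / 27) := by gcongr
    have : (0 : ℝ) ≤ n := Nat.cast_nonneg n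
    linarith
  have hRm : R ≤ m := by
    have h1 : (R : ℝ) * B ≤ m * B := by
      refine le_trans ?_ hmB2
      have h2 : n * 0.48 ≤ n * A := by gcongr
      have h3 : 0.69 * 900 ≤ B * lam ^ 2 := by
        have : (30 : ℝ) ^ 2 ≤ lam ^ 2 := by gcongr
        apply mul_le_mul <;> first | linarith | positivity
      have h4 : (R : ℝ) * B ≤ 1.6e6 * lam * g * B := by gcongr
      have h5 : B * lam * g * 30 ≤ B * lam * g * lam := by gcongr
      have h6 : 0.69 * 900 * g ≤ B * lam ^ 2 * g := by gcongr
      linarith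
    have := le_of_mul_le_mul_right h1 hB0
    exact_mod_cast this
  have hm0 : 0 < m := by omega
  -- `β0 = log (φ^{-a} b^c)` is small, since its `m`-th multiple is `log (γ^c φ^e)` up to `c Λ`.
  set β0 : ℝ := -(a * A) + c * B with hβ0
  have hmβ : m * β0 = e * A + c * log γ - c * Λ := by
    rw [he]; push_cast; rw [hβ0, hΛdef]; ring
  have hmβabs : m * |β0| ≤ 931 * g := by
    have h1 : m * |β0| = |m * β0| := by rw [abs_mul, Nat.abs_cast]
    rw [h1, hmβ]
    have h2 : |e * A + c * log γ - c * Λ| ≤ |(e : ℝ)| * A + c * |log γ| + c * |Λ| := by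
      refine (abs_sub _ _).trans (add_le_add ((abs_add_le _ _).trans (add_le_add ?_ ?_)) ?_)
      · rw [abs_mul, abs_of_pos (by linarith : 0 < A)]
      · rw [abs_mul, Nat.abs_cast]
      · rw [abs_mul, Nat.abs_cast]
    have h3 : c * |log γ| ≤ 190 * g := by gcongr
    have h4 : c * |Λ| ≤ 190 * |Λ| := by gcongr
    linarith
  set L := 4 * l + 3 with hL
  set U : ℝ := R + m * T with hU
  have hU0 : 0 < U := by
    have : (0 : ℝ) < R := by exact_mod_cast (by omega : 0 < R)
    positivity
  let P := Fin R × Fin T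
  let u : P → ℕ := fun σ => σ.1 + m * σ.2
  have huU : ∀ σ, (u σ : ℝ) ≤ U := by
    intro σ
    have h1 : ((σ.1 : ℕ) : ℝ) ≤ R := by exact_mod_cast σ.1.2.le
    have h2 : ((σ.2 : ℕ) : ℝ) ≤ T := by exact_mod_cast σ.2.2.le
    simp only [u, hU]; push_cast
    gcongr
  let y : P → ℝ := fun σ => goldenRatio ^ (-(a * σ.1 : ℤ) + e * σ.2) * (b : ℝ) ^ (c * (σ.1 : ℕ)) *
    γ ^ (c * (σ.2 : ℕ))
  have hbr : (0 : ℝ) < b := by exact_mod_cast (by omega : 0 < b)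
  have hLr : (L : ℝ) = 4 * l + 3 := by rw [hL]; push_cast; ring
  have hL2 : (L : ℝ) ≤ 4.015 * l := by rw [hLr]; linarith
  have hLKr : (L : ℝ) ≤ K := by exact_mod_cast (by omega : L ≤ K)
  have hTK : (T : ℝ) ≤ K := by nlinarith
  have hUb : exp 1 * (|U| + |0| + |0| + K) ≤ K * exp lam := by
    have h1 : exp 1 < 2.7182818286 := Real.exp_one_lt_d9
    have h2 : 31 ≤ exp lam := by linarith [Real.add_one_le_exp lam]
    rw [abs_of_pos hU0, abs_zero, add_zero, add_zero]
    have h3 : (R : ℝ) ≤ K / 6000 := by nlinarith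
    have h4 : m * (T : ℝ) ≤ K * (2e-5 * exp lam + 1e-4) := by
      have h5 : (T : ℝ) ≤ K / (47000 * g) := by
        rw [le_div_iff₀ (by positivity)]; linarith
      calc m * (T : ℝ) ≤ (0.7 * n + 3 * g) * (K / (47000 * g)) := by gcongr
        _ = K * (0.7 / 47000 * (n / g) + 3 / 47000) := by field_simp
        _ ≤ _ := by
            rw [hlam]
            have : 0 ≤ (n : ℝ) / g := by positivity
            gcongr <;> norm_num
    have h6 : (K : ℝ) * 31 ≤ K * exp lam := by gcongr
    calc exp 1 * (U + K) ≤ 2.7182818286 * (K / 6000 + K * (2e-5 * exp lam + 1e-4) + K) := by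
          gcongr
          linarith
      _ ≤ _ := by linarith
  obtain ⟨C, ⟨x0, hx0, hCx0⟩, hC⟩ := aux_poly_log (P := P) (fun σ => u σ / U) (fun _ => 0)
    (by
      intro σ
      rw [abs_of_nonneg (by positivity), div_le_one hU0]
      exact huU σ)
    (by simp) K L (K * l) 0 hK (Or.inr ⟨rfl, fun _ => rfl⟩)
    (Finset.range (K + 1) ×ˢ ({0} ×ˢ Finset.range (L + 1)))
    (by
      intro x hx
      simp only [Finset.mem_product, Finset.mem_range, Finset.mem_singleton] at hx
      omega)
    u (fun _ => 0) U 0 0 (by intro σ; field_simp; ring) (by simp) lam hUb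
    (by simp [hL]; nlinarith)
    (by
      have h1 := Real.add_one_le_exp (K : ℝ)
      have h2 : ((L + 1 : ℕ) : ℝ) ≤ K + 1 := by push_cast; linarith
      simp only [Finset.card_product, Finset.card_range, Finset.card_singleton, one_mul]
      push_cast at h2 ⊢
      calc ((K : ℝ) + 1) * (L + 1) ≤ exp K * exp K := by
            apply mul_le_mul <;> first | linarith | positivity
        _ = exp (K + K) := by rw [Real.exp_add]
        _ ≤ _ := by rw [Real.exp_le_exp]; linarith)
    (U * β0) ((T + 1) * (931 * g))
    (by
      rw [abs_mul, abs_of_pos hU0, hU]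
      have h1 : (R : ℝ) ≤ m := by exact_mod_cast hRm
      calc (R + m * (T : ℝ)) * |β0| ≤ (m + m * (T : ℝ)) * |β0| := by gcongr
        _ = (T + 1) * (m * |β0|) := by ring
        _ ≤ _ := by gcongr)
    y (fun σ => (σ.2 : ℕ) * (c * Λ))
    (by
      intro σ
      simp only [y]
      rw [← Real.exp_log (by positivity : 0 < goldenRatio ^ (-(a * σ.1 : ℤ) + e * σ.2) *
        (b : ℝ) ^ (c * (σ.1 : ℕ)) * γ ^ (c * (σ.2 : ℕ)))]
      rw [Real.log_mul (by positivity) (by positivity), Real.log_mul (by positivity) (by positivity),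
        Real.log_zpow, Real.log_pow, Real.log_pow]
      congr 1
      have : U * β0 * (u σ / U) = u σ * β0 := by field_simp
      rw [this]
      simp only [u]
      push_cast
      linear_combination (((σ.2 : ℕ) : ℝ)) * (-hmβ))
    (by
      intro σ
      have h2 : ((σ.2 : ℕ) : ℝ) ≤ T := by exact_mod_cast σ.2.2.le
      rw [abs_mul, abs_mul, Nat.abs_cast, Nat.abs_cast]
      push_cast
      have h3 : ((σ.2 : ℕ) : ℝ) ≤ K := h2.trans hTK
      have h4 : (σ.2 : ℕ) ≤ K := by exact_mod_cast h3
      have h5 : (c : ℝ) ≤ K := by linarith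
      calc (L : ℝ) * ((σ.2 : ℕ) * (c * |Λ|)) ≤ K * (K * (K * |Λ|)) := by
            refine mul_le_mul hLKr ?_ (by positivity) (by positivity)
            refine mul_le_mul h3 ?_ (by positivity) (by positivity)
            exact mul_le_mul_of_nonneg_right h5 (by positivity)
        _ = K ^ 3 * |Λ| := by ring
        _ ≤ _ := by linarith)
    (L * (T * (190 * g))) (L * (R * (380 * B) + T * (930 * g))) (by positivity) (by positivity)
    (by
      intro σ
      have h1 : ((σ.1 : ℕ) : ℝ) ≤ R := by exact_mod_cast σ.1.2.le
      have h2 : ((σ.2 : ℕ) : ℝ) ≤ T := by exact_mod_cast σ.2.2.le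
      refine arith_point b δ hb hδ γ ν' g hν hδg hν' _ _ _ L _ _ ?_ ?_
      · push_cast
        calc (L : ℝ) * (c * (σ.2 : ℕ) * g) = L * ((σ.2 : ℕ) * (c * g)) := by ring
          _ ≤ _ := by gcongr
      · push_cast
        have h3 : |-((a : ℝ) * (σ.1 : ℕ)) + e * (σ.2 : ℕ)| * A ≤
            R * (190 * B) + T * (740 * g) := by
          calc |-((a : ℝ) * (σ.1 : ℕ)) + e * (σ.2 : ℕ)| * A
              ≤ ((a : ℝ) * (σ.1 : ℕ) + |(e : ℝ)| * (σ.2 : ℕ)) * A := by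
                have h0 : 0 ≤ A := by linarith
                gcongr
                refine (abs_add_le _ _).trans (le_of_eq ?_)
                rw [abs_neg, abs_mul, abs_mul, Nat.abs_cast, Nat.abs_cast, Nat.abs_cast]
            _ = (σ.1 : ℕ) * (a * A) + (σ.2 : ℕ) * (|(e : ℝ)| * A) := by ring
            _ ≤ _ := by
                have h0 : 0 ≤ A := by linarith
                gcongr
        have h4 : (c : ℝ) * (σ.1 : ℕ) * B ≤ R * (190 * B) := by
          calc (c : ℝ) * (σ.1 : ℕ) * B ≤ 190 * R * B := by gcongr
            _ = _ := by ring
        have h5 : (c : ℝ) * (σ.2 : ℕ) * g ≤ T * (190 * g) := by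
          calc (c : ℝ) * (σ.2 : ℕ) * g ≤ 190 * T * g := by gcongr
            _ = _ := by ring
        refine mul_le_mul_of_nonneg_left ?_ (by positivity)
        rw [← hA, ← hBdef]
        linarith)
    (by
      push_cast
      have h1 : ((T : ℝ) + 1) * g ≤ K / 46999 := by linarith
      calc (L : ℝ) * ((T + 1) * (931 * g)) = 931 * (L * ((T + 1) * g)) := by ring
        _ ≤ 931 * (4.015 * l * (K / 46999)) := by gcongr
        _ ≤ _ := by linarith)
    (by
      push_cast
      have h1 : ((T : ℝ) + 1) * g ≤ K / 46999 := by linarith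
      have h2 : (L : ℝ) * ((T + 1) * (931 * g)) ≤ 931 * (4.015 * l * (K / 46999)) := by
        calc (L : ℝ) * ((T + 1) * (931 * g)) = 931 * (L * ((T + 1) * g)) := by ring
        _ ≤ 931 * (4.015 * l * (K / 46999)) := by gcongr
      have h3 : (L : ℝ) * (T * (190 * g)) + L * (R * (380 * B) + T * (930 * g)) ≤
          4.015 * l * (K * (1120 / 47000 + 380 / 9000)) := by
        calc (L : ℝ) * (T * (190 * g)) + L * (R * (380 * B) + T * (930 * g)) =
            L * (1120 * (T * g) + 380 * (R * B)) := by ring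
          _ ≤ 4.015 * l * (1120 * (K / 47000) + 380 * (K / 9000)) := by
              gcongr
              · linarith
              · linarith
          _ = _ := by ring
      have h4 : 4 * (K : ℝ) * (7 * lam) ≤ 4 * K * l := by gcongr
      linarith)
  have hω1 : goldenRatio ^ (-(a : ℤ)) * (b : ℝ) ^ c ≠ 1 := by
    intro h
    rw [zpow_neg, zpow_natCast, inv_mul_eq_one₀ (by positivity)] at h
    exact phi_pow_ne b a c hb hac h
  refine hCx0 (two_dim_zero K L R T m hRm hm0 (goldenRatio ^ (-(a : ℤ)) * (b : ℝ) ^ c)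
    (goldenRatio ^ e * γ ^ c) (by positivity) hω1 (by positivity) hzero C ?_ x0 hx0)
  intro r hr t ht
  have h1 := hC (⟨r, hr⟩, ⟨t, ht⟩)
  simp only [u, y] at h1
  have e1 : goldenRatio ^ (-(a * r : ℤ) + e * t) * (b : ℝ) ^ (c * r) * γ ^ (c * t) =
      (goldenRatio ^ (-(a : ℤ)) * (b : ℝ) ^ c) ^ r * (goldenRatio ^ e * γ ^ c) ^ t := by
    rw [zpow_add₀ (by positivity), mul_pow, mul_pow, pow_mul, pow_mul, ← neg_mul, zpow_mul,
      zpow_mul, zpow_natCast, zpow_natCast]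
    ring
  rw [e1] at h1
  exact h1

/-! ### Counting values of integral linear forms -/

/-- Translating a set `W` of integers lying in an interval of length `D` by the multiples of `e`
produces many values. -/
theorem card_progression (W V : Finset ℤ) (D : ℕ) (α e : ℤ) (he : e ≠ 0) (T : ℕ)
    (hW : ∀ x ∈ W, α ≤ x ∧ x < α + D) (hV : ∀ x ∈ W, ∀ t : ℕ, t < T → x + e * t ∈ V) :
    e.natAbs * (W.card * T) ≤ V.card * (D + e.natAbs) := by
  have he0 : 0 < e.natAbs := Int.natAbs_pos.mpr he
  set q := D / e.natAbs + 1 with hq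
  have hq1 : D < q * e.natAbs := by
    rw [hq, mul_comm]; exact Nat.lt_mul_div_succ D he0
  have hq2 : q * e.natAbs ≤ D + e.natAbs := by
    rw [hq, add_mul, one_mul]
    exact Nat.add_le_add_right (Nat.div_mul_le_self D _) _
  rcases Nat.eq_zero_or_pos T with hT | hT
  · subst hT; simp
  set J := (T - 1) / q + 1 with hJ
  have hq0 : 0 < q := Nat.succ_pos _
  have hJ1 : T ≤ J * q := by
    have := Nat.lt_mul_div_succ (T - 1) hq0
    rw [hJ, mul_comm]; omega
  have hJ2 : ∀ j < J, j * q < T := by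
    intro j hj
    have h1 : j * q ≤ (T - 1) / q * q := Nat.mul_le_mul_right _ (by omega)
    have h2 := Nat.div_mul_le_self (T - 1) q
    omega
  have hcard : W.card * J ≤ V.card := by
    rw [← Finset.card_range J, ← Finset.card_product]
    refine Finset.card_le_card_of_injOn (fun p => p.1 + e * ((p.2 * q : ℕ) : ℤ)) ?_ ?_
    · intro p hp
      simp only [Finset.coe_product, Set.mem_prod, Finset.mem_coe, Finset.mem_range] at hp
      exact hV _ hp.1 _ (hJ2 _ hp.2)
    · intro p hp p' hp' h
      simp only [Finset.coe_product, Set.mem_prod, Finset.mem_coe, Finset.mem_range] at hp hp'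
      have h1 := hW _ hp.1
      have h2 := hW _ hp'.1
      simp only at h
      have h3 : e * q * ((p.2 : ℤ) - p'.2) = p'.1 - p.1 := by push_cast at h; linarith
      have h4 : (p.2 : ℤ) = p'.2 := by
        by_contra hne
        have h5 : 1 ≤ |(p.2 : ℤ) - p'.2| := Int.one_le_abs (sub_ne_zero.mpr hne)
        have h6 : |p'.1 - p.1| < D := by rw [abs_lt]; constructor <;> linarith
        rw [← h3, abs_mul, abs_mul, Nat.abs_cast, Int.abs_eq_natAbs] at h6
        have h7 : (D : ℤ) < e.natAbs * q := by
          have : (D : ℤ) < ((q * e.natAbs : ℕ) : ℤ) := by exact_mod_cast hq1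
          push_cast at this ⊢; linarith
        nlinarith
      rw [h4] at h3
      refine Prod.ext (by linarith) (by exact_mod_cast h4)
  calc e.natAbs * (W.card * T) ≤ e.natAbs * (W.card * (J * q)) := by gcongr
    _ = (W.card * J) * (q * e.natAbs) := by ring
    _ ≤ V.card * (D + e.natAbs) := by gcongr

/-- If `a, c` are coprime and `V` contains all values `c r - a s` over a box with `|V| < R S`, then
`|a| S ≤ |V|`. -/
theorem card_linear (a c : ℤ) (hac : IsCoprime a c) (R S : ℕ) (V : Finset ℤ)
    (hV : ∀ r < R, ∀ s < S, c * (r : ℤ) - a * (s : ℤ) ∈ V) (hRS : V.card < R * S) :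
    a.natAbs * S ≤ V.card ∧ a.natAbs < R := by
  have key : min a.natAbs R * S ≤ V.card := by
    rcases eq_or_ne a 0 with rfl | ha
    · simp
    rw [← Finset.card_range (min a.natAbs R), ← Finset.card_range S, ← Finset.card_product]
    refine Finset.card_le_card_of_injOn (fun p => c * (p.1 : ℤ) - a * (p.2 : ℤ)) ?_ ?_
    · intro p hp
      simp only [Finset.coe_product, Set.mem_prod, Finset.mem_coe, Finset.mem_range] at hp
      exact hV _ (by omega) _ hp.2
    · intro p hp p' hp' h
      simp only [Finset.coe_product, Set.mem_prod, Finset.mem_coe, Finset.mem_range] at hp hp'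
      simp only at h
      have h1 : a ∣ c * ((p.1 : ℤ) - p'.1) := ⟨(p.2 : ℤ) - p'.2, by linarith⟩
      have h2 : a ∣ (p.1 : ℤ) - p'.1 := hac.dvd_of_dvd_mul_left h1
      have h3 : (p.1 : ℤ) - p'.1 = 0 := by
        refine Int.eq_zero_of_abs_lt_dvd ((abs_dvd a _).mpr h2) ?_
        have : |a| = a.natAbs := Int.abs_eq_natAbs a
        rw [abs_lt, this]
        omega
      have h4 : (p.1 : ℤ) = p'.1 := by linarith
      rw [h4] at h
      have h5 : a * (p.2 : ℤ) = a * p'.2 := by linarith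
      have h6 := mul_left_cancel₀ ha h5
      refine Prod.ext (by exact_mod_cast h4) (by exact_mod_cast h6)
  rcases le_or_gt R a.natAbs with h | h
  · rw [min_eq_right h] at key; omega
  · rw [min_eq_left h.le] at key; exact ⟨key, h⟩

/-- The values of `card_linear` translated by the multiples of `e`: here `w` is the number of distinct values
`c r - a s` with `r < |a|` (with `r < R` and `s = 0` if `a = 0`), which lie in an interval of length `2 w`. -/
theorem card_linear_e (a c e : ℤ) (he : e ≠ 0) (hac : IsCoprime a c) (R S T : ℕ) (V : Finset ℤ)
    (hV : ∀ r < R, ∀ s < S, ∀ t < T, e * (t : ℤ) + c * (r : ℤ) - a * (s : ℤ) ∈ V)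
    (hS : 0 < S) (hc : c.natAbs ≤ S) (haR : a.natAbs < R) :
    ∃ w : ℕ, (S ≤ w ∨ R ≤ w) ∧ e.natAbs * (w * T) ≤ V.card * (2 * w + e.natAbs) := by
  classical
  rcases eq_or_ne a 0 with rfl | ha
  · have hc1 : c.natAbs = 1 := by
      rw [isCoprime_zero_left] at hac
      exact Int.isUnit_iff_natAbs_eq.mp hac
    refine ⟨R, Or.inr le_rfl, ?_⟩
    have h1 := card_progression ((Finset.range R).image (fun r : ℕ => c * (r : ℤ))) V (2 * R)
      (-R) e he T ?_ ?_
    · rw [Finset.card_image_of_injective, Finset.card_range] at h1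
      · exact h1
      · intro x y hxy
        have hc0 : c ≠ 0 := by rintro rfl; simp at hc1
        exact_mod_cast mul_left_cancel₀ hc0 hxy
    · intro x hx
      obtain ⟨r, hr, rfl⟩ := Finset.mem_image.mp hx
      have := Finset.mem_range.mp hr
      rcases Int.natAbs_eq_iff.mp hc1 with h | h <;> rw [h] <;> push_cast <;> constructor <;> linarith
    · intro x hx t ht
      obtain ⟨r, hr, rfl⟩ := Finset.mem_image.mp hx
      have := hV r (Finset.mem_range.mp hr) 0 hS t ht
      convert this using 1; push_cast; ring
  · refine ⟨a.natAbs * S, Or.inl ?_, ?_⟩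
    · exact Nat.le_mul_of_pos_left _ (Int.natAbs_pos.mpr ha)
    set W := (Finset.range a.natAbs ×ˢ Finset.range S).image
      (fun p : ℕ × ℕ => c * (p.1 : ℤ) - a * (p.2 : ℤ)) with hW
    have hcW : W.card = a.natAbs * S := by
      rw [hW, Finset.card_image_of_injOn, Finset.card_product, Finset.card_range, Finset.card_range]
      intro p hp p' hp' h
      simp only [Finset.coe_product, Set.mem_prod, Finset.mem_coe, Finset.mem_range] at hp hp'
      simp only at h
      have h1 : a ∣ c * ((p.1 : ℤ) - p'.1) := ⟨(p.2 : ℤ) - p'.2, by linarith⟩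
      have h2 : a ∣ (p.1 : ℤ) - p'.1 := hac.dvd_of_dvd_mul_left h1
      have h3 : (p.1 : ℤ) - p'.1 = 0 := by
        refine Int.eq_zero_of_abs_lt_dvd ((abs_dvd a _).mpr h2) ?_
        have : |a| = a.natAbs := Int.abs_eq_natAbs a
        rw [abs_lt, this]
        omega
      have h4 : (p.1 : ℤ) = p'.1 := by linarith
      rw [h4] at h
      have h5 : a * (p.2 : ℤ) = a * p'.2 := by linarith
      have h6 := mul_left_cancel₀ ha h5
      refine Prod.ext (by exact_mod_cast h4) (by exact_mod_cast h6)
    set k : ℤ := a.natAbs * S with hk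
    have hc' : ∀ p < a.natAbs, (0 ≤ c → 0 ≤ c * (p : ℤ) ∧ c * (p : ℤ) < k) ∧
        (c < 0 → -k < c * (p : ℤ) ∧ c * (p : ℤ) ≤ 0) := by
      intro p hp
      have h1 : (p : ℤ) < a.natAbs := by exact_mod_cast hp
      have h2 : |c| ≤ S := by rw [Int.abs_eq_natAbs]; exact_mod_cast hc
      have h3 := abs_le.mp h2
      have h4 : (0 : ℤ) ≤ p := by positivity
      have h5 : (0 : ℤ) < S := by exact_mod_cast hS
      constructor <;> intro h <;> constructor <;> nlinarith
    have ha' : ∀ s < S, (0 ≤ a → -k < -(a * (s : ℤ)) ∧ -(a * (s : ℤ)) ≤ 0) ∧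
        (a < 0 → 0 ≤ -(a * (s : ℤ)) ∧ -(a * (s : ℤ)) < k) := by
      intro p hp
      have h1 : (p : ℤ) < S := by exact_mod_cast hp
      have h4 : (0 : ℤ) ≤ p := by positivity
      constructor <;> intro h
      · have h6 : (a.natAbs : ℤ) = a := by omega
        rw [hk, h6]
        have : 0 < a := by omega
        constructor <;> nlinarith
      · have h6 : (a.natAbs : ℤ) = -a := by omega
        rw [hk, h6]
        constructor <;> nlinarith
    have h1 := card_progression W V (2 * (a.natAbs * S))
      ((if 0 ≤ c then 0 else -k + 1) + (if 0 ≤ a then -k + 1 else 0)) e he T ?_ ?_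
    · rw [hcW] at h1; exact h1
    · intro x hx
      obtain ⟨p, hp, rfl⟩ := Finset.mem_image.mp hx
      simp only [Finset.mem_product, Finset.mem_range] at hp
      have h1 := hc' p.1 hp.1
      have h2 := ha' p.2 hp.2
      have h3 : ((2 * (a.natAbs * S) : ℕ) : ℤ) = 2 * k := by rw [hk, Nat.cast_mul, Nat.cast_mul]; rfl
      rw [h3]
      generalize c * (p.1 : ℤ) = X at *
      generalize a * (p.2 : ℤ) = Y at *
      split_ifs <;> omega
    · intro x hx t ht
      obtain ⟨p, hp, rfl⟩ := Finset.mem_image.mp hx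
      simp only [Finset.mem_product, Finset.mem_range] at hp
      have := hV p.1 (by omega) p.2 hp.2 t ht
      convert this using 1; ring

/-! ### The auxiliary polynomial -/

section
open MvPolynomial

theorem aeval_mem_Fil (k : Fin 3) (hk : k ≠ 2) (p : Polynomial ℂ) (i : ℕ) (hp : p.natDegree ≤ i) :
    Polynomial.aeval (X k : R3) p ∈ Fil i 0 := by
  rw [Polynomial.aeval_eq_sum_range' (Nat.lt_succ_of_le hp)]
  refine Submodule.sum_mem _ fun j hj => Submodule.smul_mem _ _ ?_
  have h1 := Fil_pow (Fil_X k) j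
  simp only [hk, if_false] at h1
  have := Finset.mem_range.mp hj
  exact Fil_mono (by omega) (by omega) h1

/-- The polynomial `∑ c_{i,j,l} C(X₀,i) C(X₁,j) X₂^l` over an index set `I`. -/
noncomputable def interpPoly (I : Finset (ℕ × ℕ × ℕ)) (c : ℕ × ℕ × ℕ → ℤ) : R3 :=
  ∑ x ∈ I, C (c x : ℂ) * (Polynomial.aeval (X 0 : R3) (binomP ℂ x.1) *
    Polynomial.aeval (X 1 : R3) (binomP ℂ x.2.1) * X 2 ^ x.2.2)

theorem interpPoly_mem (I : Finset (ℕ × ℕ × ℕ)) (c : ℕ × ℕ × ℕ → ℤ) (K L : ℕ)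
    (hI : ∀ x ∈ I, x.1 + x.2.1 ≤ K ∧ x.2.2 ≤ L) : interpPoly I c ∈ Fil K L := by
  refine Submodule.sum_mem _ fun x hx => ?_
  have h1 := aeval_mem_Fil 0 (by decide) _ _ (binomP_natDegree ℂ x.1)
  have h2 := aeval_mem_Fil 1 (by decide) _ _ (binomP_natDegree ℂ x.2.1)
  have h3 := Fil_pow (Fil_X 2) x.2.2
  have h4 := Fil_mul (Fil_C (c x)) (Fil_mul (Fil_mul h1 h2) h3)
  have := hI x hx
  refine Fil_mono ?_ ?_ h4 <;> simp <;> omega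

theorem interpPoly_eval (I : Finset (ℕ × ℕ × ℕ)) (c : ℕ × ℕ × ℕ → ℤ) (a a' : ℕ) (w : ℂ) :
    eval ![(a : ℂ), (a' : ℂ), w] (interpPoly I c) =
      ∑ x ∈ I, (c x : ℂ) * ((a.choose x.1 : ℂ) * (a'.choose x.2.1 : ℂ) * w ^ x.2.2) := by
  have h : ∀ (k : Fin 3) (p : Polynomial ℂ) (g : Fin 3 → ℂ),
      eval g (Polynomial.aeval (X k : R3) p) = p.eval (g k) := by
    intro k p g
    have : eval g (Polynomial.aeval (X k : R3) p) =
        (MvPolynomial.aeval g) (Polynomial.aeval (X k : R3) p) := by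
      rw [MvPolynomial.aeval_eq_eval]
    rw [this, ← Polynomial.aeval_algHom_apply, MvPolynomial.aeval_X]
    rfl
  rw [interpPoly, map_sum]
  refine Finset.sum_congr rfl fun x _ => ?_
  simp only [map_mul, map_pow, eval_C, eval_X, h, Matrix.cons_val_zero, Matrix.cons_val_one,
    binomP_eval]
  rfl

theorem interpPoly_eq_zero (I : Finset (ℕ × ℕ × ℕ)) (c : ℕ × ℕ × ℕ → ℤ) (h : interpPoly I c = 0) :
    ∀ x ∈ I, c x = 0 := by
  classical
  let N := I.sup (fun x => x.1 + x.2.1 + x.2.2)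
  have hN : ∀ x ∈ I, x.1 + x.2.1 + x.2.2 ≤ N := fun x hx =>
    Finset.le_sup (f := fun x : ℕ × ℕ × ℕ => x.1 + x.2.1 + x.2.2) hx
  let c' : ℕ × ℕ × ℕ → ℂ := fun x => if x ∈ I then (c x : ℂ) else 0
  have h1 : ∀ (a a' : ℕ) (w : ℂ), ∑ i ∈ Finset.range (N + 1),
      (∑ j ∈ Finset.range (N + 1), (∑ l ∈ Finset.range (N + 1), c' (i, j, l) * w ^ l) *
        (a'.choose j : ℂ)) * (a.choose i : ℂ) = 0 := by
    intro a a' w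
    have h2 := interpPoly_eval I c a a' w
    rw [h, map_zero] at h2
    rw [h2]
    have h3 : I ⊆ Finset.range (N + 1) ×ˢ (Finset.range (N + 1) ×ˢ Finset.range (N + 1)) := by
      intro x hx
      have := hN x hx
      simp only [Finset.mem_product, Finset.mem_range]; omega
    have h4 : ∑ x ∈ I, (c x : ℂ) * ((a.choose x.1 : ℂ) * (a'.choose x.2.1 : ℂ) * w ^ x.2.2) =
        ∑ x ∈ I, c' x * ((a.choose x.1 : ℂ) * (a'.choose x.2.1 : ℂ) * w ^ x.2.2) :=
      Finset.sum_congr rfl fun x hx => by simp only [c', if_pos hx]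
    rw [h4, Finset.sum_subset h3 (fun x _ hx => by simp only [c', if_neg hx, zero_mul])]
    simp only [Finset.sum_product, Finset.sum_mul]
    refine Finset.sum_congr rfl fun i _ => Finset.sum_congr rfl fun j _ =>
      Finset.sum_congr rfl fun l _ => ?_
    ring
  intro x hx
  have hxN := hN x hx
  have h2 : ∀ w : ℂ, ∑ l ∈ Finset.range (N + 1), c' (x.1, x.2.1, l) * w ^ l = 0 := by
    intro w
    have h3 := fun a' => choose_indep _ N (fun a => h1 a a' w) x.1 (by omega)
    exact choose_indep _ N h3 x.2.1 (by omega)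
  have h3 : (∑ l ∈ Finset.range (N + 1), Polynomial.C (c' (x.1, x.2.1, l)) * Polynomial.X ^ l) = 0 := by
    refine Polynomial.funext fun w => ?_
    simp only [Polynomial.eval_finsetSum, Polynomial.eval_mul, Polynomial.eval_C, Polynomial.eval_pow,
      Polynomial.eval_X, Polynomial.eval_zero]
    exact h2 w
  have h4 := congrArg (fun p => Polynomial.coeff p x.2.2) h3
  simp only [Polynomial.finsetSum_coeff, Polynomial.coeff_C_mul_X_pow, Polynomial.coeff_zero] at h4
  rw [Finset.sum_ite_eq, if_pos (Finset.mem_range.mpr (by omega))] at h4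
  simp only [c', Prod.mk.eta, if_pos hx] at h4
  exact_mod_cast h4

end

/-! ### The translations attached to the linear form -/

/-- The box `[0,R) × [0,S) × [0,T)` in `ℤ³`. -/
def box3 (R S T : ℕ) : Finset (ℤ × ℤ × ℤ) :=
  (Finset.range R ×ˢ (Finset.range S ×ˢ Finset.range T)).image
    (fun p => ((p.1 : ℤ), (p.2.1 : ℤ), (p.2.2 : ℤ)))

theorem mem_box3 (R S T : ℕ) (g : ℤ × ℤ × ℤ) : g ∈ box3 R S T ↔
    ∃ r < R, ∃ s < S, ∃ t < T, g = ((r : ℤ), (s : ℤ), (t : ℤ)) := by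
  constructor
  · intro h
    obtain ⟨p, hp, rfl⟩ := Finset.mem_image.mp h
    simp only [Finset.mem_product, Finset.mem_range] at hp
    exact ⟨p.1, hp.1, p.2.1, hp.2.1, p.2.2, hp.2.2, rfl⟩
  · rintro ⟨r, hr, s, hs, t, ht, rfl⟩
    exact Finset.mem_image.mpr ⟨(r, s, t), by simp [hr, hs, ht], rfl⟩

theorem card_box3 (R S T : ℕ) : (box3 R S T).card = R * (S * T) := by
  rw [box3, Finset.card_image_of_injective, Finset.card_product, Finset.card_product,
    Finset.card_range, Finset.card_range, Finset.card_range]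
  rintro ⟨a, b, c⟩ ⟨a', b', c'⟩ h
  simp only [Prod.mk.injEq, Nat.cast_inj] at h
  simp [h]

theorem box3_mono (R S T T' : ℕ) (h : T ≤ T') : box3 R S T ⊆ box3 R S T' := by
  intro g hg
  rw [mem_box3] at hg ⊢
  obtain ⟨r, hr, s, hs, t, ht, rfl⟩ := hg
  exact ⟨r, hr, s, hs, t, by omega, rfl⟩

theorem zero_mem_box3 (R S T : ℕ) (hR : 0 < R) (hS : 0 < S) (hT : 0 < T) : 0 ∈ box3 R S T :=
  (mem_box3 _ _ _ _).mpr ⟨0, hR, 0, hS, 0, hT, rfl⟩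

/-- The translations `(u, v, w) = (nt + r, mt + s, φ^{-r} b^s γ^t)` indexed
by `(r, s, t) ∈ ℤ³`. -/
noncomputable def logTrans (b n m : ℕ) (γ : ℝ) (hb : 2 ≤ b) (hγ : 0 < γ) : TransData (ℤ × ℤ × ℤ) where
  u := { toFun := fun g => ((n * g.2.2 + g.1 : ℤ) : ℂ), map_zero' := by simp,
         map_add' := by intro x y; simp only [Prod.fst_add, Prod.snd_add]; push_cast; ring }
  v := { toFun := fun g => ((m * g.2.2 + g.2.1 : ℤ) : ℂ), map_zero' := by simp,
         map_add' := by intro x y; simp only [Prod.fst_add, Prod.snd_add]; push_cast; ring }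
  w := fun g => ((goldenRatio ^ (-g.1) * (b : ℝ) ^ g.2.1 * γ ^ g.2.2 : ℝ) : ℂ)
  w_zero := by simp
  w_add := by
    intro x y
    have hb0 : (b : ℝ) ≠ 0 := by exact_mod_cast (by omega : b ≠ 0)
    rw [← Complex.ofReal_mul]
    congr 1
    simp only [Prod.fst_add, Prod.snd_add, neg_add]
    rw [zpow_add₀ goldenRatio_pos.ne', zpow_add₀ hb0, zpow_add₀ hγ.ne']
    ring
  w_inj := by
    intro g hg i j hij
    have hb0 : (0 : ℝ) < b := by exact_mod_cast (by omega : 0 < b)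
    refine pow_injective_of_pos (x := goldenRatio ^ (-g.1) * (b : ℝ) ^ g.2.1 * γ ^ g.2.2)
      (by positivity) ?_ ?_
    · intro h; apply hg; rw [h]; simp
    · simp only at hij ⊢
      exact_mod_cast hij

theorem logTrans_u (b n m : ℕ) (γ : ℝ) (hb : 2 ≤ b) (hγ : 0 < γ) (g : ℤ × ℤ × ℤ) :
    (logTrans b n m γ hb hγ).u g = ((n * g.2.2 + g.1 : ℤ) : ℂ) := rfl
theorem logTrans_v (b n m : ℕ) (γ : ℝ) (hb : 2 ≤ b) (hγ : 0 < γ) (g : ℤ × ℤ × ℤ) :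
    (logTrans b n m γ hb hγ).v g = ((m * g.2.2 + g.2.1 : ℤ) : ℂ) := rfl
theorem logTrans_w (b n m : ℕ) (γ : ℝ) (hb : 2 ≤ b) (hγ : 0 < γ) (g : ℤ × ℤ × ℤ) :
    (logTrans b n m γ hb hγ).w g =
      ((goldenRatio ^ (-g.1) * (b : ℝ) ^ g.2.1 * γ ^ g.2.2 : ℝ) : ℂ) := rfl

/-- The box injects into the `(u, v)`-plane as long as `R ≤ n`. -/
theorem logTrans_sep (b n m : ℕ) (γ : ℝ) (hb : 2 ≤ b) (hγ : 0 < γ) (R S T : ℕ) (hR : R ≤ n) :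
    ∀ σ ∈ box3 R S T, ∀ τ ∈ box3 R S T, σ ≠ τ →
      (logTrans b n m γ hb hγ).u (τ - σ) ≠ 0 ∨ (logTrans b n m γ hb hγ).v (τ - σ) ≠ 0 := by
  intro σ hσ τ hτ hne
  rw [mem_box3] at hσ hτ
  obtain ⟨r, hr, s, hs, t, ht, rfl⟩ := hσ
  obtain ⟨r', hr', s', hs', t', ht', rfl⟩ := hτ
  by_contra! h
  rw [logTrans_u, logTrans_v] at h
  obtain ⟨h1, h2⟩ := h
  simp only [Prod.mk_sub_mk] at h1 h2
  have h1' : (n : ℤ) * (t' - t) + (r' - r) = 0 := by exact_mod_cast h1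
  have h2' : (m : ℤ) * (t' - t) + (s' - s) = 0 := by exact_mod_cast h2
  have h3 : (t' : ℤ) - t = 0 := by
    by_contra h0
    have h5 : 1 ≤ |(t' : ℤ) - t| := Int.one_le_abs h0
    have h6 : (n : ℤ) * |(t' : ℤ) - t| = |(r' : ℤ) - r| := by
      rw [show (n : ℤ) * |(t' : ℤ) - t| = |(n : ℤ) * ((t' : ℤ) - t)| by
        rw [abs_mul, Nat.abs_cast]]
      rw [show (n : ℤ) * ((t' : ℤ) - t) = -((r' : ℤ) - r) by linarith, abs_neg]
    have h7 : |(r' : ℤ) - r| < n := by rw [abs_lt]; omega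
    nlinarith
  rw [h3] at h1' h2'
  apply hne
  simp only [Prod.mk.injEq]
  refine ⟨?_, ?_, ?_⟩ <;> linarith

theorem phi_pow_mul_inj (b : ℕ) (hb : 2 ≤ b) (r r' s s' : ℕ) (hr : r ≤ r')
    (h : goldenRatio ^ r' * (b : ℝ) ^ s = goldenRatio ^ r * (b : ℝ) ^ s') : r = r' ∧ s = s' := by
  have hb1 : (1 : ℝ) < b := by exact_mod_cast (by omega : 1 < b)
  have hp := goldenRatio_pos
  obtain ⟨k, rfl⟩ := Nat.exists_eq_add_of_le hr
  rw [pow_add, mul_assoc] at h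
  have h1 := mul_left_cancel₀ (by positivity) h
  rcases le_total s s' with hs | hs
  · obtain ⟨j, rfl⟩ := Nat.exists_eq_add_of_le hs
    rw [pow_add, mul_comm] at h1
    have h2 := mul_left_cancel₀ (by positivity) h1
    by_contra h3
    exact phi_pow_ne b k j hb (by omega) h2
  · obtain ⟨j, rfl⟩ := Nat.exists_eq_add_of_le hs
    rw [pow_add, mul_left_comm] at h1
    have h2 : goldenRatio ^ k * (b : ℝ) ^ j = 1 := by
      have : (b : ℝ) ^ s' ≠ 0 := by positivity
      exact mul_left_cancel₀ this (by linarith)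
    have h3 : (1 : ℝ) ≤ goldenRatio ^ k := one_le_pow₀ one_lt_goldenRatio.le
    have h4 : (1 : ℝ) ≤ (b : ℝ) ^ j := one_le_pow₀ hb1.le
    have h5 : goldenRatio ^ k = (b : ℝ) ^ j := by nlinarith
    by_contra h6
    exact phi_pow_ne b k j hb (by omega) h5

theorem logTrans_winj (b n m : ℕ) (γ : ℝ) (hb : 2 ≤ b) (hγ : 0 < γ) (R S : ℕ) :
    Set.InjOn (logTrans b n m γ hb hγ).w (box3 R S 1) := by
  intro σ hσ τ hτ h
  rw [Finset.mem_coe, mem_box3] at hσ hτ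
  obtain ⟨r, hr, s, hs, t, ht, rfl⟩ := hσ
  obtain ⟨r', hr', s', hs', t', ht', rfl⟩ := hτ
  obtain rfl : t = 0 := by omega
  obtain rfl : t' = 0 := by omega
  rw [logTrans_w, logTrans_w] at h
  have h1 := Complex.ofReal_injective h
  simp only [Nat.cast_zero, zpow_zero, mul_one, zpow_natCast, zpow_neg] at h1
  have hp := goldenRatio_pos
  have h2 : goldenRatio ^ r' * (b : ℝ) ^ s = goldenRatio ^ r * (b : ℝ) ^ s' := by
    field_simp at h1
    linarith
  rcases le_total r r' with hrr | hrr
  · obtain ⟨e1, e2⟩ := phi_pow_mul_inj b hb r r' s s' hrr h2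
    rw [e1, e2]
  · obtain ⟨e1, e2⟩ := phi_pow_mul_inj b hb r' r s' s hrr h2.symm
    rw [e1, e2]

/-- If the projection of the box along a direction `(a, c)` has at most `N` values, then the direction
has small coordinates. -/
theorem degenerate_direction (b n m : ℕ) (γ : ℝ) (hb : 2 ≤ b) (hγ : 0 < γ) (R S T N : ℕ)
    (hT : 0 < T) (hRS : N < R * S) (a' c' : ℤ) (hac : a' ≠ 0 ∨ c' ≠ 0)
    (hcard : ((box3 R S T).image (fun σ => (c' : ℂ) * (logTrans b n m γ hb hγ).u σ -
      (a' : ℂ) * (logTrans b n m γ hb hγ).v σ)).card ≤ N) :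
    ∃ a c : ℤ, (a ≠ 0 ∨ c ≠ 0) ∧ a.natAbs * S ≤ N ∧ c.natAbs * R ≤ N ∧
      (n * c - m * a ≠ 0 → ∃ w : ℕ, (S ≤ w ∨ R ≤ w) ∧
        (n * c - m * a).natAbs * (w * T) ≤ N * (2 * w + (n * c - m * a).natAbs)) := by
  classical
  have hg : 0 < Int.gcd a' c' := by
    rw [Int.gcd_pos_iff]; exact hac
  obtain ⟨a, ha⟩ : (Int.gcd a' c' : ℤ) ∣ a' := Int.gcd_dvd_left ..
  obtain ⟨c, hc⟩ : (Int.gcd a' c' : ℤ) ∣ c' := Int.gcd_dvd_right ..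
  have hg' : (Int.gcd a' c' : ℤ) ≠ 0 := by exact_mod_cast hg.ne'
  have hcop : IsCoprime a c := by
    have h1 := Int.gcd_eq_gcd_ab a' c'
    refine ⟨Int.gcdA a' c', Int.gcdB a' c', ?_⟩
    apply mul_left_cancel₀ hg'
    generalize (Int.gcd a' c' : ℤ) = G at *
    generalize Int.gcdA a' c' = A at *
    generalize Int.gcdB a' c' = B at *
    rw [ha, hc] at h1
    linear_combination -h1
  have hac0 : a ≠ 0 ∨ c ≠ 0 := by
    by_contra! h
    rw [h.1] at ha; rw [h.2] at hc
    simp only [mul_zero] at ha hc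
    rcases hac with h | h <;> exact h (by assumption)
  set f : ℤ × ℤ × ℤ → ℤ := fun g => (n * c - m * a) * g.2.2 + c * g.1 - a * g.2.1 with hf
  set V := (box3 R S T).image f with hV
  have hVc : V.card ≤ N := by
    refine le_trans (le_of_eq ?_) hcard
    have e : (box3 R S T).image (fun σ => (c' : ℂ) * (logTrans b n m γ hb hγ).u σ -
      (a' : ℂ) * (logTrans b n m γ hb hγ).v σ) =
        V.image (fun x : ℤ => (Int.gcd a' c' : ℂ) * (x : ℂ)) := by
      rw [hV, Finset.image_image]
      refine Finset.image_congr fun g _ => ?_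
      simp only [Function.comp, logTrans_u, logTrans_v, hf]
      have ha2 : (a' : ℂ) = (Int.gcd a' c' : ℂ) * a := by exact_mod_cast congrArg (Int.cast : ℤ → ℂ) ha
      have hc2 : (c' : ℂ) = (Int.gcd a' c' : ℂ) * c := by exact_mod_cast congrArg (Int.cast : ℤ → ℂ) hc
      generalize (Int.gcd a' c' : ℂ) = G at *
      rw [ha2, hc2]
      push_cast
      ring
    rw [e]
    refine (Finset.card_image_of_injective V ?_).symm
    intro x y hxy
    have : (Int.gcd a' c' : ℂ) ≠ 0 := by exact_mod_cast hg.ne'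
    exact_mod_cast mul_left_cancel₀ this hxy
  have hmem : ∀ r < R, ∀ s < S, ∀ t < T, (n * c - m * a) * (t : ℤ) + c * (r : ℤ) - a * (s : ℤ) ∈ V :=
    fun r hr s hs t ht => Finset.mem_image.mpr
      ⟨((r : ℤ), (s : ℤ), (t : ℤ)), (mem_box3 _ _ _ _).mpr ⟨r, hr, s, hs, t, ht, rfl⟩, rfl⟩
  have hmem0 : ∀ r < R, ∀ s < S, c * (r : ℤ) - a * (s : ℤ) ∈ V := by
    intro r hr s hs
    have := hmem r hr s hs 0 hT
    simpa using this
  obtain ⟨h1, h2⟩ := card_linear a c hcop R S V hmem0 (by omega)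
  have hRS' : N < S * R := by rw [mul_comm]; exact hRS
  obtain ⟨h3, h4⟩ := card_linear c a hcop.symm S R (V.image (fun x => -x)) (by
    intro r hr s hs
    refine Finset.mem_image.mpr ⟨_, hmem0 s hs r hr, by ring⟩) (by
    refine lt_of_le_of_lt Finset.card_image_le (by omega))
  have h3' := h3.trans (Finset.card_image_le.trans hVc)
  refine ⟨a, c, hac0, h1.trans hVc, h3', ?_⟩
  intro he
  obtain ⟨w, hw, h5⟩ := card_linear_e a c _ he hcop R S T V hmem (by omega) h4.le h2
  exact ⟨w, hw, h5.trans (Nat.mul_le_mul_right _ hVc)⟩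

/-! ### Choice of parameters -/

theorem floor_bounds (K y : ℝ) (c : ℕ) (hy : 0 < y) (hc : 0 < c) (hc' : c ≤ 3000)
    (hK : 1e9 ≤ K / y) :
    (⌊K / (c * y)⌋₊ : ℝ) * y * c ≤ K ∧ K / y / (c + 0.1) ≤ (⌊K / (c * y)⌋₊ : ℝ) := by
  have hcr : (0 : ℝ) < c := by exact_mod_cast hc
  have hcr1 : (1 : ℝ) ≤ c := by exact_mod_cast hc
  have hcr' : (c : ℝ) ≤ 3000 := by exact_mod_cast hc'
  have e : K / (c * y) = K / y / c := by field_simp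
  have h0 : 0 ≤ K / (c * y) := by rw [e]; positivity
  have h1 := Nat.floor_le h0
  have h2 := Nat.lt_floor_add_one (K / (c * y))
  constructor
  · calc (⌊K / (c * y)⌋₊ : ℝ) * y * c ≤ K / (c * y) * y * c := by gcongr
      _ = K := by field_simp
  · rw [e] at h2 ⊢
    have h3 : K / y / (c + 0.1) + 1 ≤ K / y / c := by
      rw [div_add_one (by positivity), div_le_div_iff₀ (by positivity) hcr]
      nlinarith
    linarith

set_option maxHeartbeats 1000000 in
/-- Choice of parameters for the two-dimensional interpolation problem. -/
theorem params3 (A B g lam : ℝ) (hA1 : 0.48 < A) (hA2 : A < 13 / 27) (hB : 0.69 ≤ B) (hg : 1 ≤ g)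
    (hl : 30 ≤ lam) :
    ∃ K l R1 R2 R3 S1 S2 S3 T1 T2 T3 : ℕ, 1e10 * g ≤ (K : ℝ) ∧ (K : ℝ) ≤ 1.1e10 * (lam * B * g) ∧
      150 ≤ l ∧ 5 * lam ≤ l ∧
      3 * (K : ℝ) + 1 + 1.48 * (K * l) ≤ 2e11 * B * lam ^ 2 * g ∧
      ((R1 + R2 + R3 : ℕ) : ℝ) * A * 150 ≤ K ∧ ((S1 + S2 + S3 : ℕ) : ℝ) * B * 150 ≤ K ∧
      ((T1 + T2 + T3 : ℕ) : ℝ) * g * 300 ≤ K ∧ 8 * (l + 1) ≤ K ∧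
      K + 8 * (l + 1) < R1 * S1 ∧ 3 * K ^ 2 < R2 * (S2 * T2) ∧
      3 * K ^ 2 * (8 * (l + 1)) < R2 * S2 * K ∧ 3 * K ^ 2 * (8 * (l + 1)) < R3 * (S3 * T3) ∧
      0 < T1 ∧ (K + 8 * (l + 1) : ℝ) * A ≤ 190 * B * S1 ∧ (K + 8 * (l + 1) : ℝ) ≤ 190 * R1 ∧
      (K + 8 * (l + 1) : ℝ) ≤ 0.001 * (S1 * T1) ∧ (K + 8 * (l + 1) : ℝ) ≤ 0.001 * (R1 * T1) ∧
      2 * (K + 8 * (l + 1) : ℝ) * A ≤ 739 * g * T1 := by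
  have hB0 : 0 < B := by linarith
  have hA0 : 0 < A := by linarith
  have hg0 : 0 < g := by linarith
  have hlB : 20 ≤ lam * B := by nlinarith
  have hlg : 30 ≤ lam * g := by nlinarith
  have hX : 20 * g ≤ lam * B * g := by nlinarith
  set K := ⌈1e10 * (lam * B * g)⌉₊ with hK
  have hK1 : 1e10 * (lam * B * g) ≤ K := Nat.le_ceil _
  have hK2 : (K : ℝ) < 1e10 * (lam * B * g) + 1 := Nat.ceil_lt_add_one (by positivity)
  set l := ⌈5 * lam⌉₊ with hldef
  have hl1 : 5 * lam ≤ l := Nat.le_ceil _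
  have hl2 : (l : ℝ) < 5 * lam + 1 := Nat.ceil_lt_add_one (by positivity)
  have hKpos : (0 : ℝ) < K := by linarith
  have hKA : 2e11 * g ≤ K / A := by rw [le_div_iff₀ hA0]; nlinarith
  have hKB : 1e10 * (lam * g) ≤ K / B := by rw [le_div_iff₀ hB0]; linarith
  have hKg : 1e10 * (lam * B) ≤ K / g := by rw [le_div_iff₀ hg0]; linarith
  have hlamg : lam ≤ 2 * (lam * B * g) := by nlinarith
  have hLK : (8 * (l + 1) : ℝ) ≤ 1e-6 * K := by linarith
  obtain ⟨r1, r1'⟩ := floor_bounds K A 375 hA0 (by norm_num) (by norm_num) (by linarith)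
  obtain ⟨r2, r2'⟩ := floor_bounds K A 1500 hA0 (by norm_num) (by norm_num) (by linarith)
  obtain ⟨r3, r3'⟩ := floor_bounds K A 300 hA0 (by norm_num) (by norm_num) (by linarith)
  obtain ⟨s1, s1'⟩ := floor_bounds K B 375 hB0 (by norm_num) (by norm_num) (by linarith)
  obtain ⟨s2, s2'⟩ := floor_bounds K B 1500 hB0 (by norm_num) (by norm_num) (by linarith)
  obtain ⟨s3, s3'⟩ := floor_bounds K B 300 hB0 (by norm_num) (by norm_num) (by linarith)
  obtain ⟨t1, t1'⟩ := floor_bounds K g 750 hg0 (by norm_num) (by norm_num) (by linarith)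
  obtain ⟨t2, t2'⟩ := floor_bounds K g 3000 hg0 (by norm_num) (by norm_num) (by linarith)
  obtain ⟨t3, t3'⟩ := floor_bounds K g 600 hg0 (by norm_num) (by norm_num) (by linarith)
  set R1 := ⌊(K : ℝ) / ((375 : ℕ) * A)⌋₊
  set R2 := ⌊(K : ℝ) / ((1500 : ℕ) * A)⌋₊
  set R3 := ⌊(K : ℝ) / ((300 : ℕ) * A)⌋₊
  set S1 := ⌊(K : ℝ) / ((375 : ℕ) * B)⌋₊
  set S2 := ⌊(K : ℝ) / ((1500 : ℕ) * B)⌋₊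
  set S3 := ⌊(K : ℝ) / ((300 : ℕ) * B)⌋₊
  set T1 := ⌊(K : ℝ) / ((750 : ℕ) * g)⌋₊
  set T2 := ⌊(K : ℝ) / ((3000 : ℕ) * g)⌋₊
  set T3 := ⌊(K : ℝ) / ((600 : ℕ) * g)⌋₊
  push_cast at r1 r1' r2 r2' r3 r3' s1 s1' s2 s2' s3 s3' t1 t1' t2 t2' t3 t3'
  have hKA0 : 0 ≤ (K : ℝ) / A := by positivity
  have hKB0 : 0 ≤ (K : ℝ) / B := by positivity
  have hKg0 : 0 ≤ (K : ℝ) / g := by positivity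
  have hAB : 2e10 * (lam * g) ≤ K / (A * B) := by
    rw [le_div_iff₀ (by positivity)]
    have : lam * g * (A * B) ≤ lam * g * (0.5 * B) := by gcongr; linarith
    linarith
  have hABg : 2e10 * lam ≤ K / (A * B * g) := by
    rw [le_div_iff₀ (by positivity)]
    have : lam * (A * B * g) ≤ lam * (0.5 * B * g) := by gcongr; linarith
    linarith
  have hBg : 1e10 * lam ≤ K / (B * g) := by
    rw [le_div_iff₀ (by positivity)]; linarith
  have hAg : 1e11 ≤ K / (A * g) := by
    rw [le_div_iff₀ (by positivity)]
    have : A * g ≤ 1 * g := by gcongr; linarith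
    linarith
  have mulRS : ∀ (x y : ℝ) (c d : ℝ), 0 < c → 0 < d → K / A / c ≤ x → K / B / d ≤ y →
      K * (K / (A * B) / (c * d)) ≤ x * y := by
    intro x y c d hc hd hx hy
    have e : (K : ℝ) * (K / (A * B) / (c * d)) = K / A / c * (K / B / d) := by field_simp
    rw [e]
    apply mul_le_mul hx hy (by positivity)
    exact le_trans (by positivity) hx
  have mul3 : ∀ (x y z : ℝ) (c d f : ℝ), 0 < c → 0 < d → 0 < f → K / A / c ≤ x → K / B / d ≤ y →
      K / g / f ≤ z → K ^ 2 * (K / (A * B * g) / (c * d * f)) ≤ x * (y * z) := by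
    intro x y z c d f hc hd hf hx hy hz
    have e : (K : ℝ) ^ 2 * (K / (A * B * g) / (c * d * f)) = K / A / c * (K / B / d * (K / g / f)) := by
      field_simp
    rw [e]
    have hy0 : 0 ≤ y := le_trans (by positivity) hy
    have hz0 : 0 ≤ z := le_trans (by positivity) hz
    have hx0 : 0 ≤ x := le_trans (by positivity) hx
    gcongr
  have hlr : (l : ℝ) + 1 ≤ 5.07 * lam := by linarith
  refine ⟨K, l, R1, R2, R3, S1, S2, S3, T1, T2, T3, by linarith, by linarith, ?_, hl1, ?_, ?_, ?_, ?_,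
    ?_, ?_, ?_, ?_, ?_, ?_, ?_, ?_, ?_, ?_, ?_⟩
  · have : (150 : ℝ) ≤ l := by linarith
    exact_mod_cast this
  · have h1 : (l : ℝ) ≤ 5.034 * lam := by linarith
    have h2 : (K : ℝ) ≤ 1.00001e10 * (lam * B * g) := by linarith
    have h3 : (K : ℝ) * l ≤ 1.00001e10 * (lam * B * g) * (5.034 * lam) := by
      apply mul_le_mul h2 h1 <;> positivity
    have h4 : (lam * B * g) * 30 ≤ lam * B * g * lam := by gcongr
    nlinarith
  · push_cast; linarith
  · push_cast; linarith
  · push_cast; linarith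
  · have : ((8 * (l + 1) : ℕ) : ℝ) ≤ K := by push_cast; linarith
    exact_mod_cast this
  · have h1 := mulRS R1 S1 _ _ (by norm_num) (by norm_num) r1' s1'
    have h2 : ((K + 8 * (l + 1) : ℕ) : ℝ) < ((R1 * S1 : ℕ) : ℝ) := by
      push_cast
      refine lt_of_lt_of_le ?_ h1
      have : (2 : ℝ) ≤ K / (A * B) / ((375 + 0.1) * (375 + 0.1)) := by
        rw [le_div_iff₀ (by norm_num)]; linarith
      have h3 : (K : ℝ) * 2 ≤ K * (K / (A * B) / ((375 + 0.1) * (375 + 0.1))) := by gcongr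
      linarith
    exact_mod_cast h2
  · have h1 := mul3 R2 S2 T2 _ _ _ (by norm_num) (by norm_num) (by norm_num) r2' s2' t2'
    have h2 : ((3 * K ^ 2 : ℕ) : ℝ) < ((R2 * (S2 * T2) : ℕ) : ℝ) := by
      push_cast
      refine lt_of_lt_of_le ?_ h1
      rw [mul_comm]
      apply mul_lt_mul_of_pos_left _ (by positivity)
      rw [lt_div_iff₀ (by norm_num)]; linarith
    exact_mod_cast h2
  · have h1 := mulRS R2 S2 _ _ (by norm_num) (by norm_num) r2' s2'
    have h2 : ((3 * K ^ 2 * (8 * (l + 1)) : ℕ) : ℝ) < ((R2 * S2 * K : ℕ) : ℝ) := by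
      push_cast
      refine lt_of_lt_of_le ?_ (mul_le_mul_of_nonneg_right h1 hKpos.le)
      rw [show 3 * (K : ℝ) ^ 2 * (8 * (l + 1)) = K * (24 * (l + 1)) * K by ring]
      apply mul_lt_mul_of_pos_right _ hKpos
      apply mul_lt_mul_of_pos_left _ hKpos
      rw [lt_div_iff₀ (by norm_num)]
      have : lam * 1 ≤ lam * g := by gcongr
      linarith
    exact_mod_cast h2
  · have h1 := mul3 R3 S3 T3 _ _ _ (by norm_num) (by norm_num) (by norm_num) r3' s3' t3'
    have h2 : ((3 * K ^ 2 * (8 * (l + 1)) : ℕ) : ℝ) < ((R3 * (S3 * T3) : ℕ) : ℝ) := by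
      push_cast
      refine lt_of_lt_of_le ?_ h1
      rw [show 3 * (K : ℝ) ^ 2 * (8 * (l + 1)) = K ^ 2 * (24 * (l + 1)) by ring]
      apply mul_lt_mul_of_pos_left _ (by positivity)
      rw [lt_div_iff₀ (by norm_num)]
      linarith
    exact_mod_cast h2
  · have : (0 : ℝ) < T1 := by
      refine lt_of_lt_of_le ?_ t1'
      positivity
    exact_mod_cast this
  · calc (K + 8 * (l + 1) : ℝ) * A ≤ (1.000001 * K) * (13 / 27) := by gcongr; linarith
      _ ≤ 190 * (K / (375 + 0.1)) := by
          rw [← mul_div_assoc 190, le_div_iff₀ (by norm_num)]; linarith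
      _ = 190 * B * (K / B / (375 + 0.1)) := by field_simp
      _ ≤ _ := by gcongr
  · have h1 : (K : ℝ) / A / (375 + 0.1) * 190 ≥ 1.000001 * K := by
      rw [ge_iff_le, div_div, div_mul_eq_mul_div, le_div_iff₀ (by positivity)]
      nlinarith
    linarith
  · have h1 : (K : ℝ) / B / (375 + 0.1) * (K / g / (750 + 0.1)) ≤ S1 * T1 := by
      apply mul_le_mul s1' t1' <;> positivity
    have e : (K : ℝ) / B / (375 + 0.1) * (K / g / (750 + 0.1)) =
        K * (K / (B * g) / ((375 + 0.1) * (750 + 0.1))) := by field_simp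
    have h2 : (2000 : ℝ) ≤ K / (B * g) / ((375 + 0.1) * (750 + 0.1)) := by
      rw [le_div_iff₀ (by norm_num)]; linarith
    have h3 : (K : ℝ) * 2000 ≤ K * (K / (B * g) / ((375 + 0.1) * (750 + 0.1))) := by gcongr
    linarith
  · have h1 : (K : ℝ) / A / (375 + 0.1) * (K / g / (750 + 0.1)) ≤ R1 * T1 := by
      apply mul_le_mul r1' t1' <;> positivity
    have e : (K : ℝ) / A / (375 + 0.1) * (K / g / (750 + 0.1)) =
        K * (K / (A * g) / ((375 + 0.1) * (750 + 0.1))) := by field_simp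
    have h2 : (2000 : ℝ) ≤ K / (A * g) / ((375 + 0.1) * (750 + 0.1)) := by
      rw [le_div_iff₀ (by norm_num)]; linarith
    have h3 : (K : ℝ) * 2000 ≤ K * (K / (A * g) / ((375 + 0.1) * (750 + 0.1))) := by gcongr
    linarith
  · calc 2 * (K + 8 * (l + 1) : ℝ) * A ≤ 2 * (1.000001 * K) * (13 / 27) := by gcongr; linarith
      _ ≤ 739 * (K / (750 + 0.1)) := by
          rw [← mul_div_assoc 739, le_div_iff₀ (by norm_num)]; linarith
      _ = 739 * g * (K / g / (750 + 0.1)) := by field_simp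
      _ ≤ _ := by gcongr

/-! ### The lower bound for the linear form in three logarithms -/

/-- Projections of the translation box along integral directions have many values: a degenerate
direction would reduce the problem to `two_dim`. -/
theorem nondegenerate (b : ℕ) (γ g : ℝ) (hD : LogData b γ g) (n m : ℕ) (lam : ℝ)
    (hlam : exp lam = n / g) (hl : 30 ≤ lam) (hn : 2e11 * log b * lam ^ 2 * g ≤ n)
    (hΛ : |log γ + n * log goldenRatio - m * log b| ≤ exp (-(2e11 * log b * lam ^ 2 * g)))
    (R S T N : ℕ) (hT : 0 < T) (hRS : N < R * S)
    (h1 : (N : ℝ) * log goldenRatio ≤ 190 * log b * S) (h2 : (N : ℝ) ≤ 190 * R)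
    (h3 : (N : ℝ) ≤ 0.001 * (S * T)) (h4 : (N : ℝ) ≤ 0.001 * (R * T))
    (h5 : 2 * (N : ℝ) * log goldenRatio ≤ 739 * g * T) (a' c' : ℤ) (hac : a' ≠ 0 ∨ c' ≠ 0) :
    N < ((box3 R S T).image (fun σ => (c' : ℂ) * (logTrans b n m γ hD.hb hD.pos).u σ -
      (a' : ℂ) * (logTrans b n m γ hD.hb hD.pos).v σ)).card := by
  by_contra! hcard
  obtain ⟨a, c, hac0, ha, hc, he⟩ := degenerate_direction b n m γ hD.hb hD.pos R S T N hT hRS a' c'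
    hac hcard
  have hg := hD.one_le
  have hA1 : 0.48 < log goldenRatio := log_phi_gt
  have hB : 0.69 ≤ log (b : ℝ) := log_base_ge b hD.hb
  set A := log goldenRatio
  set B := log (b : ℝ)
  have hS0 : 0 < S := by
    rcases Nat.eq_zero_or_pos S with h | h
    · subst h; omega
    · exact h
  have hR0 : 0 < R := by
    rcases Nat.eq_zero_or_pos R with h | h
    · subst h; omega
    · exact h
  have hSr : (0 : ℝ) < S := by exact_mod_cast hS0
  have hRr : (0 : ℝ) < R := by exact_mod_cast hR0
  have hTr : (0 : ℝ) < T := by exact_mod_cast hT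
  have ha' : (a.natAbs : ℝ) * A ≤ 190 * B := by
    have h : (a.natAbs : ℝ) * S ≤ N := by exact_mod_cast ha
    refine le_of_mul_le_mul_right ?_ hSr
    calc (a.natAbs : ℝ) * A * S = a.natAbs * S * A := by ring
      _ ≤ N * A := by gcongr
      _ ≤ _ := h1
  have hc' : c.natAbs ≤ 190 := by
    have h : (c.natAbs : ℝ) * R ≤ N := by exact_mod_cast hc
    have h6 : (c.natAbs : ℝ) ≤ 190 := le_of_mul_le_mul_right (h.trans h2) hRr
    exact_mod_cast h6
  have he' : |((n * c - m * a : ℤ) : ℝ)| * A ≤ 740 * g := by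
    rcases eq_or_ne ((n : ℤ) * c - m * a) 0 with h0 | h0
    · rw [h0]; simp; linarith
    obtain ⟨w, hw, hw2⟩ := he h0
    rw [← Int.cast_abs, Int.abs_eq_natAbs]
    generalize ((n : ℤ) * c - m * a).natAbs = E at *
    have hw3 : (E : ℝ) * (w * T) ≤ N * (2 * w + E) := by exact_mod_cast hw2
    have hw4 : (N : ℝ) ≤ 0.001 * (w * T) := by
      rcases hw with h | h
      · have : (S : ℝ) ≤ w := by exact_mod_cast h
        refine h3.trans ?_
        gcongr
      · have : (R : ℝ) ≤ w := by exact_mod_cast h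
        refine h4.trans ?_
        gcongr
    have hw0 : (0 : ℝ) < w := by exact_mod_cast (by omega : 0 < w)
    have h6 : (E : ℝ) * N ≤ E * (0.001 * (w * T)) := by gcongr
    have h7 : w * (0.999 * (E * T)) ≤ w * (2 * (N : ℝ)) := by nlinarith
    have h8 : 0.999 * ((E : ℝ) * T) ≤ 2 * N := le_of_mul_le_mul_left h7 hw0
    refine le_of_mul_le_mul_right ?_ hTr
    have h9 : 0.999 * ((E : ℝ) * T) * A ≤ 2 * N * A := by gcongr
    have h10 : (0 : ℝ) < g * T := by positivity
    push_cast
    linarith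
  -- opposite signs would make the determinant larger than `n`
  rcases le_or_gt 0 a with hsa | hsa
  · rcases le_or_gt 0 c with hsc | hsc
    · have e1 : (a.natAbs : ℤ) = a := by omega
      have e2 : (c.natAbs : ℤ) = c := by omega
      exact two_dim b γ g hD n m lam hlam hl hn hΛ a.natAbs c.natAbs (n * c - m * a)
        (by rw [e1, e2]) (by omega) ha' hc' he'
    · rcases eq_or_ne a 0 with h0 | h0
      · have e2 : (c.natAbs : ℤ) = -c := by omega
        refine two_dim b γ g hD n m lam hlam hl hn hΛ 0 c.natAbs (-(n * c - m * a))
          (by rw [e2, h0]; push_cast; ring) (by omega) ?_ hc' ?_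
        · simp; linarith
        · rw [Int.cast_neg, abs_neg]; exact he'
      · exfalso
        have h6 : (n : ℤ) ≤ |(n : ℤ) * c - m * a| := by
          rw [abs_sub_comm]
          refine le_trans ?_ (le_abs_self _)
          have : (0 : ℤ) ≤ m := by positivity
          have : (0 : ℤ) ≤ n := by positivity
          nlinarith
        have h7 : (n : ℝ) ≤ |((n * c - m * a : ℤ) : ℝ)| := by exact_mod_cast h6
        have h8 : (n : ℝ) * 0.48 ≤ 740 * g := le_trans (by gcongr) he'
        have h9 : 0.69 * 30 ^ 2 * g ≤ B * lam ^ 2 * g := by gcongr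
        linarith
  · rcases le_or_gt c 0 with hsc | hsc
    · have e1 : (a.natAbs : ℤ) = -a := by omega
      have e2 : (c.natAbs : ℤ) = -c := by omega
      refine two_dim b γ g hD n m lam hlam hl hn hΛ a.natAbs c.natAbs (-(n * c - m * a))
        (by rw [e1, e2]; ring) (by omega) ha' hc' ?_
      rw [Int.cast_neg, abs_neg]; exact he'
    · exfalso
      have h6 : (n : ℤ) ≤ |(n : ℤ) * c - m * a| := by
        refine le_trans ?_ (le_abs_self _)
        have : (0 : ℤ) ≤ m := by positivity
        have : (0 : ℤ) ≤ n := by positivity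
        nlinarith
      have h7 : (n : ℝ) ≤ |((n * c - m * a : ℤ) : ℝ)| := by exact_mod_cast h6
      have h8 : (n : ℝ) * 0.48 ≤ 740 * g := le_trans (by gcongr) he'
      have h9 : 0.69 * 30 ^ 2 * g ≤ B * lam ^ 2 * g := by gcongr
      linarith

/-- The exponents `(i, j, l)` with `i + j ≤ K` and `l ≤ L`. -/
def triIndex (K L : ℕ) : Finset (ℕ × ℕ × ℕ) :=
  (Finset.range (K + 1)).biUnion
    (fun i => {i} ×ˢ (Finset.range (K + 1 - i) ×ˢ Finset.range (L + 1)))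

theorem mem_triIndex (K L : ℕ) (x : ℕ × ℕ × ℕ) (hx : x ∈ triIndex K L) :
    x.1 + x.2.1 ≤ K ∧ x.2.2 ≤ L := by
  obtain ⟨i, hi, hx⟩ := Finset.mem_biUnion.mp hx
  simp only [Finset.mem_product, Finset.mem_range, Finset.mem_singleton] at hi hx
  omega

theorem two_mul_card_triIndex (K L : ℕ) :
    2 * (triIndex K L).card = (K + 1) * (K + 2) * (L + 1) := by
  have h : ∀ N : ℕ, 2 * ∑ i ∈ Finset.range N, (N - i) = N * (N + 1) := by
    intro N
    induction N with
    | zero => simp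
    | succ N ih =>
      rw [Finset.sum_range_succ']
      simp only [Nat.add_sub_add_right, Nat.sub_zero]
      rw [mul_add, ih]; ring
  rw [triIndex, Finset.card_biUnion]
  · simp only [Finset.card_product, Finset.card_singleton, Finset.card_range, one_mul]
    rw [← Finset.sum_mul, ← mul_assoc, h]
  · intro i _ j _ hij
    rw [Function.onFun, Finset.disjoint_left]
    intro x hx hy
    simp only [Finset.mem_product, Finset.mem_singleton] at hx hy
    exact hij (hx.1.symm.trans hy.1)

set_option maxHeartbeats 1000000 in
/-- A lower bound for the linear form `log γ + n log φ - m log b`. If it were smaller, `aux_poly_log`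
would give a nonzero integral combination of `C(u, i) C(v, j) y^l` vanishing at the points of
`logTrans` over a box, contrary to the zero estimate. -/
theorem log_form_lower (b : ℕ) (γ g : ℝ) (hD : LogData b γ g) (n m : ℕ) (lam : ℝ)
    (hlam : exp lam = n / g) (hl : 30 ≤ lam) (hn : 2e11 * log b * lam ^ 2 * g ≤ n) :
    exp (-(2e11 * log b * lam ^ 2 * g)) < |log γ + n * log goldenRatio - m * log b| := by
  by_contra! hΛ
  have hb := hD.hb
  have hγ := hD.pos
  have hg := hD.one_le
  have hγg := hD.log_le
  obtain ⟨δ, ν', hδ, hν, hδg, hν'⟩ := hD.den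
  have hND0 := nondegenerate b γ g hD n m lam hlam hl hn hΛ
  set A := log goldenRatio with hA
  set B := log (b : ℝ) with hBdef
  have hA1 : 0.48 < A := log_phi_gt
  have hA2 : A < 13 / 27 := log_phi_lt
  have hB : 0.69 ≤ B := log_base_ge b hb
  set Λ := log γ + n * A - m * B with hΛdef
  obtain ⟨K, l, R1, R2, R3, S1, S2, S3, T1, T2, T3, hK1, hK2, hl150, hl5, hbudΛ, hRA, hSB, hTg, hLK,
    hc1, hc2, hc2', hc3, hT1, hd1, hd2, hd3, hd4, hd5⟩ := params3 A B g lam hA1 hA2 hB hg hl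
  set R := R1 + R2 + R3 with hR
  set S := S1 + S2 + S3 with hS
  set T := T1 + T2 + T3 with hT
  set L := 8 * (l + 1) with hL
  have hg0 : 0 < g := by linarith
  have hB0 : 0 < B := by linarith
  have hA0 : 0 < A := by linarith
  have hKr : (1e10 : ℝ) ≤ K := by linarith
  have hK : 1 ≤ K := by
    have : (1 : ℝ) ≤ K := by linarith
    exact_mod_cast this
  have hlr : (150 : ℝ) ≤ l := by exact_mod_cast hl150
  have hKl : 150 * (K : ℝ) ≤ K * l := by
    rw [mul_comm]; gcongr
  have hLr : (L : ℝ) = 8 * (l + 1) := by rw [hL]; push_cast; ring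
  have hL2 : (L : ℝ) ≤ 8.0534 * l := by rw [hLr]; linarith
  have hLKr : (L : ℝ) ≤ K := by exact_mod_cast hLK
  have hT0 : 0 < T := by omega
  have hTr : (0 : ℝ) < T := by exact_mod_cast hT0
  have hTK : (T : ℝ) * 300 ≤ K := by nlinarith
  have hRA' : (R : ℝ) * A ≤ K / 150 := by linarith
  have hSB' : (S : ℝ) * B ≤ K / 150 := by linarith
  have hTg' : (T : ℝ) * g ≤ K / 300 := by linarith
  have hΛK : 2 * (K : ℝ) ^ 3 * |Λ| ≤ exp (-1.48 * (K * l)) := by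
    have h1 := cube_le_exp K (by positivity)
    calc 2 * (K : ℝ) ^ 3 * |Λ| ≤ exp (3 * K + 1) * exp (-(2e11 * B * lam ^ 2 * g)) := by gcongr
      _ = exp (3 * K + 1 - 2e11 * B * lam ^ 2 * g) := by rw [← Real.exp_add]; congr 1
      _ ≤ _ := by rw [Real.exp_le_exp]; linarith
  have hK3 : (K : ℝ) * 1e20 ≤ (K : ℝ) ^ 3 := by
    have : (1e10 : ℝ) ^ 2 ≤ (K : ℝ) ^ 2 := by gcongr
    calc (K : ℝ) * 1e20 = K * (1e10 : ℝ) ^ 2 := by norm_num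
      _ ≤ K * (K : ℝ) ^ 2 := by gcongr
      _ = _ := by ring
  have hΛ1 : (K : ℝ) * |Λ| ≤ 1 := by
    have h1 : exp (-1.48 * ((K : ℝ) * l)) ≤ 1 := by
      rw [Real.exp_le_one_iff]
      have : (0 : ℝ) ≤ K * l := by positivity
      linarith
    have h3 : (K : ℝ) * |Λ| ≤ 2 * (K : ℝ) ^ 3 * |Λ| := by
      gcongr
      linarith
    linarith
  have hΛabs' : |Λ| ≤ 1 := by
    have : 1 * |Λ| ≤ K * |Λ| := by
      gcongr
      linarith
    linarith
  have hΛabs := abs_le.mp hΛabs'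
  have hγabs := abs_le.mp hγg
  have hmB1 : m * B ≤ n * A + 2 * g := by linarith [hΛabs.1, hγabs.2]
  have hRn : R ≤ n := by
    have h0 : (R : ℝ) * 0.48 ≤ R * A := by gcongr
    have h1 : (R : ℝ) ≤ K := by linarith
    have h2 : lam * B * g * 1 ≤ lam * B * g * lam := by
      gcongr
      linarith
    have h3 : (R : ℝ) ≤ n := by
      have h4 : 0 ≤ lam * B * g := by positivity
      linarith
    exact_mod_cast h3
  set Zr : ℝ := K / 100 + 1 with hZr
  have hZ0 : 0 < Zr := by positivity
  set V : ℝ := m * T + S with hV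
  have hS10 : 0 < S1 := by
    rcases Nat.eq_zero_or_pos S1 with h | h
    · subst h; omega
    · exact h
  have hR10 : 0 < R1 := by
    rcases Nat.eq_zero_or_pos R1 with h | h
    · subst h; omega
    · exact h
  have hpos2 : 0 < R2 * (S2 * T2) := by omega
  have hR20 : 0 < R2 := Nat.pos_of_mul_pos_right hpos2
  have hST2 : 0 < S2 * T2 := Nat.pos_of_mul_pos_left hpos2
  have hS20 : 0 < S2 := Nat.pos_of_mul_pos_right hST2
  have hT20 : 0 < T2 := Nat.pos_of_mul_pos_left hST2
  have hV0 : 0 < V := by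
    have : (0 : ℝ) < S := by exact_mod_cast (by omega : 0 < S)
    positivity
  have hbr : (0 : ℝ) < b := by exact_mod_cast (by omega : 0 < b)
  let P := Fin R × Fin S × Fin T
  let u : P → ℕ := fun σ => n * σ.2.2 + σ.1
  let v : P → ℕ := fun σ => m * σ.2.2 + σ.2.1
  let z : P → ℝ := fun σ => -(u σ * A) + v σ * B
  let y : P → ℝ := fun σ => goldenRatio ^ (-((σ.1 : ℕ) : ℤ)) * (b : ℝ) ^ (σ.2.1 : ℕ) *
    γ ^ (σ.2.2 : ℕ)
  have hzeq : ∀ σ : P, z σ = -((σ.1 : ℕ) * A) + (σ.2.1 : ℕ) * B + (σ.2.2 : ℕ) * (log γ - Λ) := by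
    intro σ
    simp only [z, u, v, hΛdef]
    push_cast
    ring
  have hz : ∀ σ : P, |z σ| ≤ Zr := by
    intro σ
    rw [hzeq]
    have h1 : ((σ.1 : ℕ) : ℝ) ≤ R := by exact_mod_cast σ.1.2.le
    have h2 : ((σ.2.1 : ℕ) : ℝ) ≤ S := by exact_mod_cast σ.2.1.2.le
    have h3 : ((σ.2.2 : ℕ) : ℝ) ≤ T := by exact_mod_cast σ.2.2.2.le
    have h1' : ((σ.1 : ℕ) : ℝ) * A ≤ R * A := by gcongr
    have h2' : ((σ.2.1 : ℕ) : ℝ) * B ≤ S * B := by gcongr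
    have h1'' : 0 ≤ ((σ.1 : ℕ) : ℝ) * A := by positivity
    have h2'' : 0 ≤ ((σ.2.1 : ℕ) : ℝ) * B := by positivity
    have h4 : |((σ.2.2 : ℕ) : ℝ) * (log γ - Λ)| ≤ K / 300 + 1 := by
      rw [abs_mul, Nat.abs_cast]
      calc ((σ.2.2 : ℕ) : ℝ) * |log γ - Λ| ≤ T * (g + |Λ|) := by
            gcongr
            exact (abs_sub _ _).trans (by linarith)
        _ = T * g + T * |Λ| := by ring
        _ ≤ K / 300 + K * |Λ| := by
            have h5 : (T : ℝ) ≤ K := by linarith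
            exact add_le_add hTg' (mul_le_mul_of_nonneg_right h5 (abs_nonneg _))
        _ ≤ _ := by linarith
    have h5 := abs_le.mp h4
    rw [abs_le, hZr]
    constructor <;> linarith [h5.1, h5.2]
  have hvV : ∀ σ, (v σ : ℝ) ≤ V := by
    intro σ
    have h2 : ((σ.2.1 : ℕ) : ℝ) ≤ S := by exact_mod_cast σ.2.1.2.le
    have h3 : ((σ.2.2 : ℕ) : ℝ) ≤ T := by exact_mod_cast σ.2.2.2.le
    simp only [v, hV]; push_cast
    gcongr
  have hUb : exp 1 * (|-(Zr / A)| + |B * V / A| + |V| + K) ≤ K * exp lam := by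
    have h1 : exp 1 < 2.7182818286 := Real.exp_one_lt_d9
    have h2 : 31 ≤ exp lam := by linarith [Real.add_one_le_exp lam]
    rw [abs_neg, abs_of_pos (by positivity), abs_of_pos (by positivity : 0 < B * V / A),
      abs_of_pos hV0]
    have h3 : B * V ≤ A * (K * exp lam / 300) + K * (1 / 75) := by
      have h5 : (T : ℝ) ≤ K / (300 * g) := by
        rw [le_div_iff₀ (by positivity)]; linarith
      calc B * V = T * (m * B) + S * B := by rw [hV]; ring
        _ ≤ T * (n * A + 2 * g) + K / 150 := by gcongr
        _ = A * (n * T) + 2 * (T * g) + K / 150 := by ring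
        _ ≤ A * (n * (K / (300 * g))) + 2 * (K / 300) + K / 150 := by gcongr
        _ = _ := by rw [hlam]; field_simp; ring
    have h4 : B * V / A ≤ K * exp lam / 300 + K * 0.03 := by
      rw [div_le_iff₀ hA0]
      have : K * 0.03 * 0.48 ≤ K * 0.03 * A := by gcongr
      linarith
    have h5 : V ≤ K * exp lam / 300 + K * 0.03 := by
      have h6 : V * 0.69 ≤ V * B := by gcongr
      have h7 : A * (K * exp lam / 300) ≤ (13 / 27) * (K * exp lam / 300) := by gcongr
      have h8 : 0 ≤ K * exp lam := by positivity
      linarith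
    have h6 : Zr / A ≤ K * 0.03 := by
      rw [div_le_iff₀ hA0]
      have : K * 0.03 * 0.48 ≤ K * 0.03 * A := by gcongr
      rw [hZr]; linarith
    have h7 : (K : ℝ) * 31 ≤ K * exp lam := by gcongr
    calc exp 1 * (Zr / A + B * V / A + V + K) ≤ 2.7182818286 * (K * 0.03 +
          (K * exp lam / 300 + K * 0.03) + (K * exp lam / 300 + K * 0.03) + K) := by
          gcongr
      _ ≤ _ := by linarith
  have hLZ : (L : ℝ) * Zr ≤ 0.0806 * (K * l) := by
    calc (L : ℝ) * Zr ≤ 8.0534 * l * (K * 0.01000001) := by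
          gcongr
          rw [hZr]; linarith
      _ ≤ _ := by
          have : 0 ≤ (K : ℝ) * l := by positivity
          linarith
  have hLKl : ∀ x : ℝ, 0 ≤ x → (L : ℝ) * (K * x) ≤ 8.0534 * x * (K * l) := by
    intro x hx
    calc (L : ℝ) * (K * x) ≤ 8.0534 * l * (K * x) := by gcongr
      _ = _ := by ring
  have hcardI := two_mul_card_triIndex K L
  obtain ⟨C, ⟨x0, hx0, hCx0⟩, hC⟩ := aux_poly_log (P := P) (fun σ => z σ / Zr) (fun σ => v σ / V)
    (by
      intro σ
      rw [abs_div, abs_of_pos hZ0, div_le_one hZ0]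
      exact hz σ)
    (by
      intro σ
      rw [abs_of_nonneg (by positivity), div_le_one hV0]
      exact hvV σ) K L (K * l) K hK (Or.inl rfl)
    (triIndex K L) (mem_triIndex K L)
    u v (-(Zr / A)) (B * V / A) V
    (by intro σ; simp only [z]; field_simp; ring) (by intro σ; field_simp) lam hUb
    (by
      have : 8 * (K + K * l + 1) ≤ (K + 2) * (L + 1) := by rw [hL]; nlinarith
      have h2 : (K + 1) * (8 * (K + K * l + 1)) ≤ (K + 1) * ((K + 2) * (L + 1)) :=
        Nat.mul_le_mul_left _ this
      nlinarith)
    (by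
      have h1 := Real.add_one_le_exp (K : ℝ)
      have h2 : ((L + 1 : ℕ) : ℝ) ≤ K + 1 := by push_cast; linarith
      have h3 : (2 : ℝ) * (triIndex K L).card = (K + 1) * (K + 2) * (L + 1) := by
        exact_mod_cast hcardI
      push_cast at h2
      have h4 : ((K : ℝ) + 1) * (K + 2) * (L + 1) ≤ exp K * (2 * exp K) * exp K := by
        gcongr <;> linarith
      have h5 : exp K * exp K * exp K ≤ exp (3 * (K : ℝ) + 3) := by
        rw [← Real.exp_add, ← Real.exp_add, Real.exp_le_exp]; linarith
      linarith)
    Zr Zr (le_of_eq (abs_of_pos hZ0))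
    y (fun σ => (σ.2.2 : ℕ) * Λ)
    (by
      intro σ
      have hy0 : 0 < y σ := by simp only [y]; positivity
      rw [← Real.exp_log hy0]
      simp only [y]
      rw [Real.log_mul (by positivity) (by positivity), Real.log_mul (by positivity) (by positivity),
        Real.log_zpow, Real.log_pow, Real.log_pow]
      congr 1
      have : Zr * (z σ / Zr) = z σ := by field_simp
      rw [this, hzeq]
      push_cast
      ring)
    (by
      intro σ
      have h3 : ((σ.2.2 : ℕ) : ℝ) ≤ T := by exact_mod_cast σ.2.2.2.le
      rw [abs_mul, Nat.abs_cast]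
      push_cast
      have h4 : ((σ.2.2 : ℕ) : ℝ) ≤ K := by linarith
      calc (L : ℝ) * ((σ.2.2 : ℕ) * |Λ|) ≤ K * (K * |Λ|) :=
            mul_le_mul hLKr (mul_le_mul_of_nonneg_right h4 (abs_nonneg _)) (by positivity)
              (by positivity)
        _ = 1 * (K ^ 2 * |Λ|) := by ring
        _ ≤ K * (K ^ 2 * |Λ|) := by
            gcongr
            linarith
        _ = K ^ 3 * |Λ| := by ring
        _ ≤ _ := by linarith)
    (L * (T * g)) (L * (R * A + S * B + T * g)) (by positivity) (by positivity)
    (by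
      intro σ
      have h1 : ((σ.1 : ℕ) : ℝ) ≤ R := by exact_mod_cast σ.1.2.le
      have h2 : ((σ.2.1 : ℕ) : ℝ) ≤ S := by exact_mod_cast σ.2.1.2.le
      have h3 : ((σ.2.2 : ℕ) : ℝ) ≤ T := by exact_mod_cast σ.2.2.2.le
      refine arith_point b δ hb hδ γ ν' g hν hδg hν' _ _ _ L _ _ ?_ ?_
      · gcongr
      · push_cast
        rw [abs_neg, Nat.abs_cast, ← hA, ← hBdef]
        gcongr)
    (by push_cast; have : 0 ≤ (K : ℝ) * l := by positivity
        linarith)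
    (by
      push_cast
      have h1 : (L : ℝ) * (T * g) ≤ 8.0534 * (1 / 300) * (K * l) := by
        refine le_trans ?_ (hLKl _ (by norm_num))
        exact mul_le_mul_of_nonneg_left (by linarith) (by positivity)
      have h2 : (L : ℝ) * (R * A + S * B + T * g) ≤ 8.0534 * (1 / 60) * (K * l) := by
        refine le_trans ?_ (hLKl _ (by norm_num))
        exact mul_le_mul_of_nonneg_left (by linarith) (by positivity)
      have h4 : 4 * (K : ℝ) * (5 * lam) ≤ 4 * K * l := by gcongr
      linarith)
  have hZint : ∀ a c : ℂ, (a ≠ 0 ∨ c ≠ 0) → (∃ δ, (logTrans b n m γ hD.hb hD.pos).u δ = a ∧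
      (logTrans b n m γ hD.hb hD.pos).v δ = c) → K + L < ((box3 R1 S1 T1).image (fun σ =>
        c * (logTrans b n m γ hD.hb hD.pos).u σ - a * (logTrans b n m γ hD.hb hD.pos).v σ)).card := by
    rintro _ _ hac ⟨τ, rfl, rfl⟩
    rw [logTrans_u, logTrans_v] at hac ⊢
    refine hND0 R1 S1 T1 (K + L) hT1 hc1 ?_ ?_ ?_ ?_ ?_ _ _ ?_
    · rw [Nat.cast_add, hLr]; exact hd1
    · rw [Nat.cast_add, hLr]; exact hd2
    · rw [Nat.cast_add, hLr]; exact hd3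
    · rw [Nat.cast_add, hLr]; exact hd4
    · rw [Nat.cast_add, hLr]; exact hd5
    · simpa only [ne_eq, Int.cast_eq_zero] using hac
  refine hCx0 (interpPoly_eq_zero (triIndex K L) C ?_ x0 hx0)
  refine (logTrans b n m γ hD.hb hD.pos).zero_estimate K L (by omega) hLK
    (box3 R1 S1 T1) (box3 R1 S1 1) (box3 R2 S2 T2) (box3 R2 S2 1) (box3 R3 S3 T3)
    (box3_mono _ _ _ _ hT1) (box3_mono _ _ _ _ hT20) (zero_mem_box3 _ _ _ hR10 hS10 hT1)
    (zero_mem_box3 _ _ _ hR20 hS20 hT20)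
    (logTrans_sep _ _ _ _ _ _ _ _ _ (by omega)) (logTrans_sep _ _ _ _ _ _ _ _ _ (by omega))
    (logTrans_sep _ _ _ _ _ _ _ _ _ (by omega))
    (logTrans_winj _ _ _ _ _ _ _ _) (logTrans_winj _ _ _ _ _ _ _ _)
    (by rw [card_box3, mul_one]; exact hc1) hZint
    (by rw [card_box3]; exact Nat.mul_lt_mul_of_pos_right hc2 (by omega))
    (by rw [card_box3, mul_one]; exact hc2') (by rw [card_box3]; exact hc3)
    (interpPoly (triIndex K L) C) (interpPoly_mem _ _ _ _ (mem_triIndex K L)) ?_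
  intro σ1 h1 σ2 h2 σ3 h3
  obtain ⟨r1, hr1, s1, hs1, t1, ht1, rfl⟩ := (mem_box3 _ _ _ _).mp h1
  obtain ⟨r2, hr2, s2, hs2, t2, ht2, rfl⟩ := (mem_box3 _ _ _ _).mp h2
  obtain ⟨r3, hr3, s3, hs3, t3, ht3, rfl⟩ := (mem_box3 _ _ _ _).mp h3
  have h4 := hC (⟨r1 + r2 + r3, by omega⟩, ⟨s1 + s2 + s3, by omega⟩, ⟨t1 + t2 + t3, by omega⟩)
  simp only [u, v, y] at h4
  have e1 : (logTrans b n m γ hD.hb hD.pos).pt (((r1 : ℤ), (s1 : ℤ), (t1 : ℤ)) +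
      ((r2 : ℤ), (s2 : ℤ), (t2 : ℤ)) + ((r3 : ℤ), (s3 : ℤ), (t3 : ℤ))) =
      ![((n * (t1 + t2 + t3) + (r1 + r2 + r3) : ℕ) : ℂ),
        ((m * (t1 + t2 + t3) + (s1 + s2 + s3) : ℕ) : ℂ),
        ((goldenRatio ^ (-((r1 + r2 + r3 : ℕ) : ℤ)) * (b : ℝ) ^ (s1 + s2 + s3) *
          γ ^ (t1 + t2 + t3) : ℝ) : ℂ)] := by
    rw [TransData.pt, logTrans_u, logTrans_v, logTrans_w]
    simp only [Prod.mk_add_mk]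
    congr 1
  rw [e1, interpPoly_eval]
  have h5 := congrArg (fun x : ℝ => (x : ℂ)) h4
  simp only [Complex.ofReal_zero] at h5
  rw [← h5]
  push_cast
  rfl

/-! ### Approximations from the Fibonacci and the digit side -/

/-- `φ^n σ / √5`, with `σ ∈ ℤ[φ]` of moderate height, approximates `N` with relative error about
`φ^{-X'}`; the conjugate of `σ` is controlled by `φ^X`. -/
def FibApprox (n X X' : ℕ) (N : ℝ) : Prop :=
  ∃ σ σ' : ℝ, (σ, σ') ∈ ZPhi ∧ 1 ≤ σ ∧ σ ≤ 3 ∧ |σ'| ≤ 3 * goldenRatio ^ X ∧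
    |N - goldenRatio ^ n * σ / √5| ≤ 3 * (goldenRatio ^ n / goldenRatio ^ X')

/-- `D b^m`, with a positive integer `D ≤ b^{Y+1}`, approximates `(b - 1) N` with relative error about
`b^{-Y'}`. -/
def DigitApprox (b l Y Y' : ℕ) (N : ℝ) : Prop :=
  ∃ D m : ℕ, 1 ≤ D ∧ (D : ℝ) ≤ (b : ℝ) ^ (Y + 1) ∧
    |(b - 1) * N - D * (b : ℝ) ^ m| ≤ 3 * (b - 1) * ((b : ℝ) ^ l / (b : ℝ) ^ Y')

theorem sqrt5_bounds : 2.2 < √5 ∧ √5 < 2.25 := by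
  constructor
  · rw [Real.lt_sqrt (by norm_num)]; norm_num
  · rw [Real.sqrt_lt' (by norm_num)]; norm_num

theorem fib_err (k : ℕ) : |(Nat.fib k : ℝ) - goldenRatio ^ k / √5| ≤ 1 / 2 := by
  have h5 := sqrt5_bounds
  have h0 : 0 < √5 := by linarith
  rw [coe_fib_eq, ← sub_div, abs_div, abs_of_pos h0, div_le_iff₀ h0]
  have h1 : |goldenConj ^ k| ≤ 1 := by
    rw [abs_pow]
    refine pow_le_one₀ (abs_nonneg _) ?_
    rw [abs_le]
    exact ⟨neg_one_lt_goldenConj.le, by linarith [goldenConj_neg]⟩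
  have h2 : goldenRatio ^ k - goldenConj ^ k - goldenRatio ^ k = -goldenConj ^ k := by ring
  rw [h2, abs_neg]
  linarith

theorem fib_le_phi (k : ℕ) : (Nat.fib k : ℝ) ≤ goldenRatio ^ k := by
  have h := (abs_le.mp (fib_err k)).2
  have h5 := sqrt5_bounds
  have h1 : (1 : ℝ) ≤ goldenRatio ^ k := one_le_pow₀ one_lt_goldenRatio.le
  have h2 : goldenRatio ^ k / √5 ≤ goldenRatio ^ k / 2 := by
    gcongr; linarith
  linarith

theorem phi_mul_inv_pow (n k : ℕ) (h : k ≤ n) :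
    goldenRatio ^ n * goldenRatio⁻¹ ^ (n - k) = goldenRatio ^ k := by
  obtain ⟨j, rfl⟩ := Nat.exists_eq_add_of_le h
  rw [Nat.add_sub_cancel_left, pow_add, inv_pow, mul_assoc,
    mul_inv_cancel₀ (pow_ne_zero _ goldenRatio_ne_zero), mul_one]

theorem phi_div_pow (n k : ℕ) (h : k ≤ n) :
    goldenRatio ^ n / goldenRatio ^ (n - k) = goldenRatio ^ k := by
  rw [← phi_mul_inv_pow n k h, inv_pow, div_eq_mul_inv]

theorem abs_conj_inv_pow (k : ℕ) : |goldenConj⁻¹ ^ k| = goldenRatio ^ k := by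
  rw [inv_goldenConj, abs_pow, abs_neg, abs_of_pos goldenRatio_pos]

theorem fibApprox_one (n1 n2 n3 : ℕ) (h32 : n3 ≤ n2) (h21 : n2 ≤ n1) :
    FibApprox n1 0 (n1 - n2) (Nat.fib n1 + Nat.fib n2 + Nat.fib n3) := by
  refine ⟨1, 1, ZPhi.one_mem, le_rfl, by norm_num, by norm_num, ?_⟩
  rw [phi_div_pow _ _ h21, mul_one]
  have h1 := abs_le.mp (fib_err n1)
  have h2 := fib_le_phi n2
  have h3 := (fib_le_phi n3).trans (pow_le_pow_right₀ one_lt_goldenRatio.le h32)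
  have h4 : (1 : ℝ) ≤ goldenRatio ^ n2 := one_le_pow₀ one_lt_goldenRatio.le
  have h5 : (0 : ℝ) ≤ Nat.fib n2 := Nat.cast_nonneg _
  have h6 : (0 : ℝ) ≤ Nat.fib n3 := Nat.cast_nonneg _
  rw [abs_le]
  constructor <;> linarith [h1.1, h1.2]

theorem fibApprox_two (n1 n2 n3 : ℕ) (h32 : n3 ≤ n2) (h21 : n2 ≤ n1) :
    FibApprox n1 (n1 - n2) (n1 - n3) (Nat.fib n1 + Nat.fib n2 + Nat.fib n3) := by
  have hi0 : 0 < goldenRatio⁻¹ := inv_pos.mpr goldenRatio_pos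
  have hi1 : goldenRatio⁻¹ ≤ 1 := inv_le_one_of_one_le₀ one_lt_goldenRatio.le
  have hp0 := pow_pos hi0 (n1 - n2)
  have hp1 := pow_le_one₀ (n := n1 - n2) hi0.le hi1
  refine ⟨1 + goldenRatio⁻¹ ^ (n1 - n2), 1 + goldenConj⁻¹ ^ (n1 - n2),
    ZPhi.add_mem ZPhi.one_mem (ZPhi.pow_mem ZPhi_phi_inv (n1 - n2)), by linarith, by linarith,
    ?_, ?_⟩
  · have h1 : (1 : ℝ) ≤ goldenRatio ^ (n1 - n2) := one_le_pow₀ one_lt_goldenRatio.le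
    refine (abs_add_le _ _).trans ?_
    rw [abs_conj_inv_pow, abs_one]
    linarith
  · rw [phi_div_pow _ _ (h32.trans h21), mul_add, mul_one, phi_mul_inv_pow _ _ h21, add_div]
    have h1 := abs_le.mp (fib_err n1)
    have h2 := abs_le.mp (fib_err n2)
    have h3 := fib_le_phi n3
    have h4 : (1 : ℝ) ≤ goldenRatio ^ n3 := one_le_pow₀ one_lt_goldenRatio.le
    have h6 : (0 : ℝ) ≤ Nat.fib n3 := Nat.cast_nonneg _
    rw [abs_le]
    constructor <;> linarith [h1.1, h1.2, h2.1, h2.2]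

theorem fibApprox_three (n1 n2 n3 : ℕ) (h32 : n3 ≤ n2) (h21 : n2 ≤ n1) :
    FibApprox n1 (n1 - n3) n1 (Nat.fib n1 + Nat.fib n2 + Nat.fib n3) := by
  have hi0 : 0 < goldenRatio⁻¹ := inv_pos.mpr goldenRatio_pos
  have hi1 : goldenRatio⁻¹ ≤ 1 := inv_le_one_of_one_le₀ one_lt_goldenRatio.le
  have hp0 := pow_pos hi0 (n1 - n2)
  have hp1 := pow_le_one₀ (n := n1 - n2) hi0.le hi1
  have hq0 := pow_pos hi0 (n1 - n3)
  have hq1 := pow_le_one₀ (n := n1 - n3) hi0.le hi1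
  refine ⟨1 + goldenRatio⁻¹ ^ (n1 - n2) + goldenRatio⁻¹ ^ (n1 - n3),
    1 + goldenConj⁻¹ ^ (n1 - n2) + goldenConj⁻¹ ^ (n1 - n3),
    ZPhi.add_mem (ZPhi.add_mem ZPhi.one_mem (ZPhi.pow_mem ZPhi_phi_inv (n1 - n2)))
      (ZPhi.pow_mem ZPhi_phi_inv (n1 - n3)), by linarith, by linarith, ?_, ?_⟩
  · have h1 : (1 : ℝ) ≤ goldenRatio ^ (n1 - n3) := one_le_pow₀ one_lt_goldenRatio.le
    have h2 : goldenRatio ^ (n1 - n2) ≤ goldenRatio ^ (n1 - n3) :=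
      pow_le_pow_right₀ one_lt_goldenRatio.le (by omega)
    refine (abs_add_three _ _ _).trans ?_
    rw [abs_conj_inv_pow, abs_conj_inv_pow, abs_one]
    linarith
  · rw [div_self (pow_ne_zero _ goldenRatio_ne_zero), mul_add, mul_add, mul_one,
      phi_mul_inv_pow _ _ h21, phi_mul_inv_pow _ _ (h32.trans h21), add_div, add_div]
    have h1 := abs_le.mp (fib_err n1)
    have h2 := abs_le.mp (fib_err n2)
    have h3 := abs_le.mp (fib_err n3)
    rw [abs_le]
    constructor <;> linarith [h1.1, h1.2, h2.1, h2.2, h3.1, h3.2]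

theorem repunit_cast (b l : ℕ) (hb : 2 ≤ b) :
    ((b : ℝ) - 1) * (((b ^ l - 1) / (b - 1) : ℕ) : ℝ) = (b : ℝ) ^ l - 1 := by
  have h1 : b - 1 ∣ b ^ l - 1 := by simpa using Nat.sub_dvd_pow_sub_pow b 1 l
  have h2 : (b - 1) * ((b ^ l - 1) / (b - 1)) = b ^ l - 1 := Nat.mul_div_cancel' h1
  have h3 : 1 ≤ b ^ l := Nat.one_le_pow _ _ (by omega)
  have h4 := congrArg (fun x : ℕ => (x : ℝ)) h2
  simp only [Nat.cast_mul] at h4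
  rw [Nat.cast_sub (by omega), Nat.cast_sub h3] at h4
  push_cast at h4
  exact h4

theorem digitApprox_one (b l1 l2 l3 d1 d2 d3 : ℕ) (hb : 2 ≤ b) (h1 : d1 < b) (h2 : d2 < b)
    (h3 : d3 < b) (N : ℝ)
    (hN : (b - 1) * N = d1 * ((b : ℝ) ^ l1 - 1) * ((b : ℝ) ^ l2 * (b : ℝ) ^ l3) +
      d2 * ((b : ℝ) ^ l2 - 1) * (b : ℝ) ^ l3 + d3 * ((b : ℝ) ^ l3 - 1)) (h0 : 1 ≤ d1) : DigitApprox b (l1 + l2 + l3) 0 l1 N := by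
  have hbr : (2 : ℝ) ≤ b := by exact_mod_cast hb
  have h1' : (d1 : ℝ) + 1 ≤ b := by exact_mod_cast h1
  have h2' : (d2 : ℝ) + 1 ≤ b := by exact_mod_cast h2
  have h3' : (d3 : ℝ) + 1 ≤ b := by exact_mod_cast h3
  refine ⟨d1, l1 + l2 + l3, h0, by rw [zero_add, pow_one]; linarith, ?_⟩
  have hp : (1 : ℝ) ≤ (b : ℝ) ^ l1 := one_le_pow₀ (by linarith)
  have hq : (1 : ℝ) ≤ (b : ℝ) ^ l2 := one_le_pow₀ (by linarith)
  have hr : (1 : ℝ) ≤ (b : ℝ) ^ l3 := one_le_pow₀ (by linarith)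
  rw [hN, pow_add, pow_add]
  generalize (b : ℝ) ^ l1 = p at *
  generalize (b : ℝ) ^ l2 = q at *
  generalize (b : ℝ) ^ l3 = r at *
  have e1 : p * q * r / p = q * r := by field_simp
  have hrq : 1 * r ≤ q * r := by gcongr
  have k1 : d1 * (q * r) ≤ (b - 1) * (q * r) := by gcongr; linarith
  have k2 : d2 * (q * r) ≤ (b - 1) * (q * r) := by gcongr; linarith
  have k3 : d2 * r ≤ (b - 1) * (q * r) := by
    apply mul_le_mul <;> first | linarith | positivity
  have k4 : d3 * r ≤ (b - 1) * (q * r) := by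
    apply mul_le_mul <;> first | linarith | positivity
  have k5 : d3 * 1 ≤ (b - 1) * (q * r) := by
    apply mul_le_mul <;> first | linarith | positivity
  have p1 : 0 ≤ d1 * (q * r) := by positivity
  have p2 : 0 ≤ d2 * (q * r) := by positivity
  have p3 : 0 ≤ d2 * r := by positivity
  have p4 : 0 ≤ d3 * r := by positivity
  have p5 : (0 : ℝ) ≤ d3 := by positivity
  rw [e1, abs_le]
  constructor <;> linarith

theorem digitApprox_two (b l1 l2 l3 d1 d2 d3 : ℕ) (hb : 2 ≤ b) (hl1 : 1 ≤ l1) (h1 : d1 < b)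
    (h2 : d2 < b) (h3 : d3 < b) (h0 : 1 ≤ d1) (N : ℝ)
    (hN : (b - 1) * N = d1 * ((b : ℝ) ^ l1 - 1) * ((b : ℝ) ^ l2 * (b : ℝ) ^ l3) +
      d2 * ((b : ℝ) ^ l2 - 1) * (b : ℝ) ^ l3 + d3 * ((b : ℝ) ^ l3 - 1)) : DigitApprox b (l1 + l2 + l3) l1 (l1 + l2) N := by
  have hbr : (2 : ℝ) ≤ b := by exact_mod_cast hb
  have h1' : (d1 : ℝ) + 1 ≤ b := by exact_mod_cast h1
  have h2' : (d2 : ℝ) + 1 ≤ b := by exact_mod_cast h2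
  have h3' : (d3 : ℝ) + 1 ≤ b := by exact_mod_cast h3
  have hpn : 2 ≤ b ^ l1 := hb.trans (Nat.le_self_pow (by omega) b)
  have hcast : ((d1 * (b ^ l1 - 1) + d2 : ℕ) : ℝ) = d1 * ((b : ℝ) ^ l1 - 1) + d2 := by
    push_cast [Nat.cast_sub (by omega : 1 ≤ b ^ l1)]; ring
  refine ⟨d1 * (b ^ l1 - 1) + d2, l2 + l3, ?_, ?_, ?_⟩
  · have : 1 * 1 ≤ d1 * (b ^ l1 - 1) := Nat.mul_le_mul h0 (by omega)
    omega
  · rw [hcast, pow_succ]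
    have hp : (1 : ℝ) ≤ (b : ℝ) ^ l1 := one_le_pow₀ (by linarith)
    have k : d1 * ((b : ℝ) ^ l1 - 1) ≤ (b - 1) * ((b : ℝ) ^ l1 - 1) := by
      gcongr <;> linarith
    linarith
  have hp : (1 : ℝ) ≤ (b : ℝ) ^ l1 := one_le_pow₀ (by linarith)
  have hq : (1 : ℝ) ≤ (b : ℝ) ^ l2 := one_le_pow₀ (by linarith)
  have hr : (1 : ℝ) ≤ (b : ℝ) ^ l3 := one_le_pow₀ (by linarith)
  rw [hN, hcast, pow_add, pow_add, pow_add]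
  generalize (b : ℝ) ^ l1 = p at *
  generalize (b : ℝ) ^ l2 = q at *
  generalize (b : ℝ) ^ l3 = r at *
  have e1 : p * q * r / (p * q) = r := by field_simp
  have k3 : d2 * r ≤ (b - 1) * r := by gcongr; linarith
  have k4 : d3 * r ≤ (b - 1) * r := by gcongr; linarith
  have k5 : d3 * 1 ≤ (b - 1) * r := by
    apply mul_le_mul <;> first | linarith | positivity
  have p3 : 0 ≤ d2 * r := by positivity
  have p4 : 0 ≤ d3 * r := by positivity
  have p5 : (0 : ℝ) ≤ d3 := by positivity
  rw [e1, abs_le]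
  constructor <;> linarith

theorem digitApprox_three (b l1 l2 l3 d1 d2 d3 : ℕ) (hb : 2 ≤ b) (hl1 : 1 ≤ l1) (h1 : d1 < b)
    (h2 : d2 < b) (h3 : d3 < b) (h0 : 1 ≤ d1) (N : ℝ)
    (hN : (b - 1) * N = d1 * ((b : ℝ) ^ l1 - 1) * ((b : ℝ) ^ l2 * (b : ℝ) ^ l3) +
      d2 * ((b : ℝ) ^ l2 - 1) * (b : ℝ) ^ l3 + d3 * ((b : ℝ) ^ l3 - 1)) : DigitApprox b (l1 + l2 + l3) (l1 + l2) (l1 + l2 + l3) N := by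
  have hbr : (2 : ℝ) ≤ b := by exact_mod_cast hb
  have h1' : (d1 : ℝ) + 1 ≤ b := by exact_mod_cast h1
  have h2' : (d2 : ℝ) + 1 ≤ b := by exact_mod_cast h2
  have h3' : (d3 : ℝ) + 1 ≤ b := by exact_mod_cast h3
  have hpn : 2 ≤ b ^ l1 := hb.trans (Nat.le_self_pow (by omega) b)
  have hqn : 1 ≤ b ^ l2 := Nat.one_le_pow _ _ (by omega)
  have hcast : ((d1 * (b ^ l1 - 1) * b ^ l2 + d2 * (b ^ l2 - 1) + d3 : ℕ) : ℝ) =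
      d1 * ((b : ℝ) ^ l1 - 1) * (b : ℝ) ^ l2 + d2 * ((b : ℝ) ^ l2 - 1) + d3 := by
    push_cast [Nat.cast_sub (by omega : 1 ≤ b ^ l1), Nat.cast_sub hqn]; ring
  have hp : (1 : ℝ) ≤ (b : ℝ) ^ l1 := one_le_pow₀ (by linarith)
  have hq : (1 : ℝ) ≤ (b : ℝ) ^ l2 := one_le_pow₀ (by linarith)
  have hr : (1 : ℝ) ≤ (b : ℝ) ^ l3 := one_le_pow₀ (by linarith)
  refine ⟨d1 * (b ^ l1 - 1) * b ^ l2 + d2 * (b ^ l2 - 1) + d3, l3, ?_, ?_, ?_⟩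
  · have : 1 * 1 * 1 ≤ d1 * (b ^ l1 - 1) * b ^ l2 :=
      Nat.mul_le_mul (Nat.mul_le_mul h0 (by omega)) hqn
    omega
  · rw [hcast, pow_succ, pow_add]
    generalize (b : ℝ) ^ l1 = p at *
    generalize (b : ℝ) ^ l2 = q at *
    have k : d1 * (p - 1) * q ≤ (b - 1) * (p - 1) * q := by
      gcongr <;> linarith
    have k' : d2 * (q - 1) ≤ (b - 1) * (q - 1) := by
      gcongr <;> linarith
    have : 0 ≤ p * q := by positivity
    nlinarith
  rw [hN, hcast, pow_add, pow_add]
  generalize (b : ℝ) ^ l1 = p at *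
  generalize (b : ℝ) ^ l2 = q at *
  generalize (b : ℝ) ^ l3 = r at *
  have e1 : p * q * r / (p * q * r) = 1 := by field_simp
  have p5 : (0 : ℝ) ≤ d3 := by positivity
  rw [e1, abs_le]
  constructor <;> linarith

theorem digit_lower (b l1 l2 l3 d1 d2 d3 : ℕ) (hb : 2 ≤ b) (hl1 : 1 ≤ l1) (h0 : 1 ≤ d1)
    (N : ℝ)
    (hN : (b - 1) * N = d1 * ((b : ℝ) ^ l1 - 1) * ((b : ℝ) ^ l2 * (b : ℝ) ^ l3) +
      d2 * ((b : ℝ) ^ l2 - 1) * (b : ℝ) ^ l3 + d3 * ((b : ℝ) ^ l3 - 1)) : (b : ℝ) ^ (l1 + l2 + l3) ≤ b * N := by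
  have hbr : (2 : ℝ) ≤ b := by exact_mod_cast hb
  have h0' : (1 : ℝ) ≤ d1 := by exact_mod_cast h0
  have hp : (b : ℝ) ≤ (b : ℝ) ^ l1 := le_self_pow₀ (by linarith) (by omega)
  have hq : (1 : ℝ) ≤ (b : ℝ) ^ l2 := one_le_pow₀ (by linarith)
  have hr : (1 : ℝ) ≤ (b : ℝ) ^ l3 := one_le_pow₀ (by linarith)
  rw [pow_add, pow_add]
  generalize (b : ℝ) ^ l1 = p at *
  generalize (b : ℝ) ^ l2 = q at *
  generalize (b : ℝ) ^ l3 = r at *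
  have k1 : 1 * (p - 1) * (q * r) ≤ d1 * (p - 1) * (q * r) := by
    gcongr
    linarith
  have k2 : 0 ≤ d2 * (q - 1) * r := by
    have : 0 ≤ q - 1 := by linarith
    positivity
  have k3 : 0 ≤ d3 * (r - 1) := by
    have : 0 ≤ r - 1 := by linarith
    positivity
  have k4 : (p - 1) * (q * r) ≤ (b - 1) * N := by linarith
  have k5 : (b - 1) * p ≤ b * (p - 1) := by linarith
  have k6 : (b - 1) * (p * q * r) ≤ (b - 1) * (b * N) := by
    calc (b - 1) * (p * q * r) = ((b - 1) * p) * (q * r) := by ring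
      _ ≤ (b * (p - 1)) * (q * r) := by gcongr
      _ = b * ((p - 1) * (q * r)) := by ring
      _ ≤ b * ((b - 1) * N) := by gcongr
      _ = _ := by ring
  exact le_of_mul_le_mul_left k6 (by linarith)

theorem digit_upper (b l1 l2 l3 d1 d2 d3 : ℕ) (hb : 2 ≤ b) (h1 : d1 < b) (h2 : d2 < b)
    (h3 : d3 < b) (N : ℝ)
    (hN : (b - 1) * N = d1 * ((b : ℝ) ^ l1 - 1) * ((b : ℝ) ^ l2 * (b : ℝ) ^ l3) +
      d2 * ((b : ℝ) ^ l2 - 1) * (b : ℝ) ^ l3 + d3 * ((b : ℝ) ^ l3 - 1)) : N ≤ (b : ℝ) ^ (l1 + l2 + l3) := by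
  have hbr : (2 : ℝ) ≤ b := by exact_mod_cast hb
  have h1' : (d1 : ℝ) + 1 ≤ b := by exact_mod_cast h1
  have h2' : (d2 : ℝ) + 1 ≤ b := by exact_mod_cast h2
  have h3' : (d3 : ℝ) + 1 ≤ b := by exact_mod_cast h3
  have hp : (1 : ℝ) ≤ (b : ℝ) ^ l1 := one_le_pow₀ (by linarith)
  have hq : (1 : ℝ) ≤ (b : ℝ) ^ l2 := one_le_pow₀ (by linarith)
  have hr : (1 : ℝ) ≤ (b : ℝ) ^ l3 := one_le_pow₀ (by linarith)
  rw [pow_add, pow_add]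
  generalize (b : ℝ) ^ l1 = p at *
  generalize (b : ℝ) ^ l2 = q at *
  generalize (b : ℝ) ^ l3 = r at *
  have k1 : d1 * (p - 1) * (q * r) ≤ (b - 1) * (p - 1) * (q * r) := by
    gcongr <;> linarith
  have k2 : d2 * (q - 1) * r ≤ (b - 1) * (q - 1) * r := by
    gcongr <;> linarith
  have k3 : d3 * (r - 1) ≤ (b - 1) * (r - 1) := by
    gcongr <;> linarith
  have k6 : (b - 1) * N ≤ (b - 1) * (p * q * r) := by linarith
  exact le_of_mul_le_mul_left k6 (by linarith)

/-! ### One gap step -/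

theorem abs_log_near (x ε : ℝ) (h : |x - 1| ≤ ε) (hε : ε ≤ 1 / 2) : |log x| ≤ 2 * ε := by
  obtain ⟨h1, h2⟩ := abs_le.mp h
  have hx : 1 / 2 ≤ x := by linarith
  have hx0 : 0 < x := by linarith
  have h3 := Real.log_le_sub_one_of_pos hx0
  have h4 := Real.one_sub_inv_le_log_of_pos hx0
  have h5 : -(2 * ε) ≤ 1 - x⁻¹ := by
    have : 1 - x⁻¹ = (x - 1) / x := by field_simp
    rw [this, le_div_iff₀ hx0]
    nlinarith
  rw [abs_le]
  constructor <;> linarith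

/-- The third number of the linear form attached to the approximations `φ^n σ / √5` of `N` and
`D b^m` of `(b - 1) N`. -/
theorem logData_of_approx (b : ℕ) (hb : 2 ≤ b) (X Y D : ℕ) (σ σ' g : ℝ) (hσ : (σ, σ') ∈ ZPhi)
    (hσ1 : 1 ≤ σ) (hσ3 : σ ≤ 3) (hσ' : |σ'| ≤ 3 * goldenRatio ^ X) (hD1 : 1 ≤ D)
    (hD : (D : ℝ) ≤ (b : ℝ) ^ (Y + 1)) (hX : X * log goldenRatio + 4 * log b ≤ g)
    (hY : Y * log b + 4 * log b ≤ g) :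
    LogData b ((b - 1) * σ / (√5 * D)) g := by
  have hbr : (2 : ℝ) ≤ b := by exact_mod_cast hb
  have hb0 : (0 : ℝ) < b := by linarith
  have hD1' : (1 : ℝ) ≤ D := by exact_mod_cast hD1
  have hD0 : (0 : ℝ) < D := by linarith
  have hB := log_base_ge b hb
  have h5 := sqrt5_bounds
  have h50 : 0 < √5 := by linarith
  have hss : √5 * √5 = 5 := Real.mul_self_sqrt (by norm_num)
  have hb3 : (8 : ℝ) ≤ (b : ℝ) ^ 3 := by
    calc (8 : ℝ) = 2 ^ 3 := by norm_num
      _ ≤ _ := by gcongr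
  have hpos : 0 < (b - 1) * σ / (√5 * D) := by
    have : 0 < (b : ℝ) - 1 := by linarith
    positivity
  have hbY : (0 : ℝ) < (b : ℝ) ^ (Y + 1) := by positivity
  have hY4 : 8 * (b : ℝ) ^ (Y + 1) ≤ (b : ℝ) ^ (Y + 4) := by
    calc 8 * (b : ℝ) ^ (Y + 1) ≤ (b : ℝ) ^ 3 * (b : ℝ) ^ (Y + 1) := by gcongr
      _ = _ := by ring
  have hYg : log ((b : ℝ) ^ (Y + 4)) ≤ g := by
    rw [Real.log_pow]; push_cast; linarith
  refine ⟨hb, hpos, ?_, ?_, 5 * D, -((b - 1) * (√5 * σ')), by omega, ?_, ?_, ?_⟩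
  · have : 0 ≤ Y * log (b : ℝ) := by positivity
    linarith
  · rw [abs_le]
    constructor
    · have h1 : ((b : ℝ) ^ (Y + 4))⁻¹ ≤ (b - 1) * σ / (√5 * D) := by
        rw [inv_le_comm₀ (by positivity) hpos, inv_div, div_le_iff₀
          (by have : 0 < (b : ℝ) - 1 := by linarith
              positivity)]
        have h2 : √5 * D ≤ 8 * (b : ℝ) ^ (Y + 1) := by
          apply mul_le_mul <;> first | linarith | positivity
        have h3 : (1 : ℝ) ≤ (b - 1) * σ := by nlinarith
        nlinarith
      have h2 := Real.log_le_log (by positivity) h1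
      rw [Real.log_inv] at h2
      linarith
    · have h1 : (b - 1) * σ / (√5 * D) ≤ (b : ℝ) ^ (Y + 4) := by
        rw [div_le_iff₀ (by positivity)]
        have h2 : (b : ℝ) ≤ (b : ℝ) ^ (Y + 1) := le_self_pow₀ (by linarith) (by omega)
        have h3 : (b - 1) * σ ≤ b * 3 := by
          apply mul_le_mul <;> linarith
        have h4 : 1 * 1 ≤ √5 * D := by
          apply mul_le_mul <;> linarith
        have h6 : (b : ℝ) ^ (Y + 4) * 1 ≤ (b : ℝ) ^ (Y + 4) * (√5 * D) := by
          gcongr; linarith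
        linarith
      exact (Real.log_le_log hpos h1).trans hYg
  · have h1 : ((2 * goldenRatio - 1 : ℝ), (2 * goldenConj - 1 : ℝ)) ∈ ZPhi := by
      have := ZPhi.sub_mem (ZPhi.mul_mem (ZPhi_nat 2) ZPhi_phi) (ZPhi_nat 1)
      simpa using this
    have h2 := ZPhi.mul_mem (ZPhi_nat (b - 1)) (ZPhi.mul_mem h1 hσ)
    have e1 : 2 * goldenRatio - 1 = √5 := by rw [goldenRatio]; ring
    have e2 : 2 * goldenConj - 1 = -√5 := by rw [goldenConj]; ring
    rw [e1, e2, Nat.cast_sub (by omega)] at h2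
    simp only [Prod.mk_mul_mk, Nat.cast_one] at h2
    convert h2 using 2
    · push_cast
      rw [mul_div_assoc', div_eq_iff (by positivity)]
      linear_combination (-(D : ℝ) * (b - 1) * σ) * hss
    · ring
  · refine (Real.log_le_log (by positivity) ?_).trans hYg
    push_cast
    linarith
  · have h1 : exp (X * log goldenRatio + 4 * log b) = goldenRatio ^ X * (b : ℝ) ^ 4 := by
      rw [Real.exp_add, mul_comm (X : ℝ), Real.exp_mul, Real.exp_log goldenRatio_pos,
        Real.rpow_natCast, mul_comm (4 : ℝ), Real.exp_mul, Real.exp_log hb0]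
      norm_cast
    have h2 := Real.exp_le_exp.mpr hX
    rw [h1] at h2
    refine le_trans ?_ h2
    rw [abs_neg, abs_mul, abs_mul, abs_of_pos (by linarith : (0 : ℝ) < b - 1), abs_of_pos h50]
    have hφ : 0 < goldenRatio ^ X := pow_pos goldenRatio_pos X
    calc ((b : ℝ) - 1) * (√5 * |σ'|) ≤ b * (2.25 * (3 * goldenRatio ^ X)) := by
          have : (0 : ℝ) ≤ b - 1 := by linarith
          gcongr <;> linarith
      _ = goldenRatio ^ X * (6.75 * b) := by ring
      _ ≤ goldenRatio ^ X * ((b : ℝ) ^ 3 * b) := by gcongr; linarith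
      _ = _ := by ring

theorem exp_thirty_le : exp 30 ≤ 1.1e13 := by
  have h1 : exp 1 < 2.7182818286 := Real.exp_one_lt_d9
  calc exp 30 = exp 1 ^ 30 := by rw [← Real.exp_nat_mul]; norm_num
    _ ≤ 2.7182818286 ^ 30 := by gcongr
    _ ≤ _ := by norm_num

/-- One application of the lower bound for linear forms: the next gap on the Fibonacci side or on the
digit side exceeds the current gaps at most by the factor `q`. -/
theorem gap_step (b : ℕ) (hb : 2 ≤ b) (n l X X' Y Y' : ℕ) (N : ℝ)
    (hNF : goldenRatio ^ n / 3 ≤ N) (hNb : (b : ℝ) ^ l ≤ b * N)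
    (hF : FibApprox n X X' N) (hDg : DigitApprox b l Y Y' N) (q g : ℝ)
    (hq : q = 2.2e11 * log b * (log n) ^ 2) (hn : 100 ≤ log n)
    (hX : X * log goldenRatio + 4 * log b ≤ g) (hY : Y * log b + 4 * log b ≤ g)
    (hqg : 3 * (q * g) ≤ n) :
    X' * log goldenRatio + 4 * log b ≤ q * g ∨ Y' * log b + 4 * log b ≤ q * g := by
  by_contra! hcon
  obtain ⟨hX', hY'⟩ := hcon
  obtain ⟨σ, σ', hσ, hσ1, hσ3, hσ', hFe⟩ := hF
  obtain ⟨D, m, hD1, hDb, hDe⟩ := hDg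
  have hLD := logData_of_approx b hb X Y D σ σ' g hσ hσ1 hσ3 hσ' hD1 hDb hX hY
  have hbr : (2 : ℝ) ≤ b := by exact_mod_cast hb
  have hb0 : (0 : ℝ) < b := by linarith
  have hb1 : (0 : ℝ) < b - 1 := by linarith
  have hB := log_base_ge b hb
  have h5 := sqrt5_bounds
  have h50 : 0 < √5 := by linarith
  have hg := hLD.one_le
  have hg0 : 0 < g := by linarith
  have hD0 : (0 : ℝ) < D := by exact_mod_cast hD1
  set A := log goldenRatio with hA
  set B := log (b : ℝ) with hBdef
  set ℓ := log (n : ℝ) with hℓ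
  have hℓ2 : 10000 ≤ ℓ ^ 2 := by nlinarith
  have hBℓ : 0.69 * 10000 ≤ B * ℓ ^ 2 := by
    apply mul_le_mul <;> first | linarith | positivity
  have hq15 : 1.5e15 ≤ q := by rw [hq]; linarith
  have hn0 : (0 : ℝ) < n := by
    have : 0 < q * g := by positivity
    linarith
  have hlam : exp (log (n / g)) = n / g := Real.exp_log (by positivity)
  have hl30 : 30 ≤ log (n / g) := by
    rw [Real.le_log_iff_exp_le (by positivity), le_div_iff₀ hg0]
    have h1 := exp_thirty_le
    have h2 : exp 30 * g ≤ 3 * q * g := by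
      gcongr
      linarith
    linarith
  have hlℓ : log (n / g) ≤ ℓ := by
    rw [Real.log_div hn0.ne' hg0.ne']
    linarith [Real.log_nonneg hg]
  have hcmp : 2e11 * B * log (n / g) ^ 2 * g ≤ 2e11 * B * ℓ ^ 2 * g := by
    gcongr
  have hqg' : q * g = 2e11 * B * ℓ ^ 2 * g + 2e10 * (B * ℓ ^ 2 * g) := by rw [hq]; ring
  have hslack : 5 * B + 4 ≤ 2e10 * (B * ℓ ^ 2 * g) := by
    have h1 : B * 10000 * 1 ≤ B * ℓ ^ 2 * g := by gcongr
    linarith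
  have hBg : 0 < B * ℓ ^ 2 * g := by positivity
  have hlow := log_form_lower b _ g hLD n m (log (n / g)) hlam hl30 (by linarith)
  rw [← hA, ← hBdef] at hlow
  -- If both gaps were large, the linear form would be smaller than `exp (-G)`.
  set G := 2e11 * B * ℓ ^ 2 * g with hG
  set ε := 9 * (b : ℝ) * exp (-(q * g - 4 * B)) with hε
  have hεG : 4 * ε ≤ exp (-G) := by
    have h1 : (36 : ℝ) ≤ exp 4 := by
      have h2 : (2.7182818283 : ℝ) < exp 1 := Real.exp_one_gt_d9
      calc (36 : ℝ) ≤ 2.7182818283 ^ 4 := by norm_num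
        _ ≤ exp 1 ^ 4 := by gcongr
        _ = exp 4 := by rw [← Real.exp_nat_mul]; norm_num
    have h2 : (b : ℝ) = exp B := (Real.exp_log hb0).symm
    calc 4 * ε = 36 * b * exp (-(q * g - 4 * B)) := by rw [hε]; ring
      _ ≤ exp 4 * exp B * exp (-(q * g - 4 * B)) := by rw [h2]; gcongr
      _ = exp (4 + B + -(q * g - 4 * B)) := by rw [← Real.exp_add, ← Real.exp_add]
      _ ≤ _ := by rw [Real.exp_le_exp]; linarith
  have hε2 : ε ≤ 1 / 2 := by
    have : exp (-G) ≤ 1 := by rw [Real.exp_le_one_iff]; linarith [show 0 < G by positivity]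
    linarith
  have hφX : 0 < goldenRatio ^ X' := pow_pos goldenRatio_pos _
  have hφn : 0 < goldenRatio ^ n := pow_pos goldenRatio_pos _
  have hN0 : 0 < N := by linarith
  have hiX : (goldenRatio ^ X')⁻¹ ≤ exp (-(q * g - 4 * B)) := by
    rw [← Real.exp_log hφX, ← Real.exp_neg, Real.exp_le_exp, Real.log_pow]
    linarith
  have hbY : 0 < (b : ℝ) ^ Y' := by positivity
  have hiY : ((b : ℝ) ^ Y')⁻¹ ≤ exp (-(q * g - 4 * B)) := by
    rw [← Real.exp_log hbY, ← Real.exp_neg, Real.exp_le_exp, Real.log_pow]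
    linarith
  have he0 := Real.exp_pos (-(q * g - 4 * B))
  set e := exp (-(q * g - 4 * B)) with he
  set P := goldenRatio ^ n * σ / √5 with hP
  have hP0 : 0 < P := by positivity
  have hQ0 : 0 < D * (b : ℝ) ^ m := by positivity
  have hPN : |P / N - 1| ≤ ε := by
    have h1 : P / N - 1 = -((N - P) / N) := by field_simp; ring
    rw [h1, abs_neg, abs_div, abs_of_pos hN0, div_le_iff₀ hN0]
    calc |N - P| ≤ 3 * (goldenRatio ^ n / goldenRatio ^ X') := hFe
      _ = 3 * (goldenRatio ^ n * (goldenRatio ^ X')⁻¹) := by rw [div_eq_mul_inv]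
      _ ≤ 3 * (3 * N * e) := by gcongr; linarith
      _ = 9 * 1 * e * N := by ring
      _ ≤ 9 * b * e * N := by gcongr; linarith
  have hQN : |D * (b : ℝ) ^ m / ((b - 1) * N) - 1| ≤ ε := by
    have h0 : 0 < (b - 1) * N := by positivity
    have h1 : D * (b : ℝ) ^ m / ((b - 1) * N) - 1 =
        -(((b - 1) * N - D * (b : ℝ) ^ m) / ((b - 1) * N)) := by field_simp; ring
    rw [h1, abs_neg, abs_div, abs_of_pos h0, div_le_iff₀ h0]
    calc |(b - 1) * N - D * (b : ℝ) ^ m| ≤ 3 * (b - 1) * ((b : ℝ) ^ l / (b : ℝ) ^ Y') := hDe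
      _ = 3 * (b - 1) * ((b : ℝ) ^ l * ((b : ℝ) ^ Y')⁻¹) := by rw [div_eq_mul_inv]
      _ ≤ 3 * (b - 1) * (b * N * e) := by gcongr
      _ = 3 * b * e * ((b - 1) * N) := by ring
      _ ≤ 9 * b * e * ((b - 1) * N) := by gcongr; linarith
  have hl1 := abs_log_near _ _ hPN hε2
  have hl2 := abs_log_near _ _ hQN hε2
  rw [Real.log_div hP0.ne' hN0.ne'] at hl1
  rw [Real.log_div hQ0.ne' (by positivity), Real.log_mul hb1.ne' hN0.ne',
    Real.log_mul hD0.ne' (by positivity), Real.log_pow] at hl2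
  have hlogP : log P = n * A + log σ - log √5 := by
    rw [hP, Real.log_div (by positivity) h50.ne', Real.log_mul hφn.ne' (by positivity),
      Real.log_pow]
  have hlogγ : log ((b - 1) * σ / (√5 * D)) = log (b - 1 : ℝ) + log σ - (log √5 + log D) := by
    rw [Real.log_div (by positivity) (by positivity), Real.log_mul hb1.ne' (by positivity),
      Real.log_mul h50.ne' hD0.ne']
  have hup : |log ((b - 1) * σ / (√5 * D)) + n * A - m * B| ≤ 4 * ε := by
    rw [hlogγ]
    rw [hlogP] at hl1
    obtain ⟨a1, a2⟩ := abs_le.mp hl1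
    obtain ⟨a3, a4⟩ := abs_le.mp hl2
    rw [abs_le]
    constructor <;> linarith
  have h3 : exp (-G) ≤ exp (-(2e11 * B * log (n / g) ^ 2 * g)) := by
    rw [Real.exp_le_exp]; linarith
  linarith

/-! ### The chain of gaps and the conclusion -/

/-- The numerical comparison: five steps, each of factor `q`, starting from `4 log b`, do not reach
`n / 3` once `n ≥ 3.09·10^82 (log b)^11`. -/
theorem final_numeric (B n : ℝ) (hB : 0.69 ≤ B) (hn : 3.09e82 * B ^ 11 ≤ n) :
    100 ≤ log n ∧ 3 * ((2.2e11 * B * (log n) ^ 2) ^ 5 * (4 * B)) ≤ n := by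
  have hB0 : 0 < B := by linarith
  have hn0 : 0 < 3.09e82 * B ^ 11 := by positivity
  have hnpos : 0 < n := by linarith
  set E := log (3.09e82 * B ^ 11) with hE
  have hElow : 100 ≤ E := by
    rw [hE, Real.le_log_iff_exp_le hn0]
    have h1 : exp 1 < 2.7182818286 := Real.exp_one_lt_d9
    calc exp 100 = exp 1 ^ 100 := by rw [← Real.exp_nat_mul]; norm_num
      _ ≤ 2.7182818286 ^ 100 := by gcongr
      _ ≤ 3.09e82 * 0.69 ^ 11 := by norm_num
      _ ≤ _ := by gcongr
  have hs : 0.83 ≤ √B := by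
    rw [Real.le_sqrt (by norm_num) (by linarith)]
    linarith
  have hEup : E ≤ 225 * √B := by
    have h1 : log (3.09e82 : ℝ) ≤ 190 := by
      rw [Real.log_le_iff_le_exp (by norm_num)]
      have h2 : (2.7182818283 : ℝ) < exp 1 := Real.exp_one_gt_d9
      calc (3.09e82 : ℝ) ≤ 2.7182818283 ^ 190 := by norm_num
        _ ≤ exp 1 ^ 190 := by gcongr
        _ = exp 190 := by rw [← Real.exp_nat_mul]; norm_num
    have h2 : log B ≤ 2 * (√B - 1) := by
      have h3 := Real.log_le_sub_one_of_pos (by linarith : 0 < √B)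
      rw [Real.log_sqrt hB0.le] at h3
      linarith
    rw [hE, Real.log_mul (by norm_num) (by positivity), Real.log_pow]
    push_cast
    linarith
  have hE10 : E ^ 10 ≤ 225 ^ 10 * B ^ 5 := by
    calc E ^ 10 ≤ (225 * √B) ^ 10 := by gcongr
      _ = 225 ^ 10 * (√B ^ 2) ^ 5 := by ring
      _ = _ := by rw [Real.sq_sqrt hB0.le]
  set t := log n - E with ht
  have ht0 : 0 ≤ t := by
    have := Real.log_le_log hn0 hn
    linarith
  have hln : log n = E + t := by rw [ht]; ring
  have hnt : n = 3.09e82 * B ^ 11 * exp t := by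
    rw [← Real.exp_log hn0, ← Real.exp_add, ← hE, ← hln, Real.exp_log hnpos]
  have hgrow : (E + t) ^ 10 ≤ E ^ 10 * exp t := by
    have h1 : E + t = E * (t / E + 1) := by field_simp; ring
    have h2 : (t / E + 1) ^ 10 ≤ exp t := by
      calc (t / E + 1) ^ 10 ≤ exp (t / E) ^ 10 := by
            have : 0 ≤ t / E := by positivity
            gcongr
            exact Real.add_one_le_exp _
        _ = exp (10 * (t / E)) := by rw [← Real.exp_nat_mul]; norm_num
        _ ≤ _ := by
            rw [Real.exp_le_exp, mul_div_assoc', div_le_iff₀ (by linarith)]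
            nlinarith
    rw [h1, mul_pow]
    gcongr
  refine ⟨by linarith, ?_⟩
  calc 3 * ((2.2e11 * B * (log n) ^ 2) ^ 5 * (4 * B)) =
      12 * 2.2e11 ^ 5 * B ^ 6 * (E + t) ^ 10 := by rw [hln]; ring
    _ ≤ 12 * 2.2e11 ^ 5 * B ^ 6 * (225 ^ 10 * B ^ 5 * exp t) := by
        have : (E + t) ^ 10 ≤ 225 ^ 10 * B ^ 5 * exp t :=
          hgrow.trans (by gcongr)
        gcongr
    _ = (12 * 2.2e11 ^ 5 * 225 ^ 10) * (B ^ 11 * exp t) := by ring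
    _ ≤ 3.09e82 * (B ^ 11 * exp t) := by
        gcongr
        norm_num
    _ = n := by rw [hnt]; ring

/-- Two interleaved sequences of three gaps each: at every step one of the two sequences advances, so
five steps exhaust one of them. -/
theorem gap_chain (X Y : ℕ → ℝ) (q g n : ℝ) (hq : 1 ≤ q) (hg : 0 ≤ g)
    (hn : 3 * (q ^ 5 * g) ≤ n) (hX : X 0 ≤ g) (hY : Y 0 ≤ g)
    (hstep : ∀ j < 3, ∀ i < 3, ∀ h : ℝ, X j ≤ h → Y i ≤ h → 3 * (q * h) ≤ n →
      X (j + 1) ≤ q * h ∨ Y (i + 1) ≤ q * h) : X 3 ≤ q ^ 5 * g ∨ Y 3 ≤ q ^ 5 * g := by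
  have key : ∀ k ≤ 5, ∃ j ≤ 3, ∃ i ≤ 3, X j ≤ q ^ k * g ∧ Y i ≤ q ^ k * g ∧
      (k ≤ j + i ∨ j = 3 ∨ i = 3) := by
    intro k
    induction k with
    | zero => intro _; exact ⟨0, by omega, 0, by omega, by simpa using hX, by simpa using hY, by omega⟩
    | succ k ih =>
      intro hk
      obtain ⟨j, hj, i, hi, hXj, hYi, hji⟩ := ih (by omega)
      have hmono : q ^ k * g ≤ q ^ (k + 1) * g :=
         mul_le_mul_of_nonneg_right (pow_le_pow_right₀ hq (by omega)) hg
      have hsucc : q ^ (k + 1) * g = q * (q ^ k * g) := by rw [pow_succ]; ring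
      by_cases hdone : j = 3 ∨ i = 3
      · exact ⟨j, hj, i, hi, hXj.trans hmono, hYi.trans hmono, Or.inr hdone⟩
      have h5 : q ^ (k + 1) * g ≤ q ^ 5 * g :=
        mul_le_mul_of_nonneg_right (pow_le_pow_right₀ hq (by omega)) hg
      rcases hstep j (by omega) i (by omega) (q ^ k * g) hXj hYi (by rw [← hsucc]; linarith) with h | h
      · exact ⟨j + 1, by omega, i, hi, by rw [hsucc]; exact h, hYi.trans hmono, by omega⟩
      · exact ⟨j, hj, i + 1, by omega, hXj.trans hmono, by rw [hsucc]; exact h, by omega⟩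
  obtain ⟨j, hj, i, hi, hXj, hYi, hji⟩ := key 5 le_rfl
  have : j = 3 ∨ i = 3 := by omega
  rcases this with rfl | rfl
  · exact Or.inl hXj
  · exact Or.inr hYi

theorem stmt_0 (b n1 n2 n3 l1 l2 l3 d1 d2 d3 : ℕ) (hb : 2 ≤ b)
    (hl12 : l1 ≤ l2) (hl23 : l2 ≤ l3)
    (hsol : SatisfiesEq1 b n1 n2 n3 l1 l2 l3 d1 d2 d3) :
    (n1 : ℝ) < 3.09e82 * (Real.log b) ^ 11 := by
  by_contra! hcon
  obtain ⟨h32, h21, hl1, -, -, hd1, hd2, hd3, hd1', heq⟩ := hsol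
  have hB := log_base_ge b hb
  obtain ⟨hlog, hnum⟩ := final_numeric _ _ hB hcon
  have hbr : (2 : ℝ) ≤ b := by exact_mod_cast hb
  have hb0 : (0 : ℝ) < b := by linarith
  have hA1 := log_phi_gt
  set N : ℝ := Nat.fib n1 + Nat.fib n2 + Nat.fib n3 with hNdef
  have hN : (b - 1) * N = d1 * ((b : ℝ) ^ l1 - 1) * ((b : ℝ) ^ l2 * (b : ℝ) ^ l3) +
      d2 * ((b : ℝ) ^ l2 - 1) * (b : ℝ) ^ l3 + d3 * ((b : ℝ) ^ l3 - 1) := by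
    have h := congrArg (fun x : ℕ => (x : ℝ)) heq
    simp only [Nat.cast_add, Nat.cast_mul, Nat.cast_pow] at h
    rw [hNdef, h, ← repunit_cast b l1 hb, ← repunit_cast b l2 hb, ← repunit_cast b l3 hb, pow_add]
    ring
  have hn100 : (100 : ℝ) ≤ n1 := by
    have h1 : (0 : ℝ) < n1 := by
      rcases Nat.eq_zero_or_pos n1 with h | h
      · rw [h] at hlog; norm_num at hlog
      · exact_mod_cast h
    linarith [Real.log_le_sub_one_of_pos h1]
  have hNF : goldenRatio ^ n1 / 3 ≤ N := by
    have h1 := (abs_le.mp (fib_err n1)).1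
    have h2 : (0 : ℝ) ≤ Nat.fib n2 := Nat.cast_nonneg _
    have h3 : (0 : ℝ) ≤ Nat.fib n3 := Nat.cast_nonneg _
    have h5 := sqrt5_bounds
    have h4 : (100 : ℝ) * 0.48 ≤ goldenRatio ^ n1 := by
      have h6 := Real.add_one_le_exp (n1 * log goldenRatio)
      rw [mul_comm, Real.exp_mul, Real.exp_log goldenRatio_pos, Real.rpow_natCast] at h6
      have h8 : (100 : ℝ) * 0.48 ≤ n1 * log goldenRatio := by
        apply mul_le_mul hn100 hA1.le <;> norm_num
      linarith
    have h7 : goldenRatio ^ n1 / 2.25 ≤ goldenRatio ^ n1 / √5 := by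
      have : 0 < √5 := by linarith
      gcongr
      exact h5.2.le
    have h9 : goldenRatio ^ n1 / 3 ≤ Nat.fib n1 := by
      generalize goldenRatio ^ n1 / √5 = w at h1 h7
      generalize goldenRatio ^ n1 = z at h4 h7 ⊢
      norm_num at h7 h4
      linarith
    rw [hNdef]
    linarith
  have hNb := digit_lower b l1 l2 l3 d1 d2 d3 hb hl1 hd1' N hN
  set q := 2.2e11 * log (b : ℝ) * (log (n1 : ℝ)) ^ 2 with hq
  have hq1 : 1 ≤ q := by
    have h1 : (0.69 : ℝ) * 10000 ≤ log b * (log (n1 : ℝ)) ^ 2 := by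
      apply mul_le_mul <;> first | nlinarith | positivity
    rw [hq]; linarith
  obtain ⟨X, hX0, hX1, hX2, hX3⟩ : ∃ X : ℕ → ℕ, X 0 = 0 ∧ X 1 = n1 - n2 ∧ X 2 = n1 - n3 ∧ X 3 = n1 :=
    ⟨fun j => [0, n1 - n2, n1 - n3, n1].getD j 0, rfl, rfl, rfl, rfl⟩
  obtain ⟨Y, hY0, hY1, hY2, hY3⟩ : ∃ Y : ℕ → ℕ, Y 0 = 0 ∧ Y 1 = l1 ∧ Y 2 = l1 + l2 ∧
      Y 3 = l1 + l2 + l3 :=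
    ⟨fun i => [0, l1, l1 + l2, l1 + l2 + l3].getD i 0, rfl, rfl, rfl, rfl⟩
  have hFib : ∀ j < 3, FibApprox n1 (X j) (X (j + 1)) N := by
    intro j hj
    interval_cases j
    · rw [hX0, show X (0 + 1) = _ from hX1]
      exact fibApprox_one n1 n2 n3 h32 h21
    · rw [hX1, show X (1 + 1) = _ from hX2]
      exact fibApprox_two n1 n2 n3 h32 h21
    · rw [hX2, show X (2 + 1) = _ from hX3]
      exact fibApprox_three n1 n2 n3 h32 h21
  have hDig : ∀ i < 3, DigitApprox b (l1 + l2 + l3) (Y i) (Y (i + 1)) N := by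
    intro i hi
    interval_cases i
    · rw [hY0, show Y (0 + 1) = _ from hY1]
      exact digitApprox_one b l1 l2 l3 d1 d2 d3 hb hd1 hd2 hd3 N hN hd1'
    · rw [hY1, show Y (1 + 1) = _ from hY2]
      exact digitApprox_two b l1 l2 l3 d1 d2 d3 hb hl1 hd1 hd2 hd3 hd1' N hN
    · rw [hY2, show Y (2 + 1) = _ from hY3]
      exact digitApprox_three b l1 l2 l3 d1 d2 d3 hb hl1 hd1 hd2 hd3 hd1' N hN
  have hchain := gap_chain
    (fun j => X j * log goldenRatio + 4 * log b)
    (fun i => Y i * log (b : ℝ) + 4 * log b)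
    q (4 * log b) n1 hq1 (by linarith) hnum (by simp [hX0]) (by simp [hY0])
    (fun j hj i hi h hXh hYh hn => gap_step b hb n1 _ _ _ _ _ N hNF hNb (hFib j hj) (hDig i hi) q h hq
      hlog hXh hYh hn)
  have hlast : q ^ 5 * (4 * log b) ≤ n1 / 3 := by linarith
  have hnA : (n1 : ℝ) * 0.48 ≤ n1 * log goldenRatio :=
    mul_le_mul_of_nonneg_left hA1.le (by linarith)
  rcases hchain with h | h
  · rw [hX3] at h
    linarith
  · rw [hY3] at h
    have h2 := hNF.trans (digit_upper b l1 l2 l3 d1 d2 d3 hb hd1 hd2 hd3 N hN)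
    have h3 : 0 < goldenRatio ^ n1 := pow_pos goldenRatio_pos _
    have h4 := Real.log_le_log (by positivity) h2
    rw [Real.log_div h3.ne' (by norm_num), Real.log_pow, Real.log_pow] at h4
    have h5 := Real.log_le_sub_one_of_pos (by norm_num : (0 : ℝ) < 3)
    linarith
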